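/- (Proposition 2.6, self-similar Painlevé II region.) There are constants C, C' such that, for ε₁ sufficiently small: if u is a classical solution of mKdV on [0,∞) satisfying ‖u‖_X ≤ ε₁, then, setting γ = (1/3)(1/6 - C'ε₁²) > 0, there exists a bounded smooth function φ : ℝ → ℝ solving the Painlevé II equation φ''(ξ) - (1/3)ξφ(ξ) + φ(ξ)³ = 0 for all ξ ∈ ℝ, with principal value integral lim_{R→∞} ∫_{-R}^{R} φ(x) dx = ∫_ℝ u(0,x) dx, such that for every t ≥ 2 and every x with |x| ≤ t^{1/3+2γ}, | u(t,x) - t^{-1/3} φ( x/t^{1/3} ) | ≤ C ε₁ t^{-1/3-3γ/2}. -/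

import Mathlib

/-!
The `X`-norm bounds the Fourier transform `f̂` of the profile in `L^∞` and `∂_ξ f̂` in `L²`.
Stationary phase for the phase `η³ + yη` (`full_line`) therefore gives the pointwise decay
`|u| ≤ 20 ε t^{-1/3}` and `|u u_x| ≤ 400 ε² / t` (`XB.disp`).

The function `W = x u - 3 t (u_xx + u³)` is an antiderivative of `(3t∂ₜ + x∂ₓ + 1) u` and solves
`W_t + W_xxx + 3 u² W_x = 0` (`Sol.eqnW`). In its `L²` energy identity the only term that is not a
divergence is `6 u u_x W²`, so `‖W‖_{L²}` grows at most like `t^{1200 ε²}` (`Sol.energy`).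

In self-similar variables `v(t, y) = t^{1/3} u(t, t^{1/3} y)` the equation reads `∂ₜv = ∂_y Z / t`,
where `Z = W / 3` is also the defect `y v / 3 - v_yy - v³` of `v` in the Painlevé equation. It decays
in `L²_y` like `t^{-β}` with `β = 1/6 - 1200 ε²` (`Sol.resc`). Hence `D = ∫ Z ds/s` over `[t₁, t₂]`
is small in `L²`, while `D' = v(t₂) - v(t₁)` satisfies a second order equation with remainder
`Z(t₁) - Z(t₂)`. Interpolation on intervals of length comparable to `Y^{-1/2}` (`interp`) bounds
`v(t₂) - v(t₁)` on `|y| ≤ Y` by a multiple of `ε t₁^{-β} Y^{3/4}` (`Resc.cauchy`). So `v` converges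
to a profile `φ`, and the choice `Y = t^{2γ}`, `β = 3γ`, gives the error `t^{-3γ/2}`. Passing to the
limit in the twice integrated form of `v_yy = y v / 3 - v³ - Z` yields Painlevé II for `φ`
(`IsLim.painleve`), and conservation of `∫ u` with the uniform smallness of `D` gives the principal
value integral (`IsLim.pv`).

One qualitative point needs care: the solution is Schwartz at each time, but no uniformity in time
is assumed, so the energy identities cannot be obtained by differentiating under integrals over the
line. They are proved with spatial cutoffs (`flux_le`) as soon as the fluxes are bounded in mean,
that is, as soon as an `H²` bound locally uniform in time is available. Such a bound holds near some
times by Baire category, and is propagated by the first three conservation laws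
(`baire_propagation`, `Sol.bdd3`, `Sol.bddE2`).
-/

noncomputable section

open MeasureTheory Real Complex

/-- Fourier transform: ĝ(ξ) = (2π)^{-1/2} ∫ e^{-ixξ} g(x) dx. -/
def FT (g : ℝ → ℂ) (ξ : ℝ) : ℂ :=
  (Real.sqrt (2 * Real.pi) : ℂ)⁻¹ * ∫ x : ℝ, Complex.exp (-(Complex.I * x * ξ)) * g x

/-- L² norm. -/
def L2norm (g : ℝ → ℂ) : ℝ := Real.sqrt (∫ x : ℝ, ‖g x‖ ^ 2)

/-- L^∞ norm (as a pointwise supremum). -/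
def LinfNorm (g : ℝ → ℂ) : ℝ := ⨆ x : ℝ, ‖g x‖

/-- H¹ norm: ‖g‖_{H¹}² = ‖g‖_{L²}² + ‖g'‖_{L²}². -/
def H1norm (g : ℝ → ℂ) : ℝ := Real.sqrt (L2norm g ^ 2 + L2norm (deriv g) ^ 2)

/-- `u` is a classical solution of the (focusing) mKdV equation
`∂ₜu + ∂ₓ³u + ∂ₓ(u³) = 0` on the time set `s`: it is smooth, Schwartz in space
for each time in `s`, and solves the equation pointwise. -/
def IsMKdVOn (u : ℝ → ℝ → ℝ) (s : Set ℝ) : Prop :=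
  ContDiffOn ℝ (⊤ : ℕ∞) (Function.uncurry u) (s ×ˢ Set.univ) ∧
  (∀ t ∈ s, ∃ g : SchwartzMap ℝ ℝ, ∀ x, u t x = g x) ∧
  (∀ t ∈ s, ∀ x : ℝ,
    deriv (fun t' => u t' x) t + iteratedDeriv 3 (fun y => u t y) x
      + deriv (fun y => (u t y) ^ 3) x = 0)

/-- Fourier transform of the profile: f̂(t,ξ) = e^{-itξ³} û(t,ξ). -/
def profFT (u : ℝ → ℝ → ℝ) (t ξ : ℝ) : ℂ :=
  Complex.exp (-(Complex.I * t * ξ ^ 3)) * FT (fun x => (u t x : ℂ)) ξ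

/-- The profile f(t) = e^{t∂ₓ³}u(t) in physical space (inverse Fourier transform of `profFT`). -/
def prof (u : ℝ → ℝ → ℝ) (t x : ℝ) : ℂ :=
  (Real.sqrt (2 * Real.pi) : ℂ)⁻¹ * ∫ ξ : ℝ, Complex.exp (Complex.I * x * ξ) * profFT u t ξ

/-- The quantity inside the supremum defining the X-norm of `u`, at time `t`:
`t^{-δ}‖u(t)‖_{H¹} + t^{-1/6}‖x f(t)‖_{H¹} + t^{α/3-1/6}‖|∂ₓ|^α(x f(t))‖_{L²} + ‖f̂(t)‖_{L^∞}`,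
where the `L²` norm of `|∂ₓ|^α (x f)` is expressed on the Fourier side (Plancherel). -/
def Xexpr (δ α : ℝ) (u : ℝ → ℝ → ℝ) (t : ℝ) : ℝ :=
  t ^ (-δ) * H1norm (fun x => (u t x : ℂ))
    + t ^ (-(1:ℝ)/6) * H1norm (fun x => (x : ℂ) * prof u t x)
    + t ^ (α/3 - 1/6) *
        L2norm (fun ξ => ((|ξ| ^ α : ℝ) : ℂ) * FT (fun x => (x : ℂ) * prof u t x) ξ)
    + LinfNorm (profFT u t)

/-- `‖u‖_X ≤ ε`, i.e. the defining expression is `≤ ε` for every `t ≥ 1`. -/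
def XLE (δ α : ℝ) (u : ℝ → ℝ → ℝ) (ε : ℝ) : Prop :=
  ∀ t : ℝ, 1 ≤ t → Xexpr δ α u t ≤ ε

/-- The weighted H¹ norm ‖⟨x⟩u₀‖_{H¹} of the initial data. -/
def initNorm (u : ℝ → ℝ → ℝ) : ℝ :=
  H1norm (fun x => ((Real.sqrt (1 + x ^ 2) * u 0 x : ℝ) : ℂ))

/-! ### Smooth functions of time and space -/

namespace MKdV

/-- Joint smoothness of a function of `(t, x)` on the open half plane `t > 0`. -/
def Sm (F : ℝ → ℝ → ℝ) : Prop :=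
  ContDiffOn ℝ (⊤ : ℕ∞) (Function.uncurry F) (Set.Ioi 0 ×ˢ Set.univ)

/-- The partial derivative in `x`. -/
def dx (F : ℝ → ℝ → ℝ) (t x : ℝ) : ℝ := deriv (F t) x

/-- The partial derivative in `t`. -/
def dt (F : ℝ → ℝ → ℝ) (t x : ℝ) : ℝ := deriv (fun s => F s x) t

lemma isOpen_half : IsOpen (Set.Ioi (0 : ℝ) ×ˢ (Set.univ : Set ℝ)) :=
  isOpen_Ioi.prod isOpen_univ

lemma half_mem {t : ℝ} (ht : 0 < t) (x : ℝ) :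
    ((t, x) : ℝ × ℝ) ∈ Set.Ioi (0 : ℝ) ×ˢ (Set.univ : Set ℝ) := ⟨ht, trivial⟩

lemma Sm.at {F : ℝ → ℝ → ℝ} (h : Sm F) {t : ℝ} (ht : 0 < t) (x : ℝ) :
    ContDiffAt ℝ (⊤ : ℕ∞) (Function.uncurry F) (t, x) :=
  h.contDiffAt (isOpen_half.mem_nhds (half_mem ht x))

lemma Sm.hasFDerivAt {F : ℝ → ℝ → ℝ} (h : Sm F) {t : ℝ} (ht : 0 < t) (x : ℝ) :
    HasFDerivAt (Function.uncurry F) (fderiv ℝ (Function.uncurry F) (t, x)) (t, x) :=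
  ((h.at ht x).differentiableAt (by simp)).hasFDerivAt

lemma Sm.hasDx' {F : ℝ → ℝ → ℝ} (h : Sm F) {t : ℝ} (ht : 0 < t) (x : ℝ) :
    HasDerivAt (F t) (fderiv ℝ (Function.uncurry F) (t, x) (0, 1)) x := by
  have h1 : HasDerivAt (fun y : ℝ => ((t, y) : ℝ × ℝ)) (0, 1) x :=
    (hasDerivAt_const x t).prodMk (hasDerivAt_id x)
  exact (h.hasFDerivAt ht x).comp_hasDerivAt x h1

lemma Sm.hasDt' {F : ℝ → ℝ → ℝ} (h : Sm F) {t : ℝ} (ht : 0 < t) (x : ℝ) :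
    HasDerivAt (fun s => F s x) (fderiv ℝ (Function.uncurry F) (t, x) (1, 0)) t := by
  have h1 : HasDerivAt (fun s : ℝ => ((s, x) : ℝ × ℝ)) (1, 0) t :=
    (hasDerivAt_id t).prodMk (hasDerivAt_const t x)
  exact (h.hasFDerivAt ht x).comp_hasDerivAt t h1

lemma Sm.dx_eq {F : ℝ → ℝ → ℝ} (h : Sm F) {t : ℝ} (ht : 0 < t) (x : ℝ) :
    dx F t x = fderiv ℝ (Function.uncurry F) (t, x) (0, 1) := (h.hasDx' ht x).deriv

lemma Sm.dt_eq {F : ℝ → ℝ → ℝ} (h : Sm F) {t : ℝ} (ht : 0 < t) (x : ℝ) :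
    dt F t x = fderiv ℝ (Function.uncurry F) (t, x) (1, 0) := (h.hasDt' ht x).deriv

lemma Sm.hasDx {F : ℝ → ℝ → ℝ} (h : Sm F) {t : ℝ} (ht : 0 < t) (x : ℝ) :
    HasDerivAt (F t) (dx F t x) x := (h.hasDx' ht x).differentiableAt.hasDerivAt

lemma Sm.hasDt {F : ℝ → ℝ → ℝ} (h : Sm F) {t : ℝ} (ht : 0 < t) (x : ℝ) :
    HasDerivAt (fun s => F s x) (dt F t x) t := (h.hasDt' ht x).differentiableAt.hasDerivAt

lemma Sm.fderiv_apply {F : ℝ → ℝ → ℝ} (h : Sm F) (v : ℝ × ℝ) :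
    ContDiffOn ℝ (⊤ : ℕ∞) (fun p => fderiv ℝ (Function.uncurry F) p v)
      (Set.Ioi 0 ×ˢ Set.univ) :=
  (h.fderiv_of_isOpen isOpen_half (by simp)).clm_apply contDiffOn_const

lemma Sm.dx {F : ℝ → ℝ → ℝ} (h : Sm F) : Sm (dx F) :=
  (h.fderiv_apply (0, 1)).congr fun p hp => h.dx_eq hp.1 p.2

lemma Sm.dt {F : ℝ → ℝ → ℝ} (h : Sm F) : Sm (dt F) :=
  (h.fderiv_apply (1, 0)).congr fun p hp => h.dt_eq hp.1 p.2

lemma Sm.congr {F G : ℝ → ℝ → ℝ} (h : Sm F) (hG : ∀ t, 0 < t → ∀ x, G t x = F t x) : Sm G :=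
  ContDiffOn.congr h fun p hp => hG p.1 hp.1 p.2

lemma Sm.comm {F : ℝ → ℝ → ℝ} (h : Sm F) {t : ℝ} (ht : 0 < t) (x : ℝ) :
    MKdV.dt (MKdV.dx F) t x = MKdV.dx (MKdV.dt F) t x := by
  rw [h.dx.dt_eq ht, h.dt.dx_eq ht]
  have hs : IsSymmSndFDerivAt ℝ (Function.uncurry F) (t, x) :=
    (h.at ht x).isSymmSndFDerivAt (by simp only [minSmoothness_of_isRCLikeNormedField]; exact WithTop.coe_le_coe.2 le_top)
  have hd : DifferentiableAt ℝ (fderiv ℝ (Function.uncurry F)) (t, x) :=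
    (((h.fderiv_of_isOpen isOpen_half (m := (⊤ : ℕ∞)) (by simp)).contDiffAt
      (isOpen_half.mem_nhds (half_mem ht x))).differentiableAt (by simp))
  have key : ∀ v : ℝ × ℝ, fderiv ℝ (fun p => fderiv ℝ (Function.uncurry F) p v) (t, x)
      = (fderiv ℝ (fderiv ℝ (Function.uncurry F)) (t, x)).flip v := by
    intro v
    exact (hd.hasFDerivAt.clm_apply (hasFDerivAt_const v (t, x))).fderiv.trans (by ext <;> simp)
  have e1 : Function.uncurry (MKdV.dx F) =ᶠ[nhds (t, x)]
      fun p => fderiv ℝ (Function.uncurry F) p (0, 1) := by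
    filter_upwards [isOpen_half.mem_nhds (half_mem ht x)] with p hp
    exact h.dx_eq hp.1 p.2
  have e2 : Function.uncurry (MKdV.dt F) =ᶠ[nhds (t, x)]
      fun p => fderiv ℝ (Function.uncurry F) p (1, 0) := by
    filter_upwards [isOpen_half.mem_nhds (half_mem ht x)] with p hp
    exact h.dt_eq hp.1 p.2
  rw [e1.fderiv_eq, e2.fderiv_eq, key, key]
  exact hs.eq (1, 0) (0, 1)

lemma Sm.continuousOn {F : ℝ → ℝ → ℝ} (h : Sm F) :
    ContinuousOn (Function.uncurry F) (Set.Ioi 0 ×ˢ Set.univ) := ContDiffOn.continuousOn h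

lemma Sm.cont {F : ℝ → ℝ → ℝ} (h : Sm F) {t : ℝ} (ht : 0 < t) : Continuous (F t) :=
  continuous_iff_continuousAt.2 fun x => (h.hasDx ht x).continuousAt

lemma Sm.add {F G : ℝ → ℝ → ℝ} (h : Sm F) (k : Sm G) : Sm (fun t x => F t x + G t x) :=
  ContDiffOn.add h k
lemma Sm.sub {F G : ℝ → ℝ → ℝ} (h : Sm F) (k : Sm G) : Sm (fun t x => F t x - G t x) :=
  ContDiffOn.sub h k
lemma Sm.mul {F G : ℝ → ℝ → ℝ} (h : Sm F) (k : Sm G) : Sm (fun t x => F t x * G t x) :=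
  ContDiffOn.mul h k
lemma Sm.pow {F : ℝ → ℝ → ℝ} (h : Sm F) (n : ℕ) : Sm (fun t x => F t x ^ n) :=
  ContDiffOn.pow h n
lemma Sm.neg {F : ℝ → ℝ → ℝ} (h : Sm F) : Sm (fun t x => - F t x) :=
  ContDiffOn.neg h
lemma Sm.const (c : ℝ) : Sm (fun _ _ => c) := contDiffOn_const
lemma Sm.fst : Sm (fun t _ => t) := contDiffOn_fst
lemma Sm.snd : Sm (fun _ x => x) := contDiffOn_snd
lemma Sm.time {g : ℝ → ℝ} (hg : ContDiffOn ℝ (⊤ : ℕ∞) g (Set.Ioi 0)) : Sm (fun t _ => g t) :=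
  hg.comp contDiffOn_fst fun _ hp => hp.1

end MKdV

/-! ### Integrals depending on time, and conservation laws with flux -/

namespace MKdV

lemma hasDerivAt_param {F : ℝ → ℝ → ℝ} (h : Sm F) {t : ℝ} (ht : 0 < t) (p q : ℝ) :
    HasDerivAt (fun s => ∫ x in p..q, F s x) (∫ x in p..q, dt F t x) t := by
  have hK : IsCompact (Set.Icc (t / 2) (2 * t) ×ˢ Set.uIcc p q) := isCompact_Icc.prod isCompact_uIcc
  have hsub : Set.Icc (t / 2) (2 * t) ×ˢ Set.uIcc p q ⊆ Set.Ioi (0 : ℝ) ×ˢ Set.univ :=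
    fun z hz => ⟨lt_of_lt_of_le (by positivity) hz.1.1, trivial⟩
  obtain ⟨M, hM⟩ := hK.exists_bound_of_continuousOn (h.dt.continuousOn.mono hsub)
  refine (intervalIntegral.hasDerivAt_integral_of_dominated_loc_of_deriv_le
    (F' := fun s x => dt F s x) (bound := fun _ => M)
    (Icc_mem_nhds (show t / 2 < t by linarith) (show t < 2 * t by linarith)) ?_ ?_ ?_ ?_ ?_ ?_).2
  · filter_upwards [lt_mem_nhds ht] with s hs
    exact (h.cont hs).aestronglyMeasurable
  · exact (h.cont ht).intervalIntegrable _ _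
  · exact (h.dt.cont ht).aestronglyMeasurable
  · exact Filter.Eventually.of_forall fun x hx s hs =>
      hM (s, x) ⟨hs, Set.uIoc_subset_uIcc hx⟩
  · exact intervalIntegrable_const
  · exact Filter.Eventually.of_forall fun x hx s hs => h.hasDt (lt_of_lt_of_le (by positivity) hs.1) x

lemma Sm.contIcc {F : ℝ → ℝ → ℝ} (h : Sm F) {a b : ℝ} (ha : 0 < a) (hab : a ≤ b) (x : ℝ) :
    ContinuousOn (fun s => F s x) (Set.uIcc a b) := by
  rw [Set.uIcc_of_le hab]
  intro s hs
  exact (h.hasDt (lt_of_lt_of_le ha hs.1) x).continuousAt.continuousWithinAt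

lemma hasDerivAt_param' {F : ℝ → ℝ → ℝ} (h : Sm F) {a b : ℝ} (ha : 0 < a) (hab : a ≤ b) (x : ℝ) :
    HasDerivAt (fun y => ∫ s in a..b, F s y) (∫ s in a..b, dx F s x) x := by
  have hK : IsCompact (Set.Icc a b ×ˢ Set.Icc (x - 1) (x + 1)) := isCompact_Icc.prod isCompact_Icc
  have hsub : Set.Icc a b ×ˢ Set.Icc (x - 1) (x + 1) ⊆ Set.Ioi (0 : ℝ) ×ˢ Set.univ :=
    fun z hz => ⟨lt_of_lt_of_le ha hz.1.1, trivial⟩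
  obtain ⟨M, hM⟩ := hK.exists_bound_of_continuousOn (h.dx.continuousOn.mono hsub)
  have hpos : ∀ s ∈ Set.uIoc a b, 0 < s ∧ s ∈ Set.Icc a b := fun s hs => by
    rw [Set.uIoc_of_le hab] at hs
    exact ⟨ha.trans hs.1, hs.1.le, hs.2⟩
  have hm : ∀ G : ℝ → ℝ → ℝ, Sm G → ∀ y, AEStronglyMeasurable (fun s => G s y)
      (volume.restrict (Set.uIoc a b)) := fun G hG y =>
    ((hG.contIcc ha hab y).mono Set.uIoc_subset_uIcc).aestronglyMeasurable measurableSet_uIoc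
  refine (intervalIntegral.hasDerivAt_integral_of_dominated_loc_of_deriv_le
    (F := fun y s => F s y) (F' := fun y s => dx F s y) (bound := fun _ => M)
    (Icc_mem_nhds (show x - 1 < x by linarith) (show x < x + 1 by linarith)) ?_ ?_ ?_ ?_ ?_ ?_).2
  · exact Filter.Eventually.of_forall fun y => hm F h y
  · exact (h.contIcc ha hab x).intervalIntegrable
  · exact hm _ h.dx x
  · exact Filter.Eventually.of_forall fun s hs y hy => hM (s, y) ⟨(hpos s hs).2, hy⟩
  · exact intervalIntegrable_const
  · exact Filter.Eventually.of_forall fun s hs y hy => h.hasDx (hpos s hs).1 y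

/-- A `C²` cutoff equal to `1` on `|x| ≤ 1` and vanishing for `|x| ≥ 2`. -/
lemma exists_cutoff : ∃ (χ χ₁ χ₂ : ℝ → ℝ) (K : ℝ), 0 ≤ K ∧ (∀ x, HasDerivAt χ (χ₁ x) x) ∧
    (∀ x, HasDerivAt χ₁ (χ₂ x) x) ∧ Continuous χ₂ ∧ (∀ x, 0 ≤ χ x) ∧ (∀ x, χ x ≤ 1) ∧
    (∀ x, |x| ≤ 1 → χ x = 1) ∧ (∀ x, 2 ≤ |x| → χ x = 0) ∧ (∀ x, 2 ≤ |x| → χ₁ x = 0) ∧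
    (∀ x, |χ₁ x| ≤ K) ∧ (∀ x, |χ₂ x| ≤ K) := by
  let f : ContDiffBump (0 : ℝ) := ⟨1, 2, by norm_num, by norm_num⟩
  have hf : ContDiff ℝ 2 f := f.contDiff
  have hd : ContDiff ℝ 1 (deriv f) := by
    have : ContDiff ℝ (1 + 1) f := by simpa [one_add_one_eq_two] using hf
    exact (contDiff_succ_iff_deriv.1 this).2.2
  have hdd : Continuous (deriv (deriv f)) := hd.continuous_deriv le_rfl
  have c1 : HasCompactSupport (deriv f) := f.hasCompactSupport.deriv
  have c2 : HasCompactSupport (deriv (deriv f)) := c1.deriv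
  obtain ⟨K1, h1⟩ := hd.continuous.bounded_above_of_compact_support c1
  obtain ⟨K2, h2⟩ := hdd.bounded_above_of_compact_support c2
  refine ⟨f, deriv f, deriv (deriv f), max K1 K2, ?_, fun x => ?_, fun x => ?_, hdd,
    fun x => f.nonneg, fun x => f.le_one, fun x hx => ?_, fun x hx => ?_, fun x hx => ?_,
    fun x => (h1 x).trans (le_max_left _ _), fun x => (h2 x).trans (le_max_right _ _)⟩
  · exact (norm_nonneg _).trans ((h1 0).trans (le_max_left _ _))
  · exact (hf.differentiable (by norm_num) x).hasDerivAt
  · exact (hd.differentiable (by norm_num) x).hasDerivAt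
  · exact f.one_of_mem_closedBall (by simpa using hx)
  · exact f.zero_of_le_dist (by simpa using hx)
  · have hmin : IsLocalMin f x := by
      refine Filter.Eventually.of_forall fun y => ?_
      rw [f.zero_of_le_dist (show f.rOut ≤ dist x 0 by simpa using hx)]
      exact f.nonneg
    exact hmin.deriv_eq_zero

/-- A conservation law with controlled flux. If `∂ₜρ ≤ ∂ₓF + ∂ₓ²H` and the fluxes grow at most
like `√R` in mean over `[-2R, 2R]`, then nothing enters from spatial infinity and `∫ ρ` does not
increase. No uniformity in time of the decay of `ρ` is required. -/
theorem flux_le {ρ F H : ℝ → ℝ → ℝ} {a b C : ℝ} (ha : 0 ≤ a) (hab : a ≤ b) (hρ : Sm ρ)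
    (hc : ContinuousOn (Function.uncurry ρ) (Set.Icc a b ×ˢ Set.univ)) (hF : Sm F) (hH : Sm H)
    (hineq : ∀ t ∈ Set.Ioo a b, ∀ x, dt ρ t x ≤ dx F t x + dx (dx H) t x)
    (hbd : ∀ t ∈ Set.Ioo a b, ∀ R : ℝ, 1 ≤ R →
      ∫ x in (-(2 * R))..(2 * R), (|F t x| + |H t x|) ≤ C * √R)
    (ia : Integrable (ρ a)) (ib : Integrable (ρ b)) : ∫ x, ρ b x ≤ ∫ x, ρ a x := by
  obtain ⟨χ, χ₁, χ₂, K, hK, hχ, hχ₁, hχ₂c, h0, h1, hone, hz, hz₁, hb₁, hb₂⟩ := exists_cutoff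
  have hχc : Continuous χ := continuous_iff_continuousAt.2 fun x => (hχ x).continuousAt
  have hχ₁c : Continuous χ₁ := continuous_iff_continuousAt.2 fun x => (hχ₁ x).continuousAt
  set M : ℝ → ℝ → ℝ := fun R t => ∫ x in (-(2 * R))..(2 * R), χ (x / R) * ρ t x with hM
  -- time derivative of the truncated integral
  have hMle : ∀ R : ℝ, 1 ≤ R → M R b - M R a ≤ (K / R * (C * √R)) * (b - a) := by
    intro R hR
    have hR0 : 0 < R := by linarith
    have hcont : ContinuousOn (M R) (Set.Icc a b) := by
      let pr : ℝ → ℝ := fun t => max a (min b t)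
      have hpr : Continuous pr := by fun_prop
      have hprm : ∀ t, pr t ∈ Set.Icc a b := fun t =>
        ⟨le_max_left _ _, max_le hab (min_le_left _ _)⟩
      have hg : Continuous (Function.uncurry fun t x => χ (x / R) * ρ (pr t) x) := by
        have h3 : Continuous fun z : ℝ × ℝ => Function.uncurry ρ (pr z.1, z.2) :=
          hc.comp_continuous (by fun_prop) fun z => ⟨hprm z.1, trivial⟩
        exact (hχc.comp (by fun_prop : Continuous fun z : ℝ × ℝ => z.2 / R)).mul h3
      have := intervalIntegral.continuous_parametric_intervalIntegral_of_continuous'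
        (μ := volume) hg (-(2 * R)) (2 * R)
      refine this.continuousOn.congr fun t ht => ?_
      have : pr t = t := by simp [pr, ht.1, ht.2]
      simp only [hM, this]
    have hder : ∀ t ∈ Set.Ioo a b, HasDerivAt (M R)
        (∫ x in (-(2 * R))..(2 * R), χ (x / R) * dt ρ t x) t := by
      intro t ht
      have ht0 : 0 < t := lt_of_le_of_lt ha ht.1
      have hK : IsCompact (Set.Icc (t / 2) (2 * t) ×ˢ Set.uIcc (-(2 * R)) (2 * R)) :=
        isCompact_Icc.prod isCompact_uIcc
      have hsub : Set.Icc (t / 2) (2 * t) ×ˢ Set.uIcc (-(2 * R)) (2 * R)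
          ⊆ Set.Ioi (0 : ℝ) ×ˢ Set.univ :=
        fun z hz => ⟨lt_of_lt_of_le (by positivity) hz.1.1, trivial⟩
      obtain ⟨B, hB⟩ := hK.exists_bound_of_continuousOn (hρ.dt.continuousOn.mono hsub)
      have hχR : Continuous fun x : ℝ => χ (x / R) := by fun_prop
      refine (intervalIntegral.hasDerivAt_integral_of_dominated_loc_of_deriv_le
        (F' := fun s x => χ (x / R) * dt ρ s x) (bound := fun _ => B)
        (Icc_mem_nhds (show t / 2 < t by linarith) (show t < 2 * t by linarith))
        ?_ ?_ ?_ ?_ ?_ ?_).2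
      · filter_upwards [lt_mem_nhds ht0] with s hs
        exact (hχR.mul (hρ.cont hs)).aestronglyMeasurable
      · exact (hχR.mul (hρ.cont ht0)).intervalIntegrable _ _
      · exact (hχR.mul (hρ.dt.cont ht0)).aestronglyMeasurable
      · refine Filter.Eventually.of_forall fun x hx s hs => ?_
        have := hB (s, x) ⟨hs, Set.uIoc_subset_uIcc hx⟩
        rw [norm_mul, Real.norm_of_nonneg (h0 _)]
        exact (mul_le_of_le_one_left (norm_nonneg _) (h1 _)).trans this
      · exact intervalIntegrable_const
      · exact Filter.Eventually.of_forall fun x hx s hs =>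
          (hρ.hasDt (lt_of_lt_of_le (by positivity) hs.1) x).const_mul _
    refine Convex.image_sub_le_mul_sub_of_deriv_le (convex_Icc a b) hcont ?_ ?_ a
      (Set.left_mem_Icc.2 hab) b (Set.right_mem_Icc.2 hab) hab
    · rw [interior_Icc]
      exact fun t ht => (hder t ht).differentiableAt.differentiableWithinAt
    · rw [interior_Icc]
      intro t ht
      have ht0 : 0 < t := lt_of_le_of_lt ha ht.1
      rw [(hder t ht).deriv]
      have hle : -(2 * R) ≤ 2 * R := by linarith
      have cF := hF.cont ht0
      have cF' := hF.dx.cont ht0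
      have cH := hH.cont ht0
      have cH' := hH.dx.cont ht0
      have cH'' := hH.dx.dx.cont ht0
      have cρ := hρ.dt.cont ht0
      have hχR : Continuous fun x : ℝ => χ (x / R) := by fun_prop
      have hχR₁ : Continuous fun x : ℝ => χ₁ (x / R) / R := by fun_prop
      have hχR₂ : Continuous fun x : ℝ => χ₂ (x / R) / R / R := by fun_prop
      have dχ : ∀ x, HasDerivAt (fun x : ℝ => χ (x / R)) (χ₁ (x / R) / R) x := fun x => by
        have := (hχ (x / R)).comp x ((hasDerivAt_id x).div_const R)
        simpa [Function.comp_def, div_eq_mul_inv] using this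
      have dχ₁ : ∀ x, HasDerivAt (fun x : ℝ => χ₁ (x / R) / R) (χ₂ (x / R) / R / R) x := fun x => by
        have := ((hχ₁ (x / R)).comp x ((hasDerivAt_id x).div_const R)).div_const R
        simpa [Function.comp_def, div_eq_mul_inv] using this
      have e1 : |2 * R / R| = 2 := by
        rw [mul_div_assoc, div_self hR0.ne']; norm_num
      have e2 : |-(2 * R) / R| = 2 := by
        rw [neg_div, abs_neg, e1]
      have ibp1 := intervalIntegral.integral_mul_deriv_eq_deriv_mul (a := -(2 * R)) (b := 2 * R)
        (fun x _ => dχ x) (fun x _ => hF.hasDx ht0 x)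
        (hχR₁.intervalIntegrable _ _) (cF'.intervalIntegrable _ _)
      have ibp2 := intervalIntegral.integral_mul_deriv_eq_deriv_mul (a := -(2 * R)) (b := 2 * R)
        (fun x _ => dχ x) (fun x _ => hH.dx.hasDx ht0 x)
        (hχR₁.intervalIntegrable _ _) (cH''.intervalIntegrable _ _)
      have ibp3 := intervalIntegral.integral_mul_deriv_eq_deriv_mul (a := -(2 * R)) (b := 2 * R)
        (fun x _ => dχ₁ x) (fun x _ => hH.hasDx ht0 x)
        (hχR₂.intervalIntegrable _ _) (cH'.intervalIntegrable _ _)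
      simp only [hz _ e1.ge, hz _ e2.ge, hz₁ _ e1.ge, hz₁ _ e2.ge, zero_mul, zero_div, sub_zero,
        zero_sub] at ibp1 ibp2 ibp3
      calc ∫ x in (-(2 * R))..(2 * R), χ (x / R) * dt ρ t x
          ≤ ∫ x in (-(2 * R))..(2 * R),
              (χ (x / R) * dx F t x + χ (x / R) * dx (dx H) t x) := by
            refine intervalIntegral.integral_mono_on hle ?_ ?_ fun x _ => ?_
            · exact (hχR.mul cρ).intervalIntegrable _ _
            · exact ((hχR.mul cF').add (hχR.mul cH'')).intervalIntegrable _ _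
            · rw [← mul_add]
              exact mul_le_mul_of_nonneg_left (hineq t ht x) (h0 _)
        _ = ∫ x in (-(2 * R))..(2 * R),
              (χ₂ (x / R) / R / R * H t x - χ₁ (x / R) / R * F t x) := by
            have k1 : IntervalIntegrable (fun x => χ (x / R) * dx F t x) volume (-(2 * R)) (2 * R) :=
              (hχR.mul cF').intervalIntegrable _ _
            have k2 : IntervalIntegrable (fun x => χ (x / R) * dx (dx H) t x) volume
              (-(2 * R)) (2 * R) := (hχR.mul cH'').intervalIntegrable _ _
            have k3 : IntervalIntegrable (fun x => χ₂ (x / R) / R / R * H t x) volume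
              (-(2 * R)) (2 * R) := (hχR₂.mul cH).intervalIntegrable _ _
            have k4 : IntervalIntegrable (fun x => χ₁ (x / R) / R * F t x) volume
              (-(2 * R)) (2 * R) := (hχR₁.mul cF).intervalIntegrable _ _
            rw [intervalIntegral.integral_add k1 k2, intervalIntegral.integral_sub k3 k4,
              ibp1, ibp2, ibp3]
            ring
        _ ≤ ∫ x in (-(2 * R))..(2 * R), K / R * (|F t x| + |H t x|) := by
            refine intervalIntegral.integral_mono_on hle ?_ ?_ fun x _ => ?_
            · exact ((hχR₂.mul cH).sub (hχR₁.mul cF)).intervalIntegrable _ _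
            · exact (continuous_const.mul (cF.abs.add cH.abs)).intervalIntegrable _ _
            · have i1 : |χ₁ (x / R) / R| ≤ K / R := by
                rw [abs_div, abs_of_pos hR0]; gcongr; exact hb₁ _
              have i2 : |χ₂ (x / R) / R / R| ≤ K / R := by
                rw [abs_div, abs_div, abs_of_pos hR0]
                calc |χ₂ (x / R)| / R / R ≤ K / R / 1 := by gcongr; exact hb₂ _
                  _ = K / R := by ring
              have j1 : |χ₁ (x / R) / R * F t x| ≤ K / R * |F t x| := by
                rw [abs_mul]; gcongr
              have j2 : |χ₂ (x / R) / R / R * H t x| ≤ K / R * |H t x| := by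
                rw [abs_mul]; gcongr
              have := abs_le.1 j1
              have := abs_le.1 j2
              linarith
        _ = K / R * ∫ x in (-(2 * R))..(2 * R), (|F t x| + |H t x|) := by
            rw [intervalIntegral.integral_const_mul]
        _ ≤ K / R * (C * √R) := by
            have := hbd t ht R hR
            gcongr
  have hlim : ∀ t, Integrable (ρ t) →
      Filter.Tendsto (fun R => M R t) Filter.atTop (nhds (∫ x, ρ t x)) := by
    intro t it
    have h2 : Filter.Tendsto (fun R : ℝ => ∫ x, χ (x / R) * ρ t x) Filter.atTop
        (nhds (∫ x, ρ t x)) := by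
      refine tendsto_integral_filter_of_dominated_convergence (fun x => |ρ t x|) ?_ ?_ it.abs ?_
      · exact Filter.Eventually.of_forall fun R =>
          (by fun_prop : Continuous fun x : ℝ => χ (x / R)).aestronglyMeasurable.mul
            it.aestronglyMeasurable
      · refine Filter.Eventually.of_forall fun R => Filter.Eventually.of_forall fun x => ?_
        rw [norm_mul, Real.norm_of_nonneg (h0 _), Real.norm_eq_abs]
        exact mul_le_of_le_one_left (abs_nonneg _) (h1 _)
      · refine Filter.Eventually.of_forall fun x => ?_
        refine tendsto_const_nhds.congr' ?_
        filter_upwards [Filter.eventually_ge_atTop (max 1 |x|)] with R hR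
        have hR0 : 0 < R := lt_of_lt_of_le one_pos ((le_max_left _ _).trans hR)
        rw [hone, one_mul]
        rw [abs_div, abs_of_pos hR0, div_le_one hR0]
        exact (le_max_right _ _).trans hR
    refine h2.congr' ?_
    filter_upwards [Filter.eventually_ge_atTop 1] with R hR
    have hR0 : 0 < R := by linarith
    refine (intervalIntegral.integral_eq_integral_of_support_subset fun x hx => ?_).symm
    by_contra hcon
    refine hx ?_
    have : 2 ≤ |x / R| := by
      rw [abs_div, abs_of_pos hR0, le_div_iff₀ hR0, le_abs']
      by_contra h
      push Not at h
      exact hcon ⟨by linarith [h.1], h.2.le⟩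
    simp [hz _ this]
  have hr : Filter.Tendsto (fun R : ℝ => (K / R * (C * √R)) * (b - a)) Filter.atTop (nhds 0) := by
    have h3 : Filter.Tendsto (fun R : ℝ => (√R)⁻¹) Filter.atTop (nhds 0) :=
      tendsto_inv_atTop_zero.comp Real.tendsto_sqrt_atTop
    have h4 := (h3.const_mul (K * C * (b - a)))
    rw [mul_zero] at h4
    refine h4.congr' ?_
    filter_upwards [Filter.eventually_gt_atTop 0] with R hR
    have : R = √R * √R := (Real.mul_self_sqrt hR.le).symm
    have hs : √R ≠ 0 := (Real.sqrt_pos.2 hR).ne'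
    rw [show K / R = K / (√R * √R) by rw [← this]]
    field_simp
  have := le_of_tendsto_of_tendsto ((hlim b ib).sub (hlim a ia)) hr
    ((Filter.eventually_ge_atTop 1).mono hMle)
  linarith

end MKdV

/-! ### Schwartz functions and classical solutions -/

namespace MKdV

/-- A real function of one variable that is the underlying function of a Schwartz map. -/
def Sch (f : ℝ → ℝ) : Prop := ∃ g : SchwartzMap ℝ ℝ, ∀ x, f x = g x

lemma Sch.coe (g : SchwartzMap ℝ ℝ) : Sch g := ⟨g, fun _ => rfl⟩

lemma Sch.eq {f : ℝ → ℝ} (h : Sch f) : ∃ g : SchwartzMap ℝ ℝ, f = g := by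
  obtain ⟨g, hg⟩ := h; exact ⟨g, funext hg⟩

lemma Sch.add {f g : ℝ → ℝ} (hf : Sch f) (hg : Sch g) : Sch (fun x => f x + g x) := by
  obtain ⟨F, rfl⟩ := hf.eq; obtain ⟨G, rfl⟩ := hg.eq
  exact ⟨F + G, fun x => by simp⟩

lemma Sch.neg {f : ℝ → ℝ} (hf : Sch f) : Sch (fun x => - f x) := by
  obtain ⟨F, rfl⟩ := hf.eq
  exact ⟨-F, fun x => by simp⟩

lemma Sch.sub {f g : ℝ → ℝ} (hf : Sch f) (hg : Sch g) : Sch (fun x => f x - g x) := by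
  obtain ⟨F, rfl⟩ := hf.eq; obtain ⟨G, rfl⟩ := hg.eq
  exact ⟨F - G, fun x => by simp⟩

lemma Sch.cmul {f : ℝ → ℝ} (hf : Sch f) (c : ℝ) : Sch (fun x => c * f x) := by
  obtain ⟨F, rfl⟩ := hf.eq
  exact ⟨c • F, fun x => by simp⟩

lemma Sch.mul_temp {f g : ℝ → ℝ} (hf : f.HasTemperateGrowth) (hg : Sch g) :
    Sch (fun x => f x * g x) := by
  obtain ⟨G, rfl⟩ := hg.eq
  exact ⟨SchwartzMap.smulLeftCLM ℝ f G, fun x => by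
    rw [SchwartzMap.smulLeftCLM_apply_apply hf]; simp⟩

lemma Sch.mul {f g : ℝ → ℝ} (hf : Sch f) (hg : Sch g) : Sch (fun x => f x * g x) := by
  obtain ⟨F, rfl⟩ := hf.eq
  exact Sch.mul_temp F.hasTemperateGrowth hg

lemma Sch.xmul {f : ℝ → ℝ} (hf : Sch f) : Sch (fun x => x * f x) :=
  Sch.mul_temp (f := fun x => x) (by fun_prop) hf

lemma Sch.pow {f : ℝ → ℝ} (hf : Sch f) (n : ℕ) : Sch (fun x => f x ^ (n + 1)) := by
  induction n with
  | zero => simpa using hf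
  | succ n ih => simpa [_root_.pow_succ] using ih.mul hf

lemma Sch.sq {f : ℝ → ℝ} (hf : Sch f) : Sch (fun x => f x ^ 2) := hf.pow 1

lemma Sch.deriv {f : ℝ → ℝ} (hf : Sch f) : Sch (deriv f) := by
  obtain ⟨F, rfl⟩ := hf.eq
  exact ⟨SchwartzMap.derivCLM ℝ ℝ F, fun x => by simp⟩

lemma Sch.integrable {f : ℝ → ℝ} (hf : Sch f) : Integrable f := by
  obtain ⟨F, rfl⟩ := hf.eq
  exact F.integrable

lemma Sch.continuous {f : ℝ → ℝ} (hf : Sch f) : Continuous f := by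
  obtain ⟨F, rfl⟩ := hf.eq
  exact F.continuous

lemma Sch.contDiff {f : ℝ → ℝ} (hf : Sch f) : ContDiff ℝ (⊤ : ℕ∞) f := by
  obtain ⟨F, rfl⟩ := hf.eq
  exact F.smooth _

lemma Sch.hasDerivAt {f : ℝ → ℝ} (hf : Sch f) (x : ℝ) : HasDerivAt f (_root_.deriv f x) x :=
  (hf.contDiff.differentiable (by simp) x).hasDerivAt

lemma Sch.tendsto {f : ℝ → ℝ} (hf : Sch f) : Filter.Tendsto f Filter.atBot (nhds 0) := by
  obtain ⟨F, rfl⟩ := hf.eq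
  have : Filter.Tendsto F (Filter.cocompact ℝ) (nhds 0) := ZeroAtInftyContinuousMapClass.zero_at_infty F
  exact this.mono_left (by rw [_root_.cocompact_eq_atBot_atTop]; exact le_sup_left)

/-- The one-dimensional Sobolev inequality. -/
lemma Sch.sobolev {f : ℝ → ℝ} (hf : Sch f) (x : ℝ) :
    f x ^ 2 ≤ (∫ y, f y ^ 2) + ∫ y, _root_.deriv f y ^ 2 := by
  have hd := hf.deriv
  have h1 : ∫ y in Set.Iic x, 2 * f y * _root_.deriv f y = f x ^ 2 - 0 := by
    refine integral_Iic_of_hasDerivAt_of_tendsto' (f := fun y => f y ^ 2) (fun y _ => ?_) ?_ ?_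
    · simpa using (hf.hasDerivAt y).fun_pow 2
    · have : Sch (fun y => 2 * f y * _root_.deriv f y) := (hf.cmul 2).mul hd
      exact this.integrable.integrableOn
    · simpa using hf.tendsto.pow 2
  have i2 := (hf.sq.add hd.sq).integrable
  rw [← integral_add hf.sq.integrable hd.sq.integrable]
  calc f x ^ 2 = ∫ y in Set.Iic x, 2 * f y * _root_.deriv f y := by rw [h1]; ring
    _ ≤ ∫ y in Set.Iic x, (f y ^ 2 + _root_.deriv f y ^ 2) := by
        refine setIntegral_mono ((hf.cmul 2).mul hd).integrable.integrableOn i2.integrableOn ?_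
        intro y
        have := sq_nonneg (f y - _root_.deriv f y)
        simp only
        nlinarith
    _ ≤ _ := setIntegral_le_integral i2 (Filter.Eventually.of_forall fun y => by positivity)

/-- The analytic content of a classical solution used below. -/
structure Sol (u : ℝ → ℝ → ℝ) : Prop where
  sm : Sm u
  sch : ∀ t, 0 ≤ t → Sch (u t)
  eqn : ∀ t, 0 < t → ∀ x, dt u t x = -(dx (dx (dx u)) t x + 3 * u t x ^ 2 * dx u t x)
  cont : ContinuousOn (Function.uncurry u) (Set.Ici 0 ×ˢ Set.univ)

lemma Sol.of {u : ℝ → ℝ → ℝ} (h : IsMKdVOn u (Set.Ici 0)) : Sol u where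
  sm := h.1.mono (Set.prod_mono Set.Ioi_subset_Ici_self le_rfl)
  sch t ht := h.2.1 t ht
  cont := h.1.continuousOn
  eqn t ht x := by
    have h3 := h.2.2 t ht.le x
    have hs : Sm u := h.1.mono (Set.prod_mono Set.Ioi_subset_Ici_self le_rfl)
    have e1 : iteratedDeriv 3 (fun y => u t y) x = dx (dx (dx u)) t x := by
      simp only [iteratedDeriv_succ, iteratedDeriv_zero]; rfl
    have e2 : deriv (fun y => u t y ^ 3) x = 3 * u t x ^ 2 * dx u t x := by
      simpa using ((hs.hasDx ht x).fun_pow 3).deriv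
    rw [e1, e2] at h3
    have e3 : deriv (fun t' => u t' x) t = dt u t x := rfl
    rw [e3] at h3
    linarith

lemma Sch.dx {u : ℝ → ℝ → ℝ} {t : ℝ} (h : Sch (u t)) : Sch (dx u t) := h.deriv

end MKdV

/-! ### Propagation of bounds by Baire category -/

namespace MKdV

/-- The Baire category theorem in a closed set `S`, localised near a point `x₀` of `S`. -/
lemma baire_closed {S : Set ℝ} (hS : IsClosed S) {x₀ r₀ : ℝ} (hx₀ : x₀ ∈ S) (hr₀ : 0 < r₀)
    {A : ℕ → Set ℝ} (hA : ∀ n, IsClosed (S ∩ A n)) (hU : ∀ x ∈ S, ∃ n, x ∈ A n) :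
    ∃ n, ∃ x ∈ S, |x - x₀| < r₀ ∧ ∃ r > 0, ∀ y ∈ S, |y - x| < r → y ∈ A n := by
  have : CompleteSpace S := hS.completeSpace_coe
  have hd := dense_iUnion_interior_of_closed
    (f := fun n => ((↑) : S → ℝ) ⁻¹' (A n))
    (fun n => by
      have := (hA n).preimage (continuous_subtype_val : Continuous ((↑) : S → ℝ))
      convert this using 1
      ext y; simp)
    (by
      ext y
      simpa using hU y y.2)
  obtain ⟨x, hxm, hxb⟩ := hd.exists_mem_open Metric.isOpen_ball
    ⟨⟨x₀, hx₀⟩, Metric.mem_ball_self hr₀⟩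
  obtain ⟨n, hx⟩ := Set.mem_iUnion.1 hxm
  rw [mem_interior_iff_mem_nhds, Metric.mem_nhds_iff] at hx
  obtain ⟨r, hr, hb⟩ := hx
  refine ⟨n, x, x.2, by simpa [Metric.mem_ball, Subtype.dist_eq, Real.dist_eq] using hxb,
    r, hr, fun y hy hyx => ?_⟩
  exact hb (a := ⟨y, hy⟩) (by simpa [Metric.mem_ball, Subtype.dist_eq, Real.dist_eq] using hyx)

lemma tendsto_interval {f : ℝ → ℝ} (h : Integrable f) :
    Filter.Tendsto (fun R : ℝ => ∫ x in (-R)..R, f x) Filter.atTop (nhds (∫ x, f x)) :=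
  intervalIntegral_tendsto_integral h Filter.tendsto_neg_atTop_atBot Filter.tendsto_id

lemma interval_le_integral {f : ℝ → ℝ} (h : Integrable f) (h0 : ∀ x, 0 ≤ f x) {p q : ℝ}
    (hpq : p ≤ q) : ∫ x in p..q, f x ≤ ∫ x, f x := by
  rw [intervalIntegral.integral_of_le hpq]
  exact setIntegral_le_integral h (Filter.Eventually.of_forall h0)

/-- Lower semicontinuity in time of spatial integrals of nonnegative densities. -/
lemma isClosed_sublevel {Q : ℝ → ℝ → ℝ} (hQ : Sm Q) (h0 : ∀ t x, 0 ≤ Q t x)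
    (hi : ∀ t, 0 < t → Integrable (Q t)) {S : Set ℝ} (hS : IsClosed S) (hpos : ∀ t ∈ S, 0 < t)
    (c : ℝ) : IsClosed (S ∩ {t | ∫ x, Q t x ≤ c}) := by
  have : S ∩ {t | ∫ x, Q t x ≤ c}
      = ⋂ R : Set.Ici (0 : ℝ), S ∩ (fun t => ∫ x in (-(R : ℝ))..R, Q t x) ⁻¹' Set.Iic c := by
    ext t
    simp only [Set.mem_inter_iff, Set.mem_ofPred_eq, Set.mem_iInter, Set.mem_preimage, Set.mem_Iic]
    constructor
    · rintro ⟨h1, h2⟩ R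
      exact ⟨h1, (interval_le_integral (hi t (hpos t h1)) (h0 t)
        (by have := R.2; simp only [Set.mem_Ici] at this; linarith)).trans h2⟩
    · intro h
      have h1 := (h ⟨0, by simp⟩).1
      refine ⟨h1, le_of_tendsto (tendsto_interval (hi t (hpos t h1))) ?_⟩
      filter_upwards [Filter.eventually_ge_atTop 0] with R hR
      exact (h ⟨R, hR⟩).2
  rw [this]
  refine isClosed_iInter fun R => ?_
  refine ContinuousOn.preimage_isClosed_of_isClosed (fun t ht => ?_) hS isClosed_Iic
  exact (hasDerivAt_param hQ (hpos t ht) _ _).continuousAt.continuousWithinAt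

/-- A Baire category argument. Suppose a lower semicontinuous quantity `B` on `(0, ∞)`, finite at
every time, is propagated (`B t ≤ Θ (B s)`) along every interval on which it is bounded. Then it
is bounded on every compact interval of `(0, ∞)`. -/
lemma baire_propagation {B : ℝ → ℝ} {Θ : ℝ → ℝ} (hΘ : Monotone Θ)
    (hcl : ∀ S : Set ℝ, IsClosed S → (∀ t ∈ S, 0 < t) → ∀ c, IsClosed (S ∩ {t | B t ≤ c}))
    (hprop : ∀ a b, 0 < a → a ≤ b → (∃ G, ∀ t ∈ Set.Icc a b, B t ≤ G) →
      ∀ s ∈ Set.Icc a b, ∀ t ∈ Set.Icc a b, B t ≤ Θ (B s)) :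
    ∀ a b, 0 < a → a ≤ b → ∃ G, ∀ t ∈ Set.Icc a b, B t ≤ G := by
  -- points near which `B` is bounded
  let U : Set ℝ := {t | ∃ r > 0, ∃ G, ∀ s, |s - t| < r → B s ≤ G}
  have hUo : IsOpen U := by
    rw [Metric.isOpen_iff]
    rintro t ⟨r, hr, G, hG⟩
    refine ⟨r / 2, by positivity, fun s hs => ⟨r / 2, by positivity, G, fun s' hs' => hG s' ?_⟩⟩
    rw [Metric.mem_ball, Real.dist_eq] at hs
    calc |s' - t| ≤ |s' - s| + |s - t| := abs_sub_le _ _ _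
      _ < r := by linarith
  -- compact intervals inside `U`
  have hcpt : ∀ a b, Set.Icc a b ⊆ U → ∃ G, ∀ t ∈ Set.Icc a b, B t ≤ G := by
    intro a b hab
    refine (isCompact_Icc (a := a) (b := b)).induction_on
      (p := fun S => ∃ G, ∀ t ∈ S, B t ≤ G) ?_ ?_ ?_ ?_
    · exact ⟨0, by simp⟩
    · rintro s t hst ⟨G, hG⟩
      exact ⟨G, fun x hx => hG x (hst hx)⟩
    · rintro s t ⟨G, hG⟩ ⟨G', hG'⟩
      exact ⟨max G G', fun x hx => hx.elim (fun h => (hG x h).trans (le_max_left _ _))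
        fun h => (hG' x h).trans (le_max_right _ _)⟩
    · intro t ht
      obtain ⟨r, hr, G, hG⟩ := hab ht
      exact ⟨Metric.ball t r, mem_nhdsWithin_of_mem_nhds (Metric.ball_mem_nhds t hr), G,
        fun s hs => hG s (by simpa [Real.dist_eq] using hs)⟩
  -- propagation along intervals whose interior lies in `U`
  have hH : ∀ a b, 0 < a → a < b → Set.Ioo a b ⊆ U →
      ∀ s ∈ Set.Icc a b, ∀ t ∈ Set.Icc a b, B t ≤ Θ (B s) := by
    intro a b ha hab hsub
    refine hprop a b ha hab.le ?_
    set m := (a + b) / 2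
    have hm : m ∈ Set.Ioo a b := ⟨by simp only [m]; linarith, by simp only [m]; linarith⟩
    refine ⟨max (Θ (B m)) (max (B a) (B b)), fun t ht => ?_⟩
    rcases eq_or_lt_of_le ht.1 with h1 | h1
    · rw [← h1]; exact (le_max_left _ _).trans (le_max_right _ _)
    rcases eq_or_lt_of_le ht.2 with h2 | h2
    · rw [h2]; exact (le_max_right _ _).trans (le_max_right _ _)
    refine le_trans ?_ (le_max_left _ _)
    have hin : Set.Icc (min m t) (max m t) ⊆ Set.Ioo a b := fun s hs =>
      ⟨lt_of_lt_of_le (lt_min hm.1 h1) hs.1, lt_of_le_of_lt hs.2 (max_lt hm.2 h2)⟩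
    exact hprop (min m t) (max m t) (ha.trans (lt_min hm.1 h1))
      ((min_le_left _ _).trans (le_max_left _ _)) (hcpt _ _ (hin.trans hsub)) m
      ⟨min_le_left _ _, le_max_left _ _⟩ t ⟨min_le_right _ _, le_max_right _ _⟩
  suffices hall : ∀ t, 0 < t → t ∈ U from
    fun a b ha hab => hcpt a b fun t ht => hall t (ha.trans_le ht.1)
  by_contra! hcon
  obtain ⟨t₀, ht₀, hnot⟩ := hcon
  -- the bad set, localized to a compact interval around `t₀`
  set S : Set ℝ := Set.Icc (t₀ / 2) (2 * t₀) ∩ Uᶜ with hSdef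
  have hScl : IsClosed S := isClosed_Icc.inter hUo.isClosed_compl
  have hSpos : ∀ t ∈ S, 0 < t := fun t ht => lt_of_lt_of_le (by positivity) ht.1.1
  obtain ⟨n, x, hxS, hx0, r, hr, hN⟩ := baire_closed hScl (A := fun n : ℕ => {t | B t ≤ n})
    (x₀ := t₀) (r₀ := t₀ / 4)
    ⟨⟨by linarith, by linarith⟩, hnot⟩ (by positivity) (fun n => hcl S hScl hSpos n)
    (fun x _ => exists_nat_ge (B x))
  apply hxS.2
  have hx1 := abs_lt.1 hx0
  refine ⟨min r (t₀ / 4), by positivity, max n (Θ n), fun s hs => ?_⟩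
  have hs1 : |s - x| < r := hs.trans_le (min_le_left _ _)
  have hs2 := abs_lt.1 (hs.trans_le (min_le_right _ _))
  by_cases hsU : s ∈ U
  swap
  · exact (hN s ⟨⟨by linarith, by linarith⟩, hsU⟩ hs1).trans (le_max_left _ _)
  refine le_trans ?_ (le_max_right _ _)
  -- the bad point nearest to `s` on the side of `x`
  rcases lt_trichotomy s x with hlt | heq | hgt
  · have hc : IsCompact (Set.Icc s x ∩ Uᶜ) := isCompact_Icc.inter_right hUo.isClosed_compl
    obtain ⟨y, hy, hmin⟩ := hc.exists_isLeast ⟨x, ⟨hlt.le, le_rfl⟩, hxS.2⟩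
    have hsy : s < y := lt_of_le_of_ne hy.1.1 fun h => hy.2 (h ▸ hsU)
    have hsub : Set.Ioo s y ⊆ U := fun z hz => by
      by_contra hzU
      exact absurd (hmin ⟨⟨hz.1.le, hz.2.le.trans hy.1.2⟩, hzU⟩) (not_le.2 hz.2)
    have hBy : B y ≤ n := hN y ⟨⟨by linarith, by linarith [hy.1.2]⟩, hy.2⟩ (by
      rw [abs_lt] at hs1 ⊢; constructor <;> linarith [hy.1.2])
    exact (hH s y (by linarith) hsy hsub y ⟨hsy.le, le_rfl⟩ s ⟨le_rfl, hsy.le⟩).trans (hΘ hBy)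
  · exact absurd (heq ▸ hsU) hxS.2
  · have hc : IsCompact (Set.Icc x s ∩ Uᶜ) := isCompact_Icc.inter_right hUo.isClosed_compl
    obtain ⟨y, hy, hmax⟩ := hc.exists_isGreatest ⟨x, ⟨le_rfl, hgt.le⟩, hxS.2⟩
    have hsy : y < s := lt_of_le_of_ne hy.1.2 fun h => hy.2 (h ▸ hsU)
    have hsub : Set.Ioo y s ⊆ U := fun z hz => by
      by_contra hzU
      exact absurd (hmax ⟨⟨hy.1.1.trans hz.1.le, hz.2.le⟩, hzU⟩) (not_le.2 hz.1)
    have hBy : B y ≤ n := hN y ⟨⟨by linarith [hy.1.1], by linarith⟩, hy.2⟩ (by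
      rw [abs_lt] at hs1 ⊢; constructor <;> linarith [hy.1.1])
    exact (hH y s (by linarith [hy.1.1]) hsy hsub y ⟨le_rfl, hsy.le⟩ s ⟨hsy.le, le_rfl⟩).trans
      (hΘ hBy)

end MKdV

/-! ### Conservation laws of mKdV -/

namespace MKdV

lemma dx_neg (F : ℝ → ℝ → ℝ) : dx (fun t x => - F t x) = fun t x => - dx F t x := by
  funext t x; exact deriv.fun_neg
lemma dt_neg (F : ℝ → ℝ → ℝ) : dt (fun t x => - F t x) = fun t x => - dt F t x := by
  funext t x; exact deriv.fun_neg

lemma dx_eq_of {F : ℝ → ℝ → ℝ} {t x c : ℝ} (h : HasDerivAt (F t) c x) : dx F t x = c := h.deriv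
lemma dt_eq_of {F : ℝ → ℝ → ℝ} {t x c : ℝ} (h : HasDerivAt (fun s => F s x) c t) :
    dt F t x = c := h.deriv

lemma dxx_eq_of {F : ℝ → ℝ → ℝ} {t x c : ℝ} {F₁ : ℝ → ℝ} (h : ∀ y, HasDerivAt (F t) (F₁ y) y)
    (h' : HasDerivAt F₁ c x) : dx (dx F) t x = c := by
  have : dx F t = F₁ := funext fun y => (h y).deriv
  show deriv (dx F t) x = c
  rw [this]; exact h'.deriv

lemma flux_id {ρ F H : ℝ → ℝ → ℝ} {t x r f c : ℝ} (h₁ : ℝ → ℝ)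
    (hr : HasDerivAt (fun s => ρ s x) r t) (hf : HasDerivAt (F t) f x)
    (hH : ∀ y, HasDerivAt (H t) (h₁ y) y) (hH₂ : HasDerivAt h₁ c x) (e : r = f + c) :
    dt ρ t x = dx F t x + dx (dx H) t x := by
  rw [dt_eq_of hr, dx_eq_of hf, dxx_eq_of hH hH₂, e]

/-- `flux_le` when the fluxes are dominated by a density with bounded integral. -/
lemma flux_le' {ρ F H Q : ℝ → ℝ → ℝ} {a b C G : ℝ} (ha : 0 ≤ a) (hab : a ≤ b) (hρ : Sm ρ)
    (hc : ContinuousOn (Function.uncurry ρ) (Set.Icc a b ×ˢ Set.univ)) (hF : Sm F) (hH : Sm H)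
    (hineq : ∀ t ∈ Set.Ioo a b, ∀ x, dt ρ t x ≤ dx F t x + dx (dx H) t x)
    (hC : 0 ≤ C) (hQ : ∀ t ∈ Set.Ioo a b, ∀ x, |F t x| + |H t x| ≤ C * Q t x)
    (hQ0 : ∀ t x, 0 ≤ Q t x)
    (hQi : ∀ t ∈ Set.Ioo a b, Integrable (Q t)) (hG : ∀ t ∈ Set.Ioo a b, ∫ x, Q t x ≤ G)
    (ia : Integrable (ρ a)) (ib : Integrable (ρ b)) : ∫ x, ρ b x ≤ ∫ x, ρ a x := by
  refine flux_le (C := C * G) ha hab hρ hc hF hH hineq (fun t ht R hR => ?_) ia ib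
  have ht0 : 0 < t := lt_of_le_of_lt ha ht.1
  have hG0 : 0 ≤ G := (integral_nonneg (hQ0 t)).trans (hG t ht)
  calc ∫ x in (-(2 * R))..(2 * R), (|F t x| + |H t x|)
      ≤ ∫ x in (-(2 * R))..(2 * R), C * Q t x := by
        refine intervalIntegral.integral_mono_on (by linarith) ?_ ?_ fun x _ => hQ t ht x
        · exact ((hF.cont ht0).abs.add (hH.cont ht0).abs).intervalIntegrable _ _
        · exact ((hQi t ht).const_mul C).intervalIntegrable
    _ ≤ ∫ x, C * Q t x := interval_le_integral ((hQi t ht).const_mul C)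
        (fun x => mul_nonneg hC (hQ0 t x)) (by linarith)
    _ = C * ∫ x, Q t x := integral_const_mul _ _
    _ ≤ C * G := mul_le_mul_of_nonneg_left (hG t ht) hC
    _ ≤ C * G * √R := le_mul_of_one_le_right (mul_nonneg hC hG0) (Real.one_le_sqrt.2 hR)

/-- The equality case of `flux_le'`. -/
lemma flux_eq {ρ F H Q : ℝ → ℝ → ℝ} {a b C G : ℝ} (ha : 0 ≤ a) (hab : a ≤ b) (hρ : Sm ρ)
    (hc : ContinuousOn (Function.uncurry ρ) (Set.Icc a b ×ˢ Set.univ)) (hF : Sm F) (hH : Sm H)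
    (heq : ∀ t ∈ Set.Ioo a b, ∀ x, dt ρ t x = dx F t x + dx (dx H) t x)
    (hC : 0 ≤ C) (hQ : ∀ t ∈ Set.Ioo a b, ∀ x, |F t x| + |H t x| ≤ C * Q t x)
    (hQ0 : ∀ t x, 0 ≤ Q t x)
    (hQi : ∀ t ∈ Set.Ioo a b, Integrable (Q t)) (hG : ∀ t ∈ Set.Ioo a b, ∫ x, Q t x ≤ G)
    (ia : Integrable (ρ a)) (ib : Integrable (ρ b)) : ∫ x, ρ b x = ∫ x, ρ a x := by
  refine le_antisymm (flux_le' ha hab hρ hc hF hH (fun t ht x => (heq t ht x).le) hC hQ hQ0 hQi hG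
    ia ib) ?_
  have := flux_le' ha hab hρ.neg (ContinuousOn.neg hc) hF.neg hH.neg (fun t ht x => by
    rw [dt_neg, dx_neg, dx_neg, dx_neg]; simp only; rw [heq t ht x]; linarith) hC
    (fun t ht x => by simpa using hQ t ht x) hQ0 hQi hG ia.neg ib.neg
  rw [integral_neg, integral_neg] at this
  linarith

/-- The density `u² + u_x² + u_xx²`. -/
def E2 (u : ℝ → ℝ → ℝ) (t x : ℝ) : ℝ := u t x ^ 2 + dx u t x ^ 2 + dx (dx u) t x ^ 2

/-- The density `u² + u_x² + u_xx² + u_xxx²`. -/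
def E3 (u : ℝ → ℝ → ℝ) (t x : ℝ) : ℝ := E2 u t x + dx (dx (dx u)) t x ^ 2

lemma Sol.s1 {u : ℝ → ℝ → ℝ} (h : Sol u) {t : ℝ} (ht : 0 ≤ t) : Sch (dx u t) := (h.sch t ht).dx
lemma Sol.s2 {u : ℝ → ℝ → ℝ} (h : Sol u) {t : ℝ} (ht : 0 ≤ t) : Sch (dx (dx u) t) :=
  (h.s1 ht).dx
lemma Sol.s3 {u : ℝ → ℝ → ℝ} (h : Sol u) {t : ℝ} (ht : 0 ≤ t) : Sch (dx (dx (dx u)) t) :=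
  (h.s2 ht).dx
lemma Sol.sE2 {u : ℝ → ℝ → ℝ} (h : Sol u) {t : ℝ} (ht : 0 ≤ t) : Sch (E2 u t) :=
  ((h.sch t ht).sq.add (h.s1 ht).sq).add (h.s2 ht).sq
lemma Sol.sE3 {u : ℝ → ℝ → ℝ} (h : Sol u) {t : ℝ} (ht : 0 ≤ t) : Sch (E3 u t) :=
  (h.sE2 ht).add (h.s3 ht).sq
lemma E2_nonneg (u : ℝ → ℝ → ℝ) (t x : ℝ) : 0 ≤ E2 u t x := by unfold E2; positivity
lemma E3_nonneg (u : ℝ → ℝ → ℝ) (t x : ℝ) : 0 ≤ E3 u t x := by unfold E3 E2; positivity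
lemma Sol.smE2 {u : ℝ → ℝ → ℝ} (h : Sol u) : Sm (E2 u) :=
  ((h.sm.pow 2).add (h.sm.dx.pow 2)).add (h.sm.dx.dx.pow 2)

/-- The equation for `u_x`. -/
lemma Sol.eqn1 {u : ℝ → ℝ → ℝ} (h : Sol u) {t : ℝ} (ht : 0 < t) (x : ℝ) :
    dt (dx u) t x = -(dx (dx (dx (dx u))) t x + 3 * u t x ^ 2 * dx (dx u) t x
      + 6 * u t x * dx u t x ^ 2) := by
  rw [h.sm.comm ht]
  refine dx_eq_of ?_
  have : dt u t = fun y => -(dx (dx (dx u)) t y + 3 * u t y ^ 2 * dx u t y) :=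
    funext fun y => h.eqn t ht y
  rw [this]
  have := ((h.sm.dx.dx.dx.hasDx ht x).add ((((h.sm.hasDx ht x).pow 2).const_mul 3).mul
    (h.sm.dx.hasDx ht x))).neg
  refine this.congr_deriv ?_
  simp only [Pi.pow_apply]
  push_cast
  ring

/-- The equation for `u_xx`. -/
lemma Sol.eqn2 {u : ℝ → ℝ → ℝ} (h : Sol u) {t : ℝ} (ht : 0 < t) (x : ℝ) :
    dt (dx (dx u)) t x = -(dx (dx (dx (dx (dx u)))) t x + 3 * u t x ^ 2 * dx (dx (dx u)) t x
      + 18 * u t x * dx u t x * dx (dx u) t x + 6 * dx u t x ^ 3) := by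
  rw [h.sm.dx.comm ht]
  refine dx_eq_of ?_
  have : dt (dx u) t = fun y => -(dx (dx (dx (dx u))) t y + 3 * u t y ^ 2 * dx (dx u) t y
      + 6 * u t y * dx u t y ^ 2) :=
    funext fun y => h.eqn1 ht y
  rw [this]
  have := (((h.sm.dx.dx.dx.dx.hasDx ht x).add ((((h.sm.hasDx ht x).pow 2).const_mul 3).mul
    (h.sm.dx.dx.hasDx ht x))).add (((h.sm.hasDx ht x).const_mul 6).mul
      ((h.sm.dx.hasDx ht x).pow 2))).neg
  refine this.congr_deriv ?_
  simp only [Pi.pow_apply]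
  push_cast
  ring

lemma Sm.contOn_Icc {F : ℝ → ℝ → ℝ} (h : Sm F) {a b : ℝ} (ha : 0 < a) :
    ContinuousOn (Function.uncurry F) (Set.Icc a b ×ˢ Set.univ) :=
  h.continuousOn.mono (Set.prod_mono (fun _ hs => ha.trans_le hs.1) le_rfl)

lemma abs_mul_le_of {A B P Q : ℝ} (hA : |A| ≤ P) (hB : |B| ≤ Q) : |A * B| ≤ P * Q := by
  rw [abs_mul]
  exact mul_le_mul hA hB (abs_nonneg _) ((abs_nonneg _).trans hA)

/-- Conservation of `∫ u²`, on an interval where the `H¹` norm is bounded. -/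
lemma Sol.cons0 {u : ℝ → ℝ → ℝ} (h : Sol u) {a b G : ℝ} (ha : 0 ≤ a) (hab : a ≤ b) (hG1 : 1 ≤ G)
    (hG : ∀ t ∈ Set.Ioo a b, ∫ x, (u t x ^ 2 + dx u t x ^ 2) ≤ G) :
    ∫ x, u b x ^ 2 = ∫ x, u a x ^ 2 := by
  refine flux_eq (F := fun t x => 3 * dx u t x ^ 2 - 3 / 2 * u t x ^ 4)
    (H := fun t x => -2 * (u t x * dx u t x)) (Q := fun t x => u t x ^ 2 + dx u t x ^ 2)
    (C := 10 * G) (G := G) ha hab (h.sm.pow 2) ?_ ?_ ?_ ?_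
    (by positivity) ?_ (fun t x => by positivity) ?_ hG (h.sch a ha).sq.integrable
    (h.sch b (ha.trans hab)).sq.integrable
  · exact (h.cont.mono (Set.prod_mono (fun _ hs => ha.trans hs.1) le_rfl)).pow 2
  · exact ((Sm.const 3).mul (h.sm.dx.pow 2)).sub ((Sm.const (3 / 2)).mul (h.sm.pow 4))
  · exact (Sm.const (-2)).mul (h.sm.mul h.sm.dx)
  · intro t htm x
    have ht : 0 < t := ha.trans_lt htm.1
    have d0 := fun y => h.sm.hasDx ht y
    have d1 := fun y => h.sm.dx.hasDx ht y
    have d2 := fun y => h.sm.dx.dx.hasDx ht y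
    refine flux_id (fun y => -2 * (dx u t y * dx u t y + u t y * dx (dx u) t y))
      ((h.sm.hasDt ht x).fun_pow 2)
      ((((d1 x).fun_pow 2).const_mul 3).fun_sub (((d0 x).fun_pow 4).const_mul (3 / 2)))
      (fun y => ((d0 y).fun_mul (d1 y)).const_mul (-2))
      ((((d1 x).fun_mul (d1 x)).fun_add ((d0 x).fun_mul (d2 x))).const_mul (-2)) ?_
    rw [h.eqn t ht]
    push_cast
    ring
  · intro t htm x
    have ht : 0 < t := ha.trans_lt htm.1
    have hs : u t x ^ 2 ≤ (∫ y, u t y ^ 2) + ∫ y, dx u t y ^ 2 := (h.sch t ht.le).sobolev x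
    rw [← integral_add (h.sch t ht.le).sq.integrable (h.s1 ht.le).sq.integrable] at hs
    have hu : u t x ^ 2 ≤ G := hs.trans (hG t htm)
    have e1 : |3 * dx u t x ^ 2 - 3 / 2 * u t x ^ 4| ≤ 3 * dx u t x ^ 2 + 3 / 2 * u t x ^ 4 := by
      rw [abs_le]; constructor <;> nlinarith [sq_nonneg (dx u t x), sq_nonneg (u t x ^ 2)]
    have e2 : |-2 * (u t x * dx u t x)| ≤ u t x ^ 2 + dx u t x ^ 2 := by
      rw [abs_le]; constructor <;> nlinarith [sq_nonneg (dx u t x - u t x),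
        sq_nonneg (dx u t x + u t x)]
    have e3 : u t x ^ 4 ≤ G * u t x ^ 2 := by nlinarith [sq_nonneg (u t x)]
    have e4 : dx u t x ^ 2 ≤ G * dx u t x ^ 2 := by nlinarith [sq_nonneg (dx u t x)]
    have e5 : u t x ^ 2 ≤ G * u t x ^ 2 := by nlinarith [sq_nonneg (u t x)]
    nlinarith [sq_nonneg (u t x), sq_nonneg (dx u t x)]
  · intro t htm
    have ht : 0 < t := ha.trans_lt htm.1
    exact ((h.sch t ht.le).sq.add (h.s1 ht.le).sq).integrable

lemma Sol.sup_sq {u : ℝ → ℝ → ℝ} (h : Sol u) {t G : ℝ} (ht : 0 ≤ t) (hG : ∫ x, E2 u t x ≤ G)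
    (x : ℝ) : u t x ^ 2 ≤ G ∧ dx u t x ^ 2 ≤ G := by
  have i0 := (h.sch t ht).sq.integrable
  have i1 := (h.s1 ht).sq.integrable
  have i2 := (h.s2 ht).sq.integrable
  have e : ∫ x, E2 u t x
      = (∫ x, u t x ^ 2) + (∫ x, dx u t x ^ 2) + ∫ x, dx (dx u) t x ^ 2 := by
    unfold E2
    rw [← integral_add i0 i1, ← integral_add ((h.sch t ht).sq.add (h.s1 ht).sq).integrable i2]
  have p0 : 0 ≤ ∫ x, u t x ^ 2 := integral_nonneg fun _ => sq_nonneg _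
  have p2 : 0 ≤ ∫ x, dx (dx u) t x ^ 2 := integral_nonneg fun _ => sq_nonneg _
  have s0 := (h.sch t ht).sobolev x
  have s1 := (h.s1 ht).sobolev x
  have e0 : ∫ x, deriv (u t) x ^ 2 = ∫ x, dx u t x ^ 2 := rfl
  have e1 : ∫ x, deriv (dx u t) x ^ 2 = ∫ x, dx (dx u) t x ^ 2 := rfl
  constructor <;> linarith

/-- Conservation of the energy, on an interval where the `H²` norm is bounded. -/
lemma Sol.cons1 {u : ℝ → ℝ → ℝ} (h : Sol u) {a b G : ℝ} (ha : 0 < a) (hab : a ≤ b) (hG1 : 1 ≤ G)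
    (hG : ∀ t ∈ Set.Icc a b, ∫ x, E2 u t x ≤ G) :
    ∫ x, (dx u b x ^ 2 - 1 / 2 * u b x ^ 4) = ∫ x, (dx u a x ^ 2 - 1 / 2 * u a x ^ 4) := by
  have hsm : Sm (fun t x => dx u t x ^ 2 - 1 / 2 * u t x ^ 4) :=
    (h.sm.dx.pow 2).sub ((Sm.const (1 / 2)).mul (h.sm.pow 4))
  have hi : ∀ t, 0 ≤ t → Integrable (fun x => dx u t x ^ 2 - 1 / 2 * u t x ^ 4) := fun t ht =>
    ((h.s1 ht).sq.sub (((h.sch t ht).pow 3).cmul (1 / 2))).integrable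
  refine flux_eq (ρ := fun t x => dx u t x ^ 2 - 1 / 2 * u t x ^ 4)
    (F := fun t x => 3 * dx (dx u) t x ^ 2 + 2 * (u t x ^ 3 * dx (dx u) t x) + u t x ^ 6
      - 6 * (u t x ^ 2 * dx u t x ^ 2))
    (H := fun t x => -2 * (dx u t x * dx (dx u) t x)) (Q := E2 u)
    (C := 20 * G ^ 2) (G := G) ha.le hab hsm (hsm.contOn_Icc ha) ?_ ?_ ?_
    (by positivity) ?_ (E2_nonneg u) ?_ (fun t ht => hG t (Set.Ioo_subset_Icc_self ht))
      (hi a ha.le) (hi b (ha.le.trans hab))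
  · exact ((((Sm.const 3).mul (h.sm.dx.dx.pow 2)).add ((Sm.const 2).mul
      ((h.sm.pow 3).mul h.sm.dx.dx))).add (h.sm.pow 6)).sub
      ((Sm.const 6).mul ((h.sm.pow 2).mul (h.sm.dx.pow 2)))
  · exact (Sm.const (-2)).mul (h.sm.dx.mul h.sm.dx.dx)
  · intro t htm x
    have ht : 0 < t := ha.trans htm.1
    have d0 := fun y => h.sm.hasDx ht y
    have d1 := fun y => h.sm.dx.hasDx ht y
    have d2 := fun y => h.sm.dx.dx.hasDx ht y
    have d3 := fun y => h.sm.dx.dx.dx.hasDx ht y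
    refine flux_id (fun y => -2 * (dx (dx u) t y * dx (dx u) t y + dx u t y * dx (dx (dx u)) t y))
      (((h.sm.dx.hasDt ht x).fun_pow 2).fun_sub
        (((h.sm.hasDt ht x).fun_pow 4).const_mul (1 / 2)))
      ((((((d2 x).fun_pow 2).const_mul 3).fun_add
        ((((d0 x).fun_pow 3).fun_mul (d2 x)).const_mul 2)).fun_add ((d0 x).fun_pow 6)).fun_sub
        ((((d0 x).fun_pow 2).fun_mul ((d1 x).fun_pow 2)).const_mul 6))
      (fun y => ((d1 y).fun_mul (d2 y)).const_mul (-2))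
      ((((d2 x).fun_mul (d2 x)).fun_add ((d1 x).fun_mul (d3 x))).const_mul (-2)) ?_
    rw [h.eqn t ht, h.eqn1 ht]
    push_cast
    ring
  · intro t htm x
    have ht : 0 < t := ha.trans htm.1
    obtain ⟨hu0, hu1⟩ := h.sup_sq ht.le (hG t (Set.Ioo_subset_Icc_self htm)) x
    have hE : E2 u t x = u t x ^ 2 + dx u t x ^ 2 + dx (dx u) t x ^ 2 := rfl
    rw [hE]
    set p := u t x
    set q := dx u t x
    set r := dx (dx u) t x
    have hG2 : 1 ≤ G ^ 2 := one_le_pow₀ hG1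
    have hGG : G ≤ G ^ 2 := by nlinarith
    have hp4 : p ^ 4 ≤ G ^ 2 := by nlinarith [sq_nonneg p]
    set E := p ^ 2 + q ^ 2 + r ^ 2
    have hE0 : 0 ≤ E := by positivity
    have t0 : |3 * r ^ 2| ≤ 3 * (G ^ 2 * E) := by
      rw [abs_of_nonneg (by positivity)]; nlinarith [sq_nonneg p, sq_nonneg q]
    have t1 : |p ^ 2 * (p * r)| ≤ G ^ 2 * E := abs_mul_le_of
      (by rw [abs_of_nonneg (by positivity)]; linarith)
      (by rw [abs_le]; constructor <;> nlinarith [sq_nonneg (p + r), sq_nonneg (p - r), sq_nonneg q])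
    have t2 : |p ^ 4 * p ^ 2| ≤ G ^ 2 * E := abs_mul_le_of
      (by rw [abs_of_nonneg (by positivity)]; linarith)
      (by rw [abs_of_nonneg (by positivity)]; nlinarith [sq_nonneg r, sq_nonneg q])
    have t3 : |p ^ 2 * q ^ 2| ≤ G ^ 2 * E := abs_mul_le_of
      (by rw [abs_of_nonneg (by positivity)]; linarith)
      (by rw [abs_of_nonneg (by positivity)]; nlinarith [sq_nonneg r, sq_nonneg p])
    have t4 : |1 * (q * r)| ≤ G ^ 2 * E := abs_mul_le_of
      (by rw [abs_one]; linarith)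
      (by rw [abs_le]; constructor <;> nlinarith [sq_nonneg (q + r), sq_nonneg (q - r), sq_nonneg p])
    have e1 : |3 * r ^ 2 + 2 * (p ^ 3 * r) + p ^ 6 - 6 * (p ^ 2 * q ^ 2)| ≤ 12 * (G ^ 2 * E) := by
      have : 3 * r ^ 2 + 2 * (p ^ 3 * r) + p ^ 6 - 6 * (p ^ 2 * q ^ 2)
        = 3 * r ^ 2 + 2 * (p ^ 2 * (p * r)) + p ^ 4 * p ^ 2 - 6 * (p ^ 2 * q ^ 2) := by ring
      rw [this]
      rw [abs_le] at t0 t1 t2 t3 ⊢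
      constructor <;> linarith
    have e2 : |-2 * (q * r)| ≤ 2 * (G ^ 2 * E) := by
      rw [abs_le] at t4 ⊢
      constructor <;> linarith
    nlinarith [mul_nonneg (by positivity : (0:ℝ) ≤ G ^ 2) hE0]
  · intro t htm
    exact (h.sE2 (ha.trans htm.1).le).integrable

/-- The third conservation law, on an interval where the `H³` norm is bounded. -/
lemma Sol.cons2 {u : ℝ → ℝ → ℝ} (h : Sol u) {a b G G₃ : ℝ} (ha : 0 < a) (hab : a ≤ b) (hG1 : 1 ≤ G)
    (hG : ∀ t ∈ Set.Icc a b, ∫ x, E2 u t x ≤ G)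
    (hG₃ : ∀ t ∈ Set.Icc a b, ∫ x, E3 u t x ≤ G₃) :
    ∫ x, (dx (dx u) b x ^ 2 - 5 * (u b x ^ 2 * dx u b x ^ 2) + 1 / 2 * u b x ^ 6)
      = ∫ x, (dx (dx u) a x ^ 2 - 5 * (u a x ^ 2 * dx u a x ^ 2) + 1 / 2 * u a x ^ 6) := by
  have hsm : Sm (fun t x => dx (dx u) t x ^ 2 - 5 * (u t x ^ 2 * dx u t x ^ 2)
      + 1 / 2 * u t x ^ 6) :=
    ((h.sm.dx.dx.pow 2).sub ((Sm.const 5).mul ((h.sm.pow 2).mul (h.sm.dx.pow 2)))).add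
      ((Sm.const (1 / 2)).mul (h.sm.pow 6))
  have hi : ∀ t, 0 ≤ t → Integrable (fun x => dx (dx u) t x ^ 2
      - 5 * (u t x ^ 2 * dx u t x ^ 2) + 1 / 2 * u t x ^ 6) := fun t ht =>
    (((h.s2 ht).sq.sub (((h.sch t ht).sq.mul (h.s1 ht).sq).cmul 5)).add
      (((h.sch t ht).pow 5).cmul (1 / 2))).integrable
  refine flux_eq (ρ := fun t x => dx (dx u) t x ^ 2 - 5 * (u t x ^ 2 * dx u t x ^ 2)
      + 1 / 2 * u t x ^ 6)
    (F := fun t x => 3 * dx (dx (dx u)) t x ^ 2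
      + 10 * (u t x ^ 2 * (dx u t x * dx (dx (dx u)) t x))
      - 8 * (u t x ^ 2 * dx (dx u) t x ^ 2) - 10 * ((u t x * dx u t x) * (dx u t x * dx (dx u) t x))
      - 1 / 2 * dx u t x ^ 4 - 3 * (u t x ^ 5 * dx (dx u) t x)
      + 45 / 2 * (u t x ^ 4 * dx u t x ^ 2) - 9 / 8 * u t x ^ 8)
    (H := fun t x => -2 * (dx (dx u) t x * dx (dx (dx u)) t x)) (Q := E3 u)
    (C := 100 * G ^ 3) (G := G₃) ha.le hab hsm (hsm.contOn_Icc ha) ?_ ?_ ?_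
    (by positivity) ?_ (E3_nonneg u) ?_ (fun t ht => hG₃ t (Set.Ioo_subset_Icc_self ht))
      (hi a ha.le) (hi b (ha.le.trans hab))
  · have m0 := h.sm
    have m1 := h.sm.dx
    have m2 := h.sm.dx.dx
    have m3 := h.sm.dx.dx.dx
    exact ((((((((Sm.const 3).mul (m3.pow 2)).add ((Sm.const 10).mul ((m0.pow 2).mul
      (m1.mul m3)))).sub ((Sm.const 8).mul ((m0.pow 2).mul (m2.pow 2)))).sub
      ((Sm.const 10).mul ((m0.mul m1).mul (m1.mul m2)))).sub
      ((Sm.const (1 / 2)).mul (m1.pow 4))).sub ((Sm.const 3).mul ((m0.pow 5).mul m2))).add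
      ((Sm.const (45 / 2)).mul ((m0.pow 4).mul (m1.pow 2)))).sub
      ((Sm.const (9 / 8)).mul (m0.pow 8))
  · exact (Sm.const (-2)).mul (h.sm.dx.dx.mul h.sm.dx.dx.dx)
  · intro t htm x
    have ht : 0 < t := ha.trans htm.1
    have d0 := fun y => h.sm.hasDx ht y
    have d1 := fun y => h.sm.dx.hasDx ht y
    have d2 := fun y => h.sm.dx.dx.hasDx ht y
    have d3 := fun y => h.sm.dx.dx.dx.hasDx ht y
    have d4 := fun y => h.sm.dx.dx.dx.dx.hasDx ht y
    refine flux_id (fun y => -2 * (dx (dx (dx u)) t y * dx (dx (dx u)) t y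
        + dx (dx u) t y * dx (dx (dx (dx u))) t y))
      ((((h.sm.dx.dx.hasDt ht x).fun_pow 2).fun_sub
        ((((h.sm.hasDt ht x).fun_pow 2).fun_mul ((h.sm.dx.hasDt ht x).fun_pow 2)).const_mul 5)).fun_add
        (((h.sm.hasDt ht x).fun_pow 6).const_mul (1 / 2)))
      ((((((((((d3 x).fun_pow 2).const_mul 3).fun_add
        ((((d0 x).fun_pow 2).fun_mul ((d1 x).fun_mul (d3 x))).const_mul 10)).fun_sub
        ((((d0 x).fun_pow 2).fun_mul ((d2 x).fun_pow 2)).const_mul 8)).fun_sub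
        ((((d0 x).fun_mul (d1 x)).fun_mul ((d1 x).fun_mul (d2 x))).const_mul 10)).fun_sub
        (((d1 x).fun_pow 4).const_mul (1 / 2))).fun_sub
        ((((d0 x).fun_pow 5).fun_mul (d2 x)).const_mul 3)).fun_add
        ((((d0 x).fun_pow 4).fun_mul ((d1 x).fun_pow 2)).const_mul (45 / 2))).fun_sub
        (((d0 x).fun_pow 8).const_mul (9 / 8)))
      (fun y => ((d2 y).fun_mul (d3 y)).const_mul (-2))
      ((((d3 x).fun_mul (d3 x)).fun_add ((d2 x).fun_mul (d4 x))).const_mul (-2)) ?_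
    rw [h.eqn t ht, h.eqn1 ht, h.eqn2 ht]
    push_cast
    ring
  · intro t htm x
    have ht : 0 < t := ha.trans htm.1
    obtain ⟨hu0, hu1⟩ := h.sup_sq ht.le (hG t (Set.Ioo_subset_Icc_self htm)) x
    have hE : E3 u t x = u t x ^ 2 + dx u t x ^ 2 + dx (dx u) t x ^ 2
      + dx (dx (dx u)) t x ^ 2 := rfl
    rw [hE]
    set p := u t x
    set q := dx u t x
    set r := dx (dx u) t x
    set s := dx (dx (dx u)) t x
    have hG2 : G ≤ G ^ 2 := by nlinarith
    have hG3 : G ^ 2 ≤ G ^ 3 := by nlinarith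
    have hp4 : p ^ 4 ≤ G ^ 2 := by nlinarith [sq_nonneg p]
    have hp6 : p ^ 6 ≤ G ^ 3 := by
      have := pow_le_pow_left₀ (sq_nonneg p) hu0 3
      calc p ^ 6 = (p ^ 2) ^ 3 := by ring
        _ ≤ _ := this
    set E := p ^ 2 + q ^ 2 + r ^ 2 + s ^ 2
    have hE0 : 0 ≤ E := by positivity
    have prod : ∀ y z : ℝ, y ^ 2 + z ^ 2 ≤ 2 * E → |y * z| ≤ E := fun y z hyz => by
      rw [abs_le]; constructor <;> nlinarith [sq_nonneg (y + z), sq_nonneg (y - z)]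
    have q0 := sq_nonneg p
    have q1 := sq_nonneg q
    have q2 := sq_nonneg r
    have q3 := sq_nonneg s
    have hp2 : |p ^ 2| ≤ G ^ 3 := by rw [abs_of_nonneg q0]; linarith
    have hq2 : |q ^ 2| ≤ G ^ 3 := by rw [abs_of_nonneg q1]; linarith
    have hpq : |p * q| ≤ G ^ 3 := by
      rw [abs_le]; constructor <;> nlinarith [sq_nonneg (p + q), sq_nonneg (p - q)]
    have hp4' : |p ^ 4| ≤ G ^ 3 := by rw [abs_of_nonneg (by positivity)]; linarith
    have hp6' : |p ^ 6| ≤ G ^ 3 := by rw [abs_of_nonneg (by positivity)]; linarith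
    have h1 : |(1 : ℝ)| ≤ G ^ 3 := by rw [abs_one]; linarith
    have t0 := abs_mul_le_of h1 (prod s s (by simp only [E]; linarith))
    have t1 := abs_mul_le_of hp2 (prod q s (by simp only [E]; linarith))
    have t2 := abs_mul_le_of hp2 (prod r r (by simp only [E]; linarith))
    have t3 := abs_mul_le_of hpq (prod q r (by simp only [E]; linarith))
    have t4 := abs_mul_le_of hq2 (prod q q (by simp only [E]; linarith))
    have t5 := abs_mul_le_of hp4' (prod p r (by simp only [E]; linarith))
    have t6 := abs_mul_le_of hp4' (prod q q (by simp only [E]; linarith))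
    have t7 := abs_mul_le_of hp6' (prod p p (by simp only [E]; linarith))
    have t8 := abs_mul_le_of h1 (prod r s (by simp only [E]; linarith))
    have e1 : |3 * s ^ 2 + 10 * (p ^ 2 * (q * s)) - 8 * (p ^ 2 * r ^ 2) - 10 * ((p * q) * (q * r))
        - 1 / 2 * q ^ 4 - 3 * (p ^ 5 * r) + 45 / 2 * (p ^ 4 * q ^ 2) - 9 / 8 * p ^ 8|
        ≤ 60 * (G ^ 3 * E) := by
      have : 3 * s ^ 2 + 10 * (p ^ 2 * (q * s)) - 8 * (p ^ 2 * r ^ 2) - 10 * ((p * q) * (q * r))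
        - 1 / 2 * q ^ 4 - 3 * (p ^ 5 * r) + 45 / 2 * (p ^ 4 * q ^ 2) - 9 / 8 * p ^ 8
        = 3 * (1 * (s * s)) + 10 * (p ^ 2 * (q * s)) - 8 * (p ^ 2 * (r * r))
        - 10 * ((p * q) * (q * r))
        - 1 / 2 * (q ^ 2 * (q * q)) - 3 * (p ^ 4 * (p * r)) + 45 / 2 * (p ^ 4 * (q * q))
        - 9 / 8 * (p ^ 6 * (p * p)) := by ring
      rw [this]
      have hnn : 0 ≤ G ^ 3 * E := (abs_nonneg _).trans t0
      rw [abs_le] at t0 t1 t2 t3 t4 t5 t6 t7 ⊢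
      constructor <;> linarith
    have e2 : |-2 * (r * s)| ≤ 2 * (G ^ 3 * E) := by
      rw [abs_le] at t8 ⊢
      constructor <;> linarith
    have hnn : 0 ≤ G ^ 3 * E := (abs_nonneg _).trans t0
    linarith
  · intro t htm
    exact (h.sE3 (ha.trans htm.1).le).integrable

end MKdV

/-! ### Stability of the flow in L² -/

namespace MKdV

lemma Sm.shift {F : ℝ → ℝ → ℝ} (h : Sm F) {τ : ℝ} (hτ : 0 ≤ τ) : Sm (fun t x => F (t + τ) x) := by
  have : ContDiffOn ℝ (⊤ : ℕ∞) (fun p : ℝ × ℝ => (p.1 + τ, p.2)) (Set.Ioi 0 ×ˢ Set.univ) := by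
    fun_prop
  exact ContDiffOn.comp h this fun p hp => ⟨add_pos_of_pos_of_nonneg hp.1 hτ, trivial⟩

lemma Sol.shift {u : ℝ → ℝ → ℝ} (h : Sol u) {τ : ℝ} (hτ : 0 ≤ τ) :
    Sol (fun t x => u (t + τ) x) where
  sm := h.sm.shift hτ
  sch t ht := h.sch _ (by positivity)
  cont := by
    refine h.cont.comp (f := fun p : ℝ × ℝ => (p.1 + τ, p.2)) (by fun_prop) fun p hp =>
      ⟨add_nonneg hp.1 hτ, trivial⟩
  eqn t ht x := by
    have e : dt (fun t x => u (t + τ) x) t x = dt u (t + τ) x :=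
      deriv_comp_add_const (f := fun s => u s x) τ t
    rw [e, h.eqn _ (by positivity)]
    rfl

/-- Growth of the `L²` distance of two solutions, forward (`σ = 1`) or backward (`σ = -1`). -/
lemma diff_aux {u w : ℝ → ℝ → ℝ} (h : Sol u) (k : Sol w) {a b G σ : ℝ} (ha : 0 < a) (hab : a ≤ b)
    (hσ : σ ^ 2 = 1) (hG1 : 1 ≤ G)
    (hu : ∀ t ∈ Set.Icc a b, ∫ x, E2 u t x ≤ G) (hw : ∀ t ∈ Set.Icc a b, ∫ x, E2 w t x ≤ G) :
    ∫ x, σ * rexp (-(σ * (6 * G) * b)) * (w b x - u b x) ^ 2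
      ≤ ∫ x, σ * rexp (-(σ * (6 * G) * a)) * (w a x - u a x) ^ 2 := by
  have hd : Sm (fun t x => w t x - u t x) := k.sm.sub h.sm
  have hd1 : Sm (fun t x => dx w t x - dx u t x) := k.sm.dx.sub h.sm.dx
  have he : Sm (fun t _ => σ * rexp (-(σ * (6 * G) * t))) := Sm.time (by fun_prop)
  have hq : Sm (fun t x => w t x ^ 2 + w t x * u t x + u t x ^ 2) :=
    ((k.sm.pow 2).add (k.sm.mul h.sm)).add (h.sm.pow 2)
  have hρ : Sm (fun t x => σ * rexp (-(σ * (6 * G) * t)) * (w t x - u t x) ^ 2) :=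
    he.mul (hd.pow 2)
  have hi : ∀ t, 0 ≤ t → Integrable (fun x => σ * rexp (-(σ * (6 * G) * t))
      * (w t x - u t x) ^ 2) := fun t ht =>
    ((((k.sch t ht).sub (h.sch t ht)).sq).cmul _).integrable
  have hs1 : |σ| = 1 := by
    have := sq_abs σ
    rw [hσ] at this
    nlinarith [abs_nonneg σ]
  refine flux_le' (ρ := fun t x => σ * rexp (-(σ * (6 * G) * t)) * (w t x - u t x) ^ 2)
    (F := fun t x => σ * rexp (-(σ * (6 * G) * t)) * (3 * (dx w t x - dx u t x) ^ 2
      - (w t x ^ 2 + w t x * u t x + u t x ^ 2) * (w t x - u t x) ^ 2))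
    (H := fun t x => σ * rexp (-(σ * (6 * G) * t)) *
      (-2 * ((w t x - u t x) * (dx w t x - dx u t x))))
    (Q := fun t x => E2 u t x + E2 w t x)
    (C := rexp (6 * G * b) * (20 * G)) (G := 2 * G) ha.le hab hρ (hρ.contOn_Icc ha)
    (he.mul (((Sm.const 3).mul (hd1.pow 2)).sub (hq.mul (hd.pow 2))))
    (he.mul ((Sm.const (-2)).mul (hd.mul hd1))) ?_ (by positivity) ?_
    (fun t x => add_nonneg (E2_nonneg u t x) (E2_nonneg w t x)) ?_ ?_ (hi a ha.le)
    (hi b (ha.le.trans hab))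
  · intro t htm x
    have ht : 0 < t := ha.trans htm.1
    have d0 := fun y => (k.sm.hasDx ht y).fun_sub (h.sm.hasDx ht y)
    have d1 := fun y => (k.sm.dx.hasDx ht y).fun_sub (h.sm.dx.hasDx ht y)
    have d2 := fun y => (k.sm.dx.dx.hasDx ht y).fun_sub (h.sm.dx.dx.hasDx ht y)
    have dq := (((k.sm.hasDx ht x).fun_pow 2).fun_add ((k.sm.hasDx ht x).fun_mul
      (h.sm.hasDx ht x))).fun_add ((h.sm.hasDx ht x).fun_pow 2)
    have de : HasDerivAt (fun t => σ * rexp (-(σ * (6 * G) * t)))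
        (σ * (rexp (-(σ * (6 * G) * t)) * (-(σ * (6 * G))))) t := by
      have h1 : HasDerivAt (fun t : ℝ => -(σ * (6 * G) * t)) (-(σ * (6 * G))) t := by
        simpa using ((hasDerivAt_id t).const_mul (σ * (6 * G))).fun_neg
      exact (h1.exp).const_mul σ
    set e := rexp (-(σ * (6 * G) * t)) with hedef
    have e0 : 0 < e := Real.exp_pos _
    rw [dt_eq_of (F := fun t x => σ * rexp (-(σ * (6 * G) * t)) * (w t x - u t x) ^ 2)
        (de.fun_mul (((k.sm.hasDt ht x).fun_sub (h.sm.hasDt ht x)).fun_pow 2)),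
      dx_eq_of (F := fun t x => σ * rexp (-(σ * (6 * G) * t)) * (3 * (dx w t x - dx u t x) ^ 2
      - (w t x ^ 2 + w t x * u t x + u t x ^ 2) * (w t x - u t x) ^ 2))
        (((((d1 x).fun_pow 2).const_mul 3).fun_sub (dq.fun_mul ((d0 x).fun_pow 2))).const_mul
        (σ * e)), dxx_eq_of (F := fun t x => σ * rexp (-(σ * (6 * G) * t)) *
      (-2 * ((w t x - u t x) * (dx w t x - dx u t x))))
        (F₁ := fun y => σ * e * (-2 * ((dx w t y - dx u t y) * (dx w t y - dx u t y)
          + (w t y - u t y) * (dx (dx w) t y - dx (dx u) t y))))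
        (fun y => (((d0 y).fun_mul (d1 y)).const_mul (-2)).const_mul (σ * e))
        (((((d1 x).fun_mul (d1 x)).fun_add ((d0 x).fun_mul (d2 x))).const_mul (-2)).const_mul
        (σ * e)), h.eqn t ht, k.eqn t ht]
    obtain ⟨a0, a1⟩ := h.sup_sq ht.le (hu t (Set.Ioo_subset_Icc_self htm)) x
    obtain ⟨b0, b1⟩ := k.sup_sq ht.le (hw t (Set.Ioo_subset_Icc_self htm)) x
    set p := u t x
    set p1 := dx u t x
    set v := w t x
    set v1 := dx w t x
    have hprod : ∀ y z : ℝ, y ^ 2 ≤ G → z ^ 2 ≤ G → |y * z| ≤ G := fun y z h1 h2 => by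
      rw [abs_le]; constructor <;> nlinarith [sq_nonneg (y + z), sq_nonneg (y - z)]
    have hqx : |2 * (v * v1) + (v1 * p) + (v * p1) + 2 * (p * p1)| ≤ 6 * G := by
      have t1 := hprod v v1 b0 b1
      have t2 := hprod v1 p b1 a0
      have t3 := hprod v p1 b0 a1
      have t4 := hprod p p1 a0 a1
      rw [abs_le] at *
      constructor <;> linarith
    have hqs : -(σ * (2 * (v * v1) + (v1 * p) + (v * p1) + 2 * (p * p1))) ≤ 6 * G := by
      have := neg_abs_le (σ * (2 * (v * v1) + (v1 * p) + (v * p1) + 2 * (p * p1)))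
      rw [abs_mul, hs1, one_mul] at this
      linarith
    have key : 0 ≤ e * ((v - p) ^ 2 * (6 * G
        + σ * (2 * (v * v1) + (v1 * p) + (v * p1) + 2 * (p * p1)))) :=
      mul_nonneg e0.le (mul_nonneg (sq_nonneg _) (by linarith))
    rw [← sub_nonneg]
    refine key.trans (le_of_eq ?_)
    have hss : σ * (e * (-(σ * (6 * G)))) = - (e * (6 * G)) := by
      calc σ * (e * (-(σ * (6 * G)))) = -(σ ^ 2 * (e * (6 * G))) := by ring
        _ = _ := by rw [hσ]; ring
    rw [hss]
    push_cast
    ring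
  · intro t htm x
    have ht : 0 < t := ha.trans htm.1
    obtain ⟨a0, a1⟩ := h.sup_sq ht.le (hu t (Set.Ioo_subset_Icc_self htm)) x
    obtain ⟨b0, b1⟩ := k.sup_sq ht.le (hw t (Set.Ioo_subset_Icc_self htm)) x
    have hE : E2 u t x = u t x ^ 2 + dx u t x ^ 2 + dx (dx u) t x ^ 2 := rfl
    have hE' : E2 w t x = w t x ^ 2 + dx w t x ^ 2 + dx (dx w) t x ^ 2 := rfl
    have hexp : |σ * rexp (-(σ * (6 * G) * t))| ≤ rexp (6 * G * b) := by
      rw [abs_mul, hs1, one_mul, abs_of_pos (Real.exp_pos _), Real.exp_le_exp]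
      have h1 : -σ ≤ 1 := by have := neg_abs_le σ; linarith
      have h2 : -σ * (6 * G * t) ≤ 1 * (6 * G * t) := mul_le_mul_of_nonneg_right h1 (by positivity)
      have h3 : 6 * G * t ≤ 6 * G * b := mul_le_mul_of_nonneg_left htm.2.le (by positivity)
      nlinarith
    rw [abs_mul (σ * rexp (-(σ * (6 * G) * t))), abs_mul (σ * rexp (-(σ * (6 * G) * t))),
      ← mul_add, mul_assoc (rexp (6 * G * b))]
    refine mul_le_mul hexp ?_ (by positivity) (by positivity)
    rw [hE, hE']
    set p := u t x
    set p1 := dx u t x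
    set v := w t x
    set v1 := dx w t x
    set q := v ^ 2 + v * p + p ^ 2 with hqd
    have hq0 : 0 ≤ q := by rw [hqd]; nlinarith [sq_nonneg (v + p), sq_nonneg v, sq_nonneg p]
    have hq1 : q ≤ 3 * G := by rw [hqd]; nlinarith [sq_nonneg (v - p)]
    have hdd : (v - p) ^ 2 ≤ 2 * (p ^ 2 + v ^ 2) := by nlinarith [sq_nonneg (v + p)]
    have hdd1 : (v1 - p1) ^ 2 ≤ 2 * (p1 ^ 2 + v1 ^ 2) := by nlinarith [sq_nonneg (v1 + p1)]
    have hqd2 : q * (v - p) ^ 2 ≤ 3 * G * (2 * (p ^ 2 + v ^ 2)) :=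
      mul_le_mul hq1 hdd (sq_nonneg _) (by positivity)
    have hqd0 : 0 ≤ q * (v - p) ^ 2 := mul_nonneg hq0 (sq_nonneg _)
    have e1 : |3 * (v1 - p1) ^ 2 - q * (v - p) ^ 2| ≤ 6 * (p1 ^ 2 + v1 ^ 2)
        + 3 * G * (2 * (p ^ 2 + v ^ 2)) := by
      rw [abs_le]; constructor <;>
        linarith [sq_nonneg (v1 - p1), sq_nonneg p1, sq_nonneg v1, sq_nonneg p, sq_nonneg v]
    have e2 : |-2 * ((v - p) * (v1 - p1))| ≤ 2 * (p1 ^ 2 + v1 ^ 2) + 2 * (p ^ 2 + v ^ 2) := by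
      have c1 := sq_nonneg ((v - p) + (v1 - p1))
      have c2 := sq_nonneg ((v - p) - (v1 - p1))
      rw [abs_le]
      constructor <;> linarith
    have g1 : p1 ^ 2 + v1 ^ 2 ≤ G * (p1 ^ 2 + v1 ^ 2) := le_mul_of_one_le_left (by positivity) hG1
    have g2 : p ^ 2 + v ^ 2 ≤ G * (p ^ 2 + v ^ 2) := le_mul_of_one_le_left (by positivity) hG1
    have g3 : 0 ≤ G * (dx (dx u) t x ^ 2 + dx (dx w) t x ^ 2) := by positivity
    have g4 : 0 ≤ G * (p1 ^ 2 + v1 ^ 2) := by positivity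
    have g5 : 0 ≤ G * (p ^ 2 + v ^ 2) := by positivity
    linarith
  · intro t htm
    have ht : 0 < t := ha.trans htm.1
    exact ((h.sE2 ht.le).add (k.sE2 ht.le)).integrable
  · intro t htm
    have ht : 0 < t := ha.trans htm.1
    rw [integral_add (h.sE2 ht.le).integrable (k.sE2 ht.le).integrable]
    linarith [hu t (Set.Ioo_subset_Icc_self htm), hw t (Set.Ioo_subset_Icc_self htm)]

/-- The flow is Lipschitz in `L²`, forward and backward in time, as long as the `H²` norms are
bounded by `G`. -/
lemma diff_le {u w : ℝ → ℝ → ℝ} (h : Sol u) (k : Sol w) {a b G s t : ℝ} (ha : 0 < a)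
    (hG1 : 1 ≤ G)
    (hu : ∀ t ∈ Set.Icc a b, ∫ x, E2 u t x ≤ G) (hw : ∀ t ∈ Set.Icc a b, ∫ x, E2 w t x ≤ G)
    (hs : s ∈ Set.Icc a b) (ht : t ∈ Set.Icc a b) :
    ∫ x, (w t x - u t x) ^ 2 ≤ rexp (6 * G * (b - a)) * ∫ x, (w s x - u s x) ^ 2 := by
  have hexp : ∀ p q : ℝ, p ≤ q → q - p ≤ b - a → rexp (6 * G * q) * rexp (-(6 * G * p))
      ≤ rexp (6 * G * (b - a)) := fun p q hpq h' => by
    rw [← Real.exp_add, Real.exp_le_exp]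
    nlinarith
  rcases le_total s t with hst | hts
  · have hsub : ∀ r ∈ Set.Icc s t, r ∈ Set.Icc a b := fun r hr => ⟨hs.1.trans hr.1, hr.2.trans ht.2⟩
    have := diff_aux h k (ha.trans_le hs.1) hst (σ := 1) (by norm_num) hG1
      (fun r hr => hu r (hsub r hr)) (fun r hr => hw r (hsub r hr))
    rw [integral_const_mul, integral_const_mul] at this
    simp only [one_mul] at this
    set I := ∫ x, (w t x - u t x) ^ 2
    set J := ∫ x, (w s x - u s x) ^ 2
    have hJ : 0 ≤ J := integral_nonneg fun _ => sq_nonneg _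
    calc I = rexp (6 * G * t) * (rexp (-(6 * G * t)) * I) := by
          rw [← mul_assoc, ← Real.exp_add]; simp
      _ ≤ rexp (6 * G * t) * (rexp (-(6 * G * s)) * J) := by gcongr
      _ = rexp (6 * G * t) * rexp (-(6 * G * s)) * J := by ring
      _ ≤ _ := mul_le_mul_of_nonneg_right (hexp s t hst (by linarith [hs.1, ht.2])) hJ
  · have hsub : ∀ r ∈ Set.Icc t s, r ∈ Set.Icc a b := fun r hr => ⟨ht.1.trans hr.1, hr.2.trans hs.2⟩
    have := diff_aux h k (ha.trans_le ht.1) hts (σ := -1) (by norm_num) hG1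
      (fun r hr => hu r (hsub r hr)) (fun r hr => hw r (hsub r hr))
    rw [integral_const_mul, integral_const_mul] at this
    simp only [neg_mul, one_mul, neg_neg] at this
    set I := ∫ x, (w t x - u t x) ^ 2
    set J := ∫ x, (w s x - u s x) ^ 2
    have hJ : 0 ≤ J := integral_nonneg fun _ => sq_nonneg _
    calc I = rexp (-(6 * G * t)) * (rexp (6 * G * t) * I) := by
          rw [← mul_assoc, ← Real.exp_add]; simp
      _ ≤ rexp (-(6 * G * t)) * (rexp (6 * G * s) * J) :=
          mul_le_mul_of_nonneg_left (by linarith) (Real.exp_pos _).le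
      _ = rexp (6 * G * s) * rexp (-(6 * G * t)) * J := by ring
      _ ≤ _ := mul_le_mul_of_nonneg_right (hexp t s hts (by linarith [ht.1, hs.2])) hJ

end MKdV

/-! ### Control of the H³ norm by the H² norm -/

namespace MKdV

lemma Sm.space {F : ℝ → ℝ → ℝ} (h : Sm F) {p : ℝ} (hp : 0 < p) : Sm (fun _ x => F p x) := by
  have : ContDiffOn ℝ (⊤ : ℕ∞) (fun q : ℝ × ℝ => (p, q.2)) (Set.Ioi 0 ×ˢ Set.univ) := by fun_prop
  exact ContDiffOn.comp (g := Function.uncurry F) h this fun q _ => ⟨hp, trivial⟩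

/-- Time differences are controlled in `L²` by the time derivative. -/
lemma time_diff {u : ℝ → ℝ → ℝ} (hu : Sm u) {p q K R : ℝ} (hp : 0 < p) (hpq : p < q) (hR : 0 ≤ R)
    (hK : ∀ s ∈ Set.Icc p q, ∫ x in (-R)..R, dt u s x ^ 2 ≤ K) :
    ∫ x in (-R)..R, (u q x - u p x) ^ 2 ≤ 3 * (q - p) ^ 2 * K := by
  set τ := q - p with hτ
  have hτ0 : 0 < τ := by rw [hτ]; linarith
  have hd : Sm (fun s x => u s x - u p x) := hu.sub (hu.space hp)
  set h : ℝ → ℝ := fun s => ∫ x in (-R)..R, (u s x - u p x) ^ 2 with hh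
  set h' : ℝ → ℝ := fun s => ∫ x in (-R)..R, 2 * ((u s x - u p x) * dt u s x) with hh'
  have hder : ∀ s, 0 < s → HasDerivAt h (h' s) s := by
    intro s hs
    have := hasDerivAt_param (hd.pow 2) hs (-R) R
    convert this using 1
    refine intervalIntegral.integral_congr fun x _ => ?_
    show _ = dt (fun s x => (u s x - u p x) ^ 2) s x
    rw [dt_eq_of (F := fun s x => (u s x - u p x) ^ 2)
      (((hu.hasDt hs x).sub_const (u p x)).fun_pow 2)]
    push_cast; ring
  have hle : ∀ s ∈ Set.Icc p q, h' s ≤ h s / τ + τ * K := by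
    intro s hs
    have hs0 : 0 < s := hp.trans_le hs.1
    have i1 : IntervalIntegrable (fun x => (u s x - u p x) ^ 2 / τ) volume (-R) R :=
      (((hd.pow 2).cont hs0).div_const _).intervalIntegrable _ _
    have i2 : IntervalIntegrable (fun x => τ * dt u s x ^ 2) volume (-R) R :=
      (((hu.dt.pow 2).cont hs0).const_mul τ).intervalIntegrable _ _
    calc h' s ≤ ∫ x in (-R)..R, ((u s x - u p x) ^ 2 / τ + τ * dt u s x ^ 2) := by
          refine intervalIntegral.integral_mono_on (by linarith) ?_ (i1.add i2) fun x _ => ?_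
          · exact ((((hd.cont hs0).mul (hu.dt.cont hs0)).const_mul 2)).intervalIntegrable _ _
          · have : 0 ≤ ((u s x - u p x) - τ * dt u s x) ^ 2 / τ := by positivity
            have e : ((u s x - u p x) - τ * dt u s x) ^ 2 / τ = (u s x - u p x) ^ 2 / τ
              + τ * dt u s x ^ 2 - 2 * ((u s x - u p x) * dt u s x) := by
              field_simp; ring
            linarith
      _ = h s / τ + τ * ∫ x in (-R)..R, dt u s x ^ 2 := by
          rw [intervalIntegral.integral_add i1 i2, intervalIntegral.integral_div,
            intervalIntegral.integral_const_mul]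
      _ ≤ _ := by have := hK s hs; gcongr
  have hK0 : 0 ≤ K := le_trans (intervalIntegral.integral_nonneg (by linarith)
    fun x _ => sq_nonneg _) (hK p ⟨le_rfl, hpq.le⟩)
  have hder2 : ∀ s, 0 < s → HasDerivAt (fun s => rexp (-((s - p) / τ)) * h s - τ * K * (s - p))
      (rexp (-((s - p) / τ)) * (-(1 / τ)) * h s + rexp (-((s - p) / τ)) * h' s - τ * K * 1) s := by
    intro s hs
    have h1 : HasDerivAt (fun s => -((s - p) / τ)) (-(1 / τ)) s :=
      (((hasDerivAt_id s).sub_const p).div_const τ).fun_neg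
    exact (h1.exp.fun_mul (hder s hs)).fun_sub (((hasDerivAt_id s).sub_const p).const_mul _)
  have hanti := antitoneOn_of_deriv_nonpos (convex_Icc p q)
    (f := fun s => rexp (-((s - p) / τ)) * h s - τ * K * (s - p))
    (fun s hs => (hder2 s (hp.trans_le hs.1)).continuousAt.continuousWithinAt)
    (fun s hs => by
      rw [interior_Icc] at hs
      exact (hder2 s (hp.trans hs.1)).differentiableAt.differentiableWithinAt)
    (fun s hs => by
      rw [interior_Icc] at hs
      rw [(hder2 s (hp.trans hs.1)).deriv]
      have h1 := hle s (Set.Ioo_subset_Icc_self hs)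
      have e1 : rexp (-((s - p) / τ)) ≤ 1 := by
        rw [Real.exp_le_one_iff, neg_nonpos]
        exact div_nonneg (by linarith [hs.1]) hτ0.le
      have e2 : rexp (-((s - p) / τ)) * (h' s - h s / τ) ≤ 1 * (τ * K) := by
        calc _ ≤ rexp (-((s - p) / τ)) * (τ * K) :=
              mul_le_mul_of_nonneg_left (by linarith) (Real.exp_pos _).le
          _ ≤ _ := mul_le_mul_of_nonneg_right e1 (by positivity)
      have e3 : rexp (-((s - p) / τ)) * (-(1 / τ)) * h s + rexp (-((s - p) / τ)) * h' s
        = rexp (-((s - p) / τ)) * (h' s - h s / τ) := by ring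
      linarith)
  have := hanti (Set.left_mem_Icc.2 hpq.le) (Set.right_mem_Icc.2 hpq.le) hpq.le
  have hp0 : h p = 0 := by simp [hh]
  have hq1 : τ / τ = 1 := div_self hτ0.ne'
  simp only [hp0, sub_self, mul_zero, ← hτ, hq1] at this
  have e4 : h q = rexp 1 * (rexp (-1) * h q) := by rw [← mul_assoc, ← Real.exp_add]; simp
  calc h q = rexp 1 * (rexp (-1) * h q) := e4
    _ ≤ rexp 1 * (τ * K * τ) := mul_le_mul_of_nonneg_left (by linarith) (Real.exp_pos _).le
    _ ≤ 3 * (τ * K * τ) := by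
        gcongr
        linarith [Real.exp_one_lt_d9]
    _ = _ := by ring

/-- `L²` bounds on forward difference quotients pass to the time derivative. -/
lemma deriv_le_of_diff {u : ℝ → ℝ → ℝ} (hu : Sm u) {t K R τ₀ : ℝ} (ht : 0 < t) (hR : 0 ≤ R)
    (hτ₀ : 0 < τ₀)
    (hK : ∀ τ ∈ Set.Ioo 0 τ₀, ∫ x in (-R)..R, (u (t + τ) x - u t x) ^ 2 ≤ τ ^ 2 * K) :
    ∫ x in (-R)..R, dt u t x ^ 2 ≤ K := by
  set I := ∫ x in (-R)..R, dt u t x ^ 2 with hI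
  have hm : Sm (fun s x => (u s x - u t x) * dt u t x) :=
    (hu.sub (hu.space ht)).mul (hu.dt.space ht)
  have hd := hasDerivAt_param hm ht (-R) R
  have e : ∫ x in (-R)..R, dt (fun s x => (u s x - u t x) * dt u t x) t x = I := by
    refine intervalIntegral.integral_congr fun x _ => ?_
    show dt (fun s x => (u s x - u t x) * dt u t x) t x = _
    rw [dt_eq_of (F := fun s x => (u s x - u t x) * dt u t x)
      (((hu.hasDt ht x).sub_const (u t x)).mul_const (dt u t x))]
    ring
  rw [e] at hd
  have hs := hd.tendsto_slope_zero_right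
  have hle : I ≤ (K + I) / 2 := by
    refine le_of_tendsto hs ?_
    filter_upwards [Ioo_mem_nhdsGT hτ₀] with τ hτ
    have h0 : ∫ x in (-R)..R, (u t x - u t x) * dt u t x = 0 := by simp
    simp only [h0, sub_zero, smul_eq_mul]
    have htτ : 0 < t + τ := by linarith [hτ.1]
    have hk := hK τ hτ
    have c1 : Continuous fun x => u (t + τ) x - u t x := (hu.cont htτ).sub (hu.cont ht)
    have c2 := hu.dt.cont ht
    have key : ∫ x in (-R)..R, 2 * τ * ((u (t + τ) x - u t x) * dt u t x)
        ≤ ∫ x in (-R)..R, ((u (t + τ) x - u t x) ^ 2 + τ ^ 2 * dt u t x ^ 2) := by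
      refine intervalIntegral.integral_mono_on (by linarith)
        (((c1.mul c2).const_mul _).intervalIntegrable _ _)
        (((c1.pow 2).add ((c2.pow 2).const_mul _)).intervalIntegrable _ _) fun x _ => ?_
      nlinarith [sq_nonneg (u (t + τ) x - u t x - τ * dt u t x)]
    rw [intervalIntegral.integral_const_mul, intervalIntegral.integral_add
      (f := fun x => (u (t + τ) x - u t x) ^ 2) (g := fun x => τ ^ 2 * dt u t x ^ 2)
      ((c1.pow 2).intervalIntegrable _ _) (((c2.pow 2).const_mul _).intervalIntegrable _ _),
      intervalIntegral.integral_const_mul, ← hI] at key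
    set m := ∫ x in (-R)..R, (u (t + τ) x - u t x) * dt u t x
    have hτ0 := hτ.1
    have : 2 * τ * m ≤ τ ^ 2 * (K + I) := by linarith
    rw [inv_mul_le_iff₀ hτ0]
    have h2 : τ * (2 * m) ≤ τ * (τ * (K + I)) := by linarith
    have h3 := le_of_mul_le_mul_left h2 hτ0
    linarith
  linarith

lemma integral_le_of_interval {f : ℝ → ℝ} (h : Integrable f) {K : ℝ}
    (hK : ∀ R : ℝ, 0 ≤ R → ∫ x in (-R)..R, f x ≤ K) : ∫ x, f x ≤ K := by
  refine le_of_tendsto (tendsto_interval h) ?_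
  filter_upwards [Filter.eventually_ge_atTop 0] with R hR using hK R hR

/-- On a time interval where the `H²` norm is bounded, so is the `H³` norm. The flow is Lipschitz
in `L²` there, so difference quotients in time, and hence `∂ₜu`, are controlled by their values
near a single time, where a Baire argument bounds them. -/
lemma Sol.bdd3 {u : ℝ → ℝ → ℝ} (h : Sol u) {a b G : ℝ} (ha : 0 < a) (hab : a < b) (hG1 : 1 ≤ G)
    (hG : ∀ t ∈ Set.Icc a b, ∫ x, E2 u t x ≤ G) :
    ∃ G₃, ∀ t ∈ Set.Icc a b, ∫ x, E3 u t x ≤ G₃ := by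
  have hpos : ∀ t ∈ Set.Icc a b, 0 < t := fun t ht => ha.trans_le ht.1
  set m := (a + b) / 2 with hm
  obtain ⟨n, t₀, ht₀, hclose, r, hr, hn⟩ := baire_closed (isClosed_Icc (a := a) (b := b))
    (x₀ := m) (r₀ := (b - a) / 4) ⟨by rw [hm]; linarith, by rw [hm]; linarith⟩ (by linarith)
    (A := fun n : ℕ => {t | ∫ x, dx (dx (dx u)) t x ^ 2 ≤ n})
    (fun n => isClosed_sublevel (h.sm.dx.dx.dx.pow 2) (fun _ _ => sq_nonneg _)
      (fun t ht => (h.s3 ht.le).sq.integrable) isClosed_Icc hpos n)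
    (fun t _ => exists_nat_ge (∫ x, dx (dx (dx u)) t x ^ 2))
  have hc := abs_lt.1 hclose
  -- relation between `∂ₜu` and `u_xxx`
  have sut : ∀ t, 0 < t → Sch (dt u t) := fun t ht => by
    have : dt u t = fun x => -(dx (dx (dx u)) t x + 3 * u t x ^ 2 * dx u t x) :=
      funext fun y => h.eqn t ht y
    rw [this]
    exact ((h.s3 ht.le).add (((h.sch t ht.le).sq.cmul 3).mul (h.s1 ht.le))).neg
  have rel : ∀ t ∈ Set.Icc a b, (∫ x, dt u t x ^ 2) ≤ 2 * (∫ x, dx (dx (dx u)) t x ^ 2)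
      + 18 * G ^ 3 ∧ (∫ x, dx (dx (dx u)) t x ^ 2) ≤ 2 * (∫ x, dt u t x ^ 2) + 18 * G ^ 3 := by
    intro t ht
    have ht0 := hpos t ht
    have i1 := (sut t ht0).sq.integrable
    have i2 := (h.s3 ht0.le).sq.integrable
    have i3 := (h.sE2 ht0.le).integrable
    have hg := hG t ht
    have pt : ∀ x, (3 * u t x ^ 2 * dx u t x) ^ 2 ≤ 9 * G ^ 2 * E2 u t x := fun x => by
      obtain ⟨a0, a1⟩ := h.sup_sq ht0.le hg x
      have hE : E2 u t x = u t x ^ 2 + dx u t x ^ 2 + dx (dx u) t x ^ 2 := rfl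
      have h4 : (u t x ^ 2) ^ 2 ≤ G ^ 2 := pow_le_pow_left₀ (sq_nonneg _) a0 2
      have h5 : dx u t x ^ 2 ≤ E2 u t x := by rw [hE]; nlinarith [sq_nonneg (u t x), sq_nonneg (dx (dx u) t x)]
      have := mul_le_mul h4 h5 (sq_nonneg _) (sq_nonneg _)
      nlinarith
    have hmul : ∫ x, 18 * G ^ 2 * E2 u t x ≤ 18 * G ^ 3 := by
      rw [integral_const_mul]
      have : 18 * G ^ 2 * (∫ x, E2 u t x) ≤ 18 * G ^ 2 * G := by gcongr
      linarith
    constructor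
    · have : ∫ x, dt u t x ^ 2 ≤ ∫ x, (2 * dx (dx (dx u)) t x ^ 2 + 18 * G ^ 2 * E2 u t x) := by
        refine integral_mono i1 ((i2.const_mul 2).add (i3.const_mul _)) fun x => ?_
        have := pt x
        simp only [h.eqn t ht0 x]
        nlinarith [sq_nonneg (dx (dx (dx u)) t x - 3 * u t x ^ 2 * dx u t x)]
      rw [integral_add (i2.const_mul 2) (i3.const_mul _), integral_const_mul] at this
      linarith
    · have : ∫ x, dx (dx (dx u)) t x ^ 2 ≤ ∫ x, (2 * dt u t x ^ 2 + 18 * G ^ 2 * E2 u t x) := by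
        refine integral_mono i2 ((i1.const_mul 2).add (i3.const_mul _)) fun x => ?_
        have := pt x
        have e : dx (dx (dx u)) t x = -dt u t x - 3 * u t x ^ 2 * dx u t x := by
          rw [h.eqn t ht0 x]; ring
        simp only [e]
        nlinarith [sq_nonneg (dt u t x - 3 * u t x ^ 2 * dx u t x)]
      rw [integral_add (i1.const_mul 2) (i3.const_mul _), integral_const_mul] at this
      linarith
  set K := 2 * (n : ℝ) + 18 * G ^ 3 with hKdef
  have hnear : ∀ s ∈ Set.Icc a b, |s - t₀| < r → ∫ x, dt u s x ^ 2 ≤ K := fun s hs hsr => by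
    have h1 : ∫ x, dx (dx (dx u)) s x ^ 2 ≤ n := hn s hs hsr
    have := (rel s hs).1
    rw [hKdef]; linarith
  set L := rexp (6 * G * (b - a)) with hL
  set K' := L * (3 * K) with hK'
  -- bound on `∂ₜu` for `t < b`
  have hbd : ∀ t ∈ Set.Ico a b, ∫ x, dt u t x ^ 2 ≤ K' := by
    intro t ht
    have ht0 : 0 < t := ha.trans_le ht.1
    refine integral_le_of_interval (sut t ht0).sq.integrable fun R hR => ?_
    refine deriv_le_of_diff h.sm ht0 hR (τ₀ := min r (min ((b - a) / 8) (b - t)))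
      (by have := ht.2; have : 0 < b - t := by linarith
          have : 0 < b - a := by linarith
          positivity) fun τ hτ => ?_
    have hτ0 := hτ.1
    have hτr : τ < r := hτ.2.trans_le (min_le_left _ _)
    have hτb : τ < (b - a) / 8 := hτ.2.trans_le ((min_le_right _ _).trans (min_le_left _ _))
    have hτt : τ < b - t := hτ.2.trans_le ((min_le_right _ _).trans (min_le_right _ _))
    have k := h.shift hτ0.le
    have st : ∀ s, 0 ≤ s → Sch (fun x => u (s + τ) x - u s x) := fun s hs =>
      (h.sch (s + τ) (by positivity)).sub (h.sch s hs)
    have hshift : ∀ s ∈ Set.Icc a (b - τ), ∫ x, E2 (fun t x => u (t + τ) x) s x ≤ G :=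
      fun s hs => hG (s + τ) ⟨by linarith [hs.1], by linarith [hs.2]⟩
    have hd := diff_le h k (a := a) (b := b - τ) (s := t₀) (t := t) ha hG1
      (fun s hs => hG s ⟨hs.1, by linarith [hs.2]⟩) hshift
      ⟨ht₀.1, by rw [hm] at hc; linarith⟩ ⟨ht.1, by linarith⟩
    have hT : ∫ x, (u (t₀ + τ) x - u t₀ x) ^ 2 ≤ 3 * τ ^ 2 * K := by
      have ht₀0 := hpos t₀ ht₀
      refine integral_le_of_interval (st t₀ ht₀0.le).sq.integrable fun R hR => ?_
      have := time_diff h.sm (p := t₀) (q := t₀ + τ) (K := K) (R := R) ht₀0 (by linarith) hR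
        (fun s hs => ?_)
      · simpa using this
      · have hsI : s ∈ Set.Icc a b :=
          ⟨ht₀.1.trans hs.1, by rw [hm] at hc; linarith [hs.2]⟩
        refine (interval_le_integral (sut s (hpos s hsI)).sq.integrable
          (fun _ => sq_nonneg _) (by linarith)).trans (hnear s hsI ?_)
        rw [abs_lt]; constructor <;> linarith [hs.1, hs.2]
    calc ∫ x in (-R)..R, (u (t + τ) x - u t x) ^ 2
        ≤ ∫ x, (u (t + τ) x - u t x) ^ 2 :=
          interval_le_integral (st t ht0.le).sq.integrable (fun _ => sq_nonneg _) (by linarith)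
      _ ≤ rexp (6 * G * (b - τ - a)) * ∫ x, (u (t₀ + τ) x - u t₀ x) ^ 2 := hd
      _ ≤ L * (3 * τ ^ 2 * K) := by
          refine mul_le_mul ?_ hT (integral_nonneg fun _ => sq_nonneg _) (Real.exp_pos _).le
          rw [hL, Real.exp_le_exp]
          nlinarith
      _ = τ ^ 2 * K' := by rw [hK']; ring
  refine ⟨max (G + (2 * K' + 18 * G ^ 3)) (∫ x, E3 u b x), fun t ht => ?_⟩
  rcases eq_or_lt_of_le ht.2 with e | hlt
  · rw [e]; exact le_max_right _ _
  · refine le_trans ?_ (le_max_left _ _)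
    have ht0 := hpos t ht
    have : ∫ x, E3 u t x = (∫ x, E2 u t x) + ∫ x, dx (dx (dx u)) t x ^ 2 :=
      integral_add (h.sE2 ht0.le).integrable (h.s3 ht0.le).sq.integrable
    rw [this]
    linarith [hG t ht, (rel t ht).2, hbd t ⟨ht.1, hlt⟩]

end MKdV

/-! ### Global H² bound and conservation of the mean -/

namespace MKdV

/-- The one-dimensional Sobolev inequality with a weight. -/
lemma Sch.sobolev' {f : ℝ → ℝ} (hf : Sch f) {l : ℝ} (hl : 0 < l) (x : ℝ) :
    f x ^ 2 ≤ l⁻¹ * (∫ y, f y ^ 2) + l * ∫ y, _root_.deriv f y ^ 2 := by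
  have hd := hf.deriv
  have h1 : ∫ y in Set.Iic x, 2 * f y * _root_.deriv f y = f x ^ 2 - 0 := by
    refine integral_Iic_of_hasDerivAt_of_tendsto' (f := fun y => f y ^ 2) (fun y _ => ?_) ?_ ?_
    · simpa using (hf.hasDerivAt y).fun_pow 2
    · have : Sch (fun y => 2 * f y * _root_.deriv f y) := (hf.cmul 2).mul hd
      exact this.integrable.integrableOn
    · simpa using hf.tendsto.pow 2
  have i2 := ((hf.sq.cmul l⁻¹).add (hd.sq.cmul l)).integrable
  rw [← integral_const_mul, ← integral_const_mul, ← integral_add (hf.sq.cmul l⁻¹).integrable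
    (hd.sq.cmul l).integrable]
  calc f x ^ 2 = ∫ y in Set.Iic x, 2 * f y * _root_.deriv f y := by rw [h1]; ring
    _ ≤ ∫ y in Set.Iic x, (l⁻¹ * f y ^ 2 + l * _root_.deriv f y ^ 2) := by
        refine setIntegral_mono ((hf.cmul 2).mul hd).integrable.integrableOn i2.integrableOn ?_
        intro y
        have := mul_nonneg (inv_nonneg.2 hl.le) (sq_nonneg (f y - l * _root_.deriv f y))
        have e : l⁻¹ * (f y - l * _root_.deriv f y) ^ 2
          = l⁻¹ * f y ^ 2 + l * _root_.deriv f y ^ 2 - 2 * f y * _root_.deriv f y := by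
          field_simp; ring
        simp only
        linarith
    _ ≤ _ := setIntegral_le_integral i2 (Filter.Eventually.of_forall fun y => by positivity)

/-- The a priori bound on `‖u_x‖²` from the mass and the energy. -/
def Pbd (B : ℝ) : ℝ := 2 * B + B ^ 2 * (B + 1)

/-- The a priori bound on the squared `H²` norm at one time in terms of its value at another. -/
def Tbd (B : ℝ) : ℝ :=
  max B 0 + Pbd (max B 0) + (max B 0 + 1 / 2 * max B 0 ^ 3
    + 5 * ((max B 0 + Pbd (max B 0)) * Pbd (max B 0)))

lemma Tbd_mono : Monotone Tbd := by
  intro p q hpq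
  have h0 : 0 ≤ max p 0 := le_max_right _ _
  have h1 : max p 0 ≤ max q 0 := max_le_max_right 0 hpq
  unfold Tbd Pbd
  gcongr

lemma Sol.E2_int {u : ℝ → ℝ → ℝ} (h : Sol u) {t : ℝ} (ht : 0 ≤ t) : ∫ x, E2 u t x
      = (∫ x, u t x ^ 2) + (∫ x, dx u t x ^ 2) + ∫ x, dx (dx u) t x ^ 2 := by
  unfold E2
  rw [← integral_add (h.sch t ht).sq.integrable (h.s1 ht).sq.integrable,
    ← integral_add ((h.sch t ht).sq.add (h.s1 ht).sq).integrable (h.s2 ht).sq.integrable]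

/-- Where the `H²` norm is bounded, the conservation laws bound it by its value at any one time,
independently of the length of the interval. -/
lemma Sol.prop2 {u : ℝ → ℝ → ℝ} (h : Sol u) (a b : ℝ) (ha : 0 < a) (hab : a ≤ b)
    (hG : ∃ G, ∀ t ∈ Set.Icc a b, ∫ x, E2 u t x ≤ G) :
    ∀ s ∈ Set.Icc a b, ∀ t ∈ Set.Icc a b, ∫ x, E2 u t x ≤ Tbd (∫ x, E2 u s x) := by
  intro s hs t ht
  have hB0 : ∀ r, 0 ≤ ∫ x, E2 u r x := fun r => integral_nonneg fun x => E2_nonneg u r x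
  have hmax : max (∫ x, E2 u s x) 0 = ∫ x, E2 u s x := max_eq_left (hB0 s)
  have n0 : ∀ r, 0 ≤ ∫ x, u r x ^ 2 := fun r => integral_nonneg fun x => sq_nonneg _
  have n1 : ∀ r, 0 ≤ ∫ x, dx u r x ^ 2 := fun r => integral_nonneg fun x => sq_nonneg _
  have n2 : ∀ r, 0 ≤ ∫ x, dx (dx u) r x ^ 2 := fun r => integral_nonneg fun x => sq_nonneg _
  have hpos : ∀ r ∈ Set.Icc a b, 0 < r := fun r hr => ha.trans_le hr.1
  rcases eq_or_lt_of_le hab with e | hlt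
  · have : t = s := by
      have := hs.1; have := hs.2; have := ht.1; have := ht.2; linarith
    rw [this]
    unfold Tbd Pbd
    rw [hmax]
    have := hB0 s
    have : 0 ≤ (∫ x, E2 u s x) ^ 3 := by positivity
    set B := ∫ x, E2 u s x
    have : 0 ≤ 2 * B + B ^ 2 * (B + 1) + (B + 1 / 2 * B ^ 3
      + 5 * ((B + (2 * B + B ^ 2 * (B + 1))) * (2 * B + B ^ 2 * (B + 1)))) := by positivity
    linarith
  obtain ⟨G', hG'⟩ := hG
  set G := max G' 1
  have hG1 : 1 ≤ G := le_max_right _ _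
  have hG : ∀ t ∈ Set.Icc a b, ∫ x, E2 u t x ≤ G := fun t ht => (hG' t ht).trans (le_max_left _ _)
  obtain ⟨G₃, hG₃⟩ := h.bdd3 ha hlt hG1 hG
  have c0 : ∀ r ∈ Set.Icc a b, ∫ x, u r x ^ 2 = ∫ x, u a x ^ 2 := fun r hr =>
    h.cons0 ha.le hr.1 hG1 fun q hq => by
      have hq' : q ∈ Set.Icc a b := ⟨hq.1.le, hq.2.le.trans hr.2⟩
      have hq0 := (hpos q hq').le
      have := h.E2_int hq0
      rw [integral_add (h.sch q hq0).sq.integrable (h.s1 hq0).sq.integrable]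
      linarith [hG q hq', n2 q]
  have c1 : ∀ r ∈ Set.Icc a b, _ := fun r hr =>
    h.cons1 ha hr.1 hG1 fun q hq => hG q ⟨hq.1, hq.2.trans hr.2⟩
  have c2 : ∀ r ∈ Set.Icc a b, _ := fun r hr =>
    h.cons2 ha hr.1 hG1 (fun q hq => hG q ⟨hq.1, hq.2.trans hr.2⟩)
      fun q hq => hG₃ q ⟨hq.1, hq.2.trans hr.2⟩
  have e0 : ∫ x, u t x ^ 2 = ∫ x, u s x ^ 2 := (c0 t ht).trans (c0 s hs).symm
  have e1 := (c1 t ht).trans (c1 s hs).symm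
  have e2 := (c2 t ht).trans (c2 s hs).symm
  have hs0 := (hpos s hs).le
  have ht0 := (hpos t ht).le
  have i0 := fun r (hr : 0 ≤ r) => (h.sch r hr).sq.integrable
  have i1 := fun r (hr : 0 ≤ r) => (h.s1 hr).sq.integrable
  have i2 := fun r (hr : 0 ≤ r) => (h.s2 hr).sq.integrable
  have i4 := fun r (hr : 0 ≤ r) => (((h.sch r hr).pow 3).cmul (1 / 2)).integrable
  have i6 := fun r (hr : 0 ≤ r) => (((h.sch r hr).pow 5).cmul (1 / 2)).integrable
  have i21 := fun r (hr : 0 ≤ r) => (((h.sch r hr).sq.mul (h.s1 hr).sq).cmul 5).integrable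
  have i7 := fun r (hr : 0 ≤ r) =>
    ((h.s2 hr).sq.sub (((h.sch r hr).sq.mul (h.s1 hr).sq).cmul 5)).integrable
  rw [integral_sub (i1 t ht0) (i4 t ht0), integral_sub (i1 s hs0) (i4 s hs0)] at e1
  rw [integral_add (i7 t ht0) (i6 t ht0), integral_add (i7 s hs0) (i6 s hs0),
    integral_sub (i2 t ht0) (i21 t ht0), integral_sub (i2 s hs0) (i21 s hs0)] at e2
  have p4 : ∀ r, 0 ≤ ∫ x, 1 / 2 * u r x ^ 4 := fun r => integral_nonneg fun x => by positivity
  have p6 : ∀ r, 0 ≤ ∫ x, 1 / 2 * u r x ^ 6 := fun r => integral_nonneg fun x => by positivity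
  have p21 : ∀ r, 0 ≤ ∫ x, 5 * (u r x ^ 2 * dx u r x ^ 2) :=
    fun r => integral_nonneg fun x => by positivity
  have Es := h.E2_int hs0
  have Et := h.E2_int ht0
  unfold Tbd
  rw [hmax]
  set B := ∫ x, E2 u s x
  have hB := hB0 s
  have N0s : ∫ x, u s x ^ 2 ≤ B := by linarith [n1 s, n2 s]
  have N1s : ∫ x, dx u s x ^ 2 ≤ B := by linarith [n0 s, n2 s]
  have N2s : ∫ x, dx (dx u) s x ^ 2 ≤ B := by linarith [n0 s, n1 s]
  -- the `Ḣ¹` norm at time `t`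
  have q4 : ∫ x, 1 / 2 * u t x ^ 4 ≤ 1 / 2 * (∫ x, dx u t x ^ 2) + 1 / 2 * (B ^ 2 * (B + 1)) := by
    have hl : (0 : ℝ) < (B + 1)⁻¹ := by positivity
    have hsob := fun x => (h.sch t ht0).sobolev' hl x
    set S := (B + 1)⁻¹⁻¹ * (∫ y, u t y ^ 2) + (B + 1)⁻¹ * ∫ y, deriv (u t) y ^ 2 with hS
    have hN1 : ∫ y, deriv (u t) y ^ 2 = ∫ x, dx u t x ^ 2 := rfl
    have : ∫ x, 1 / 2 * u t x ^ 4 ≤ ∫ x, 1 / 2 * S * u t x ^ 2 := by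
      refine integral_mono (i4 t ht0) ((i0 t ht0).const_mul _) fun x => ?_
      have := mul_le_mul_of_nonneg_right (hsob x) (sq_nonneg (u t x))
      simp only
      linarith [show u t x ^ 4 = u t x ^ 2 * u t x ^ 2 by ring]
    rw [integral_const_mul (1 / 2 * S)] at this
    refine this.trans ?_
    rw [hS, e0, hN1, inv_inv]
    have n0s := n0 s
    set N0 := ∫ x, u s x ^ 2
    have N1t := n1 t
    set N1 := ∫ x, dx u t x ^ 2
    have r1 : (B + 1)⁻¹ * N1 * N0 ≤ N1 := by
      have : (B + 1)⁻¹ * N0 ≤ 1 := by rw [inv_mul_le_iff₀ (by positivity)]; linarith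
      nlinarith
    have r2 : (B + 1) * N0 * N0 ≤ (B + 1) * B * B := by gcongr
    nlinarith
  have N1t : ∫ x, dx u t x ^ 2 ≤ Pbd B := by
    unfold Pbd
    linarith [p4 s]
  have hP0 : 0 ≤ Pbd B := by unfold Pbd; positivity
  -- the `Ḣ²` norm at time `t`
  have q6 : ∫ x, 1 / 2 * u s x ^ 6 ≤ 1 / 2 * B ^ 3 := by
    have : ∫ x, 1 / 2 * u s x ^ 6 ≤ ∫ x, 1 / 2 * B ^ 2 * u s x ^ 2 := by
      refine integral_mono (i6 s hs0) ((i0 s hs0).const_mul _) fun x => ?_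
      have hx := (h.sup_sq hs0 le_rfl x).1
      have h2 := mul_le_mul_of_nonneg_right (pow_le_pow_left₀ (sq_nonneg _) hx 2)
        (sq_nonneg (u s x))
      simp only
      linarith [show u s x ^ 6 = (u s x ^ 2) ^ 2 * u s x ^ 2 by ring]
    rw [integral_const_mul (1 / 2 * B ^ 2)] at this
    have h3 := mul_le_mul_of_nonneg_left N0s (by positivity : 0 ≤ 1 / 2 * B ^ 2)
    linarith [show 1 / 2 * B ^ 2 * B = 1 / 2 * B ^ 3 by ring]
  have q21 : ∫ x, 5 * (u t x ^ 2 * dx u t x ^ 2) ≤ 5 * ((B + Pbd B) * Pbd B) := by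
    have hsob := fun x => (h.sch t ht0).sobolev x
    have hN1 : ∫ y, deriv (u t) y ^ 2 = ∫ x, dx u t x ^ 2 := rfl
    have : ∫ x, 5 * (u t x ^ 2 * dx u t x ^ 2) ≤ ∫ x, 5 * (B + Pbd B) * dx u t x ^ 2 := by
      refine integral_mono (i21 t ht0) ((i1 t ht0).const_mul _) fun x => ?_
      have hx : u t x ^ 2 ≤ B + Pbd B := by
        have := hsob x
        rw [hN1] at this
        linarith
      have := mul_le_mul_of_nonneg_right hx (sq_nonneg (dx u t x))
      simp only
      linarith
    rw [integral_const_mul (5 * (B + Pbd B))] at this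
    have h3 := mul_le_mul_of_nonneg_left N1t (by positivity : 0 ≤ 5 * (B + Pbd B))
    linarith
  rw [Et, e0]
  linarith [p6 t, p21 s]

/-- The `H²` norm of a classical solution is bounded, uniformly for `t > 0`. -/
lemma Sol.bddE2 {u : ℝ → ℝ → ℝ} (h : Sol u) : ∃ G, 1 ≤ G ∧ ∀ t, 0 < t → ∫ x, E2 u t x ≤ G := by
  have hb := baire_propagation (B := fun t => ∫ x, E2 u t x) Tbd_mono
    (fun S hS hpos c => isClosed_sublevel h.smE2 (E2_nonneg u)
      (fun t ht => (h.sE2 ht.le).integrable) hS hpos c) h.prop2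
  refine ⟨max 1 (Tbd (∫ x, E2 u 1 x)), le_max_left _ _, fun t ht => le_trans ?_ (le_max_right _ _)⟩
  have hm : 0 < min t 1 := lt_min ht one_pos
  have hle : min t 1 ≤ max t 1 := (min_le_left _ _).trans (le_max_left _ _)
  exact h.prop2 _ _ hm hle (hb _ _ hm hle) 1 ⟨min_le_right _ _, le_max_right _ _⟩ t
    ⟨min_le_left _ _, le_max_left _ _⟩

/-- One side of the conservation of the mean, for each sign `σ`. The flux `u_x` is only known to
be in `L²`, which is why `flux_le` tolerates growth like `√R`. -/
lemma Sol.mass_le {u : ℝ → ℝ → ℝ} (h : Sol u) {T σ : ℝ} (hT : 0 ≤ T) (hσ : |σ| = 1) :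
    ∫ x, σ * u T x ≤ ∫ x, σ * u 0 x := by
  obtain ⟨G, hG1, hG⟩ := h.bddE2
  refine flux_le (ρ := fun t x => σ * u t x) (F := fun t x => -σ * u t x ^ 3)
    (H := fun t x => -σ * dx u t x) (C := (1 + G) * G + (2 + G)) le_rfl hT
    ((Sm.const σ).mul h.sm) ?_ ((Sm.const (-σ)).mul (h.sm.pow 3)) ((Sm.const (-σ)).mul h.sm.dx)
    ?_ ?_ ((h.sch 0 le_rfl).cmul σ).integrable ((h.sch T hT).cmul σ).integrable
  · exact continuousOn_const.mul (h.cont.mono (Set.prod_mono (fun _ hs => hs.1) le_rfl))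
  · intro t ht x
    have ht0 := ht.1
    rw [dt_eq_of (F := fun t x => σ * u t x) ((h.sm.hasDt ht0 x).const_mul σ),
      dx_eq_of (F := fun t x => -σ * u t x ^ 3) (((h.sm.hasDx ht0 x).fun_pow 3).const_mul (-σ)),
      dxx_eq_of (F := fun t x => -σ * dx u t x) (F₁ := fun y => -σ * dx (dx u) t y)
        (fun y => (h.sm.dx.hasDx ht0 y).const_mul (-σ))
        ((h.sm.dx.dx.hasDx ht0 x).const_mul (-σ)), h.eqn t ht0]
    apply le_of_eq
    push_cast
    ring
  · intro t ht R hR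
    have ht0 := ht.1
    have hg := hG t ht0
    have hR0 : 0 < R := by linarith
    have hR1 : 1 ≤ √R := Real.one_le_sqrt.2 hR
    have iE := (h.sE2 ht0.le).integrable
    have cE := (h.smE2).cont ht0
    have hm : ∀ x, |-σ * u t x ^ 3| + |-σ * dx u t x|
        ≤ (1 + G) * E2 u t x + ((√R)⁻¹ / 2 + √R / 2 * E2 u t x) := by
      intro x
      have hE : E2 u t x = u t x ^ 2 + dx u t x ^ 2 + dx (dx u) t x ^ 2 := rfl
      rw [abs_mul, abs_mul, abs_neg, hσ, one_mul, one_mul, abs_pow]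
      have hsup := (h.sup_sq ht0.le hg x).1
      have hu1 : |u t x| ≤ 1 + G := by
        nlinarith [sq_abs (u t x), abs_nonneg (u t x), sq_nonneg (|u t x| - 1)]
      have a1 : |u t x| ^ 3 ≤ (1 + G) * E2 u t x := by
        have h5 : |u t x| ^ 2 ≤ E2 u t x := by
          rw [sq_abs, hE]; nlinarith [sq_nonneg (dx u t x), sq_nonneg (dx (dx u) t x)]
        calc |u t x| ^ 3 = |u t x| * |u t x| ^ 2 := by ring
          _ ≤ (1 + G) * E2 u t x := mul_le_mul hu1 h5 (by positivity) (by positivity)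
      have a2 : |dx u t x| ≤ (√R)⁻¹ / 2 + √R / 2 * E2 u t x := by
        have h5 : |dx u t x| ^ 2 ≤ E2 u t x := by
          rw [sq_abs, hE]; nlinarith [sq_nonneg (u t x), sq_nonneg (dx (dx u) t x)]
        have h6 := mul_nonneg (by positivity : 0 ≤ (√R)⁻¹) (sq_nonneg (1 - √R * |dx u t x|))
        have e : (√R)⁻¹ * (1 - √R * |dx u t x|) ^ 2
          = (√R)⁻¹ + √R * |dx u t x| ^ 2 - 2 * |dx u t x| := by field_simp; ring
        have h7 := mul_le_mul_of_nonneg_left h5 (by positivity : 0 ≤ √R)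
        linarith
      linarith
    have c1 : Continuous fun x => |-σ * u t x ^ 3| + |-σ * dx u t x| :=
      ((((h.sm.pow 3).cont ht0).const_mul _).abs).add (((h.sm.dx.cont ht0).const_mul _).abs)
    have iE' : IntervalIntegrable (fun x => E2 u t x) volume (-(2 * R)) (2 * R) :=
      cE.intervalIntegrable _ _
    have hle : -(2 * R) ≤ 2 * R := by linarith
    calc ∫ x in (-(2 * R))..(2 * R), (|-σ * u t x ^ 3| + |-σ * dx u t x|)
        ≤ ∫ x in (-(2 * R))..(2 * R),
          ((1 + G) * E2 u t x + ((√R)⁻¹ / 2 + √R / 2 * E2 u t x)) :=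
          intervalIntegral.integral_mono_on hle (c1.intervalIntegrable _ _)
            ((iE'.const_mul _).add (intervalIntegrable_const.add (iE'.const_mul _)))
            fun x _ => hm x
      _ = (1 + G) * (∫ x in (-(2 * R))..(2 * R), E2 u t x)
          + (4 * R * ((√R)⁻¹ / 2) + √R / 2 * ∫ x in (-(2 * R))..(2 * R), E2 u t x) := by
          rw [intervalIntegral.integral_add (iE'.const_mul _)
            (intervalIntegrable_const.add (iE'.const_mul _)),
            intervalIntegral.integral_add intervalIntegrable_const (iE'.const_mul _),
            intervalIntegral.integral_const_mul, intervalIntegral.integral_const_mul,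
            intervalIntegral.integral_const]
          rw [smul_eq_mul]; ring
      _ ≤ (1 + G) * G + (4 * R * ((√R)⁻¹ / 2) + √R / 2 * G) := by
          have := (interval_le_integral iE (E2_nonneg u t) hle).trans hg
          gcongr
      _ ≤ _ := by
          have e : R * (√R)⁻¹ = √R := by
            rw [← div_eq_mul_inv, Real.div_sqrt]
          have g1 : (1 + G) * G ≤ (1 + G) * G * √R :=
            le_mul_of_one_le_right (by positivity) hR1
          have g2 : 0 ≤ √R / 2 * G := by positivity
          nlinarith

/-- Conservation of the mean. -/
lemma Sol.mass {u : ℝ → ℝ → ℝ} (h : Sol u) {T : ℝ} (hT : 0 ≤ T) :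
    ∫ x, u T x = ∫ x, u 0 x := by
  have h1 := h.mass_le hT (σ := 1) (by simp)
  have h2 := h.mass_le hT (σ := -1) (by simp)
  rw [integral_const_mul, integral_const_mul] at h1 h2
  linarith

end MKdV

/-! ### The Fourier transform on Schwartz functions -/

namespace MKdV

/-- A complex function on the line that is the underlying function of a Schwartz map. -/
def SchC (f : ℝ → ℂ) : Prop := ∃ g : SchwartzMap ℝ ℂ, f = g

lemma SchC.add {f g : ℝ → ℂ} (hf : SchC f) (hg : SchC g) : SchC (fun x => f x + g x) := by
  obtain ⟨F, rfl⟩ := hf; obtain ⟨G, rfl⟩ := hg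
  exact ⟨F + G, rfl⟩

lemma SchC.mul_temp {f g : ℝ → ℂ} (hf : f.HasTemperateGrowth) (hg : SchC g) :
    SchC (fun x => f x * g x) := by
  obtain ⟨G, rfl⟩ := hg
  refine ⟨SchwartzMap.smulLeftCLM ℂ f G, funext fun x => ?_⟩
  rw [SchwartzMap.smulLeftCLM_apply_apply hf]; simp

lemma SchC.cmul {f : ℝ → ℂ} (hf : SchC f) (c : ℂ) : SchC (fun x => c * f x) :=
  SchC.mul_temp (f := fun _ => c) (by fun_prop) hf

lemma temp_ofReal : Function.HasTemperateGrowth (fun x : ℝ => (x : ℂ)) :=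
  Complex.ofRealCLM.hasTemperateGrowth

lemma SchC.xmul {f : ℝ → ℂ} (hf : SchC f) : SchC (fun x => (x : ℂ) * f x) :=
  SchC.mul_temp temp_ofReal hf

lemma SchC.deriv {f : ℝ → ℂ} (hf : SchC f) : SchC (deriv f) := by
  obtain ⟨F, rfl⟩ := hf
  exact ⟨SchwartzMap.derivCLM ℝ ℂ F, funext fun x => by simp⟩

lemma SchC.integrable {f : ℝ → ℂ} (hf : SchC f) : Integrable f := by
  obtain ⟨F, rfl⟩ := hf
  exact F.integrable

lemma SchC.continuous {f : ℝ → ℂ} (hf : SchC f) : Continuous f := by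
  obtain ⟨F, rfl⟩ := hf
  exact F.continuous

lemma SchC.hasDerivAt {f : ℝ → ℂ} (hf : SchC f) (x : ℝ) : HasDerivAt f (_root_.deriv f x) x := by
  obtain ⟨F, rfl⟩ := hf
  exact F.differentiable.differentiableAt.hasDerivAt

lemma SchC.comp_mul {f : ℝ → ℂ} (hf : SchC f) {c : ℝ} (hc : c ≠ 0) : SchC (fun x => f (c * x)) := by
  obtain ⟨F, rfl⟩ := hf
  refine ⟨SchwartzMap.compCLMOfContinuousLinearEquiv ℝ
    (ContinuousLinearEquiv.unitsEquivAut ℝ (Units.mk0 c hc)) F, funext fun x => ?_⟩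
  simp [mul_comm]

lemma SchC.ofReal {f : ℝ → ℝ} (hf : Sch f) : SchC (fun x => (f x : ℂ)) := by
  obtain ⟨F, rfl⟩ := hf.eq
  exact ⟨F.postcompCLM Complex.ofRealCLM, funext fun x => by
    simp [SchwartzMap.postcompCLM_apply]⟩

lemma SchC.norm_sq_integrable {f : ℝ → ℂ} (hf : SchC f) : Integrable (fun x => ‖f x‖ ^ 2) := by
  obtain ⟨F, rfl⟩ := hf
  have := (F.memLp 2 volume).integrable_norm_pow (by norm_num)
  simpa using this

lemma temp_exp : Function.HasTemperateGrowth (fun s : ℝ => cexp (s * I)) := by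
  have hd : ∀ n : ℕ, iteratedDeriv n (fun s : ℝ => cexp (s * I)) =
      fun s : ℝ => I ^ n * cexp (s * I) := by
    intro n
    induction n with
    | zero => simp
    | succ n ih =>
      rw [iteratedDeriv_succ, ih]
      funext s
      have h1 : HasDerivAt (fun s : ℝ => (s : ℂ) * I) (1 * I) s :=
        (Complex.ofRealCLM.hasDerivAt (x := s)).mul_const I
      rw [((h1.cexp).const_mul (I ^ n)).deriv]
      ring
  refine ⟨((Complex.ofRealCLM.contDiff (n := (⊤ : ℕ∞))).mul contDiff_const).cexp, fun n => ⟨0, 1, fun s => ?_⟩⟩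
  rw [norm_iteratedFDeriv_eq_norm_iteratedDeriv, hd n]
  simp [Complex.norm_exp_ofReal_mul_I]

lemma temp_phase (t : ℝ) : Function.HasTemperateGrowth (fun ξ : ℝ => cexp (I * t * ξ ^ 3)) := by
  have h : Function.HasTemperateGrowth (fun ξ : ℝ => t * ξ ^ 3) := by
    refine Function.HasTemperateGrowth.mul (by fun_prop) ?_
    exact Function.HasTemperateGrowth.pow (f := fun x : ℝ => x) (by fun_prop) 3
  convert temp_exp.comp h using 1
  funext ξ
  simp only [Function.comp]
  congr 1
  push_cast
  ring

lemma norm_phase (t ξ : ℝ) : ‖cexp (I * t * ξ ^ 3)‖ = 1 := by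
  have := Complex.norm_exp_ofReal_mul_I (t * ξ ^ 3)
  rw [← this]; congr 2; push_cast; ring

open FourierTransform

lemma sqrt_two_pi_pos : 0 < √(2 * π) := Real.sqrt_pos.2 (by positivity)

/-- The normalisation of `FT` compared with that of `𝓕`. -/
lemma FT_eq (h : ℝ → ℂ) (ξ : ℝ) : FT h ξ = (√(2 * π) : ℂ)⁻¹ * 𝓕 h ((2 * π)⁻¹ * ξ) := by
  rw [Real.fourier_real_eq_integral_exp_smul, FT]
  congr 2
  funext x
  rw [smul_eq_mul]
  congr 2
  push_cast
  have : (π : ℂ) ≠ 0 := by exact_mod_cast Real.pi_ne_zero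
  field_simp

lemma SchC.FT {h : ℝ → ℂ} (hh : SchC h) : SchC (FT h) := by
  obtain ⟨H, rfl⟩ := hh
  have h1 : SchC (fun ξ => 𝓕 (H : ℝ → ℂ) ((2 * π)⁻¹ * ξ)) :=
    SchC.comp_mul ⟨𝓕 H, (SchwartzMap.fourier_coe H).symm⟩ (by positivity)
  have h2 := h1.cmul ((√(2 * π) : ℂ)⁻¹)
  have e : _root_.FT (H : ℝ → ℂ) = fun ξ => (√(2 * π) : ℂ)⁻¹ * 𝓕 (H : ℝ → ℂ) ((2 * π)⁻¹ * ξ) :=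
    funext fun ξ => FT_eq _ ξ
  rw [e]; exact h2

lemma FT_deriv {h : ℝ → ℂ} (hh : SchC h) (ξ : ℝ) : FT (deriv h) ξ = I * ξ * FT h ξ := by
  rw [FT_eq, FT_eq, Real.fourier_deriv hh.integrable (fun x => (hh.hasDerivAt x).differentiableAt)
    hh.deriv.integrable]
  have : (π : ℂ) ≠ 0 := by exact_mod_cast Real.pi_ne_zero
  simp only [smul_eq_mul]
  push_cast
  field_simp

lemma FT_cmul (c : ℂ) (h : ℝ → ℂ) (ξ : ℝ) : FT (fun x => c * h x) ξ = c * FT h ξ := by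
  simp only [FT]
  rw [mul_left_comm, ← integral_const_mul c]
  congr 2; funext x; ring

lemma FT_add {g h : ℝ → ℂ} (hg : SchC g) (hh : SchC h) (ξ : ℝ) :
    FT (fun x => g x + h x) ξ = FT g ξ + FT h ξ := by
  have key : ∀ f : ℝ → ℂ, SchC f → Integrable (fun x : ℝ => cexp (-(I * x * ξ)) * f x) := by
    intro f hf
    refine hf.integrable.norm.mono' ?_ (Filter.Eventually.of_forall fun x => ?_)
    · have := hf.continuous
      exact (by fun_prop : Continuous fun x : ℝ => cexp (-(I * x * ξ)) * f x).aestronglyMeasurable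
    · rw [norm_mul, show (-(I * x * ξ) : ℂ) = ((-(x * ξ) : ℝ) : ℂ) * I by push_cast; ring,
        Complex.norm_exp_ofReal_mul_I, one_mul]
  simp only [FT]
  rw [← mul_add, ← integral_add (key g hg) (key h hh)]
  congr 2; funext x; ring

lemma FT_hasDerivAt {h : ℝ → ℂ} (hh : SchC h) (ξ : ℝ) :
    HasDerivAt (FT h) (-I * FT (fun x => x * h x) ξ) ξ := by
  have h1 := Real.hasDerivAt_fourier hh.integrable
    (by simpa using hh.xmul.integrable) ((2 * π)⁻¹ * ξ)
  have h2 : HasDerivAt (fun ξ : ℝ => (2 * π)⁻¹ * ξ) ((2 * π)⁻¹) ξ := by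
    simpa using (hasDerivAt_id ξ).const_mul ((2 * π)⁻¹)
  have h3 := (h1.scomp ξ h2).const_mul ((√(2 * π) : ℂ)⁻¹)
  have e : FT h = fun ξ => (√(2 * π) : ℂ)⁻¹ * (𝓕 h ∘ fun ξ : ℝ => (2 * π)⁻¹ * ξ) ξ := by
    funext ξ; exact FT_eq h ξ
  rw [e]
  refine h3.congr_deriv ?_
  have e2 := FT_eq (fun x : ℝ => (-2 * π * I * x) • h x) ξ
  have e3 := FT_cmul (-2 * π * I) (fun x => x * h x) ξ
  have e4 : (fun x : ℝ => (-2 * π * I * x) • h x) = fun x : ℝ => -2 * π * I * (x * h x) := by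
    funext x; rw [smul_eq_mul]; ring
  rw [e4] at e2 ⊢
  rw [e3] at e2
  rw [Complex.real_smul, mul_left_comm, ← e2]
  have : (π : ℂ) ≠ 0 := by exact_mod_cast Real.pi_ne_zero
  push_cast
  field_simp

lemma plancherel {h : ℝ → ℂ} (hh : SchC h) : ∫ ξ, ‖FT h ξ‖ ^ 2 = ∫ x, ‖h x‖ ^ 2 := by
  obtain ⟨H, rfl⟩ := hh
  have h1 := SchwartzMap.integral_norm_sq_fourier H
  rw [SchwartzMap.fourier_coe] at h1
  have h2 := Measure.integral_comp_mul_left (fun ξ => ‖𝓕 (H : ℝ → ℂ) ξ‖ ^ 2) ((2 * π)⁻¹)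
  simp only [FT_eq, norm_mul, mul_pow]
  rw [integral_const_mul, h2, ← h1, smul_eq_mul, ← mul_assoc]
  have e : ‖(√(2 * π) : ℂ)⁻¹‖ ^ 2 * |(2 * π)⁻¹⁻¹| = 1 := by
    rw [norm_inv, Complex.norm_real, Real.norm_of_nonneg (Real.sqrt_nonneg _), inv_inv, inv_pow,
      Real.sq_sqrt (by positivity), abs_of_pos (by positivity)]
    field_simp
  rw [e, one_mul]

lemma inversion {h : ℝ → ℂ} (hh : SchC h) (x : ℝ) : FT (FT h) (-x) = h x := by
  obtain ⟨H, rfl⟩ := hh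
  have h1 : 𝓕⁻ (𝓕 H) = H := FourierTransform.fourierInv_fourier_eq H
  have h2 : 𝓕⁻ (𝓕 (H : ℝ → ℂ)) x = H x := by
    rw [← SchwartzMap.fourier_coe, ← SchwartzMap.fourierInv_coe, h1]
  rw [Real.fourierInv_eq_fourier_neg] at h2
  rw [← h2, Real.fourier_real_eq_integral_exp_smul]
  have h3 := Measure.integral_comp_mul_left
    (fun v : ℝ => cexp (((-2 * π * v * -x : ℝ) : ℂ) * I) • 𝓕 (H : ℝ → ℂ) v) ((2 * π)⁻¹)
  have e : (√(2 * π) : ℂ)⁻¹ * (√(2 * π) : ℂ)⁻¹ * ((2 * π : ℝ) : ℂ) = 1 := by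
    have := Real.mul_self_sqrt (show 0 ≤ 2 * π by positivity)
    have h0 : (√(2 * π) : ℂ) ≠ 0 := by exact_mod_cast sqrt_two_pi_pos.ne'
    nth_rewrite 3 [← this]
    push_cast
    field_simp
  rw [inv_inv, abs_of_pos (by positivity), Complex.real_smul] at h3
  have e2 : FT (FT H) (-x) = (√(2 * π) : ℂ)⁻¹ * (√(2 * π) : ℂ)⁻¹ *
      ∫ v : ℝ, cexp (((-2 * π * ((2 * π)⁻¹ * v) * -x : ℝ) : ℂ) * I) • 𝓕 (H : ℝ → ℂ) ((2 * π)⁻¹ * v) := by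
    rw [FT, mul_assoc]
    congr 1
    rw [← integral_const_mul]
    congr 1
    funext v
    rw [FT_eq, smul_eq_mul, mul_left_comm]
    congr 3
    push_cast
    have : (π : ℂ) ≠ 0 := by exact_mod_cast Real.pi_ne_zero
    field_simp
  rw [e2, h3, ← mul_assoc, e, one_mul]

end MKdV

/-! ### The profile and the X-norm -/

namespace MKdV

lemma FT_eq_phase (u : ℝ → ℝ → ℝ) (t ξ : ℝ) :
    FT (fun x => (u t x : ℂ)) ξ = cexp (I * t * ξ ^ 3) * profFT u t ξ := by
  rw [profFT, ← mul_assoc, ← Complex.exp_add]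
  simp

lemma SchC.profFT {u : ℝ → ℝ → ℝ} {t : ℝ} (h : Sch (u t)) : SchC (profFT u t) := by
  have h1 := SchC.mul_temp (temp_phase (-t)) (SchC.ofReal h).FT
  have e : _root_.profFT u t =
      fun ξ : ℝ => cexp (I * ((-t : ℝ) : ℂ) * ξ ^ 3) * _root_.FT (fun x => (u t x : ℂ)) ξ := by
    funext ξ
    simp [_root_.profFT]
  rw [e]; exact h1

/-- Inversion expressed by the forward transform at the reflected point. -/
lemma prof_eq (u : ℝ → ℝ → ℝ) (t x : ℝ) : prof u t x = FT (profFT u t) (-x) := by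
  rw [prof, FT]
  congr 2
  funext ξ
  congr 2
  push_cast
  ring

lemma xprof_eq {u : ℝ → ℝ → ℝ} {t : ℝ} (h : Sch (u t)) (x : ℝ) :
    (x : ℂ) * prof u t x = I * FT (deriv (profFT u t)) (-x) := by
  rw [FT_deriv (SchC.profFT h), prof_eq]
  push_cast
  linear_combination ((x : ℂ) * FT (profFT u t) (-x)) * I_mul_I

lemma deriv_xprof {u : ℝ → ℝ → ℝ} {t : ℝ} (h : Sch (u t)) (x : ℝ) :
    deriv (fun x : ℝ => (x : ℂ) * prof u t x) x =
      - FT (fun ξ => ξ * deriv (profFT u t) ξ) (-x) := by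
  have e : (fun x : ℝ => (x : ℂ) * prof u t x) = fun x => I * FT (deriv (profFT u t)) (-x) :=
    funext fun x => xprof_eq h x
  have h1 := FT_hasDerivAt (SchC.profFT h).deriv (-x)
  have h2 := (h1.scomp x (hasDerivAt_neg x)).const_mul I
  rw [e]
  have h3 : deriv (fun x : ℝ => I * FT (deriv (profFT u t)) (-x)) x = _ := h2.deriv
  rw [h3]
  simp only [neg_smul, one_smul]
  linear_combination (FT (fun ξ => ξ * deriv (profFT u t) ξ) (-x)) * I_mul_I

lemma L2_xprof {u : ℝ → ℝ → ℝ} {t : ℝ} (h : Sch (u t)) :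
    ∫ x : ℝ, ‖(x : ℂ) * prof u t x‖ ^ 2 = ∫ ξ, ‖deriv (profFT u t) ξ‖ ^ 2 := by
  rw [← plancherel (SchC.profFT h).deriv,
    ← integral_neg_eq_self (fun ξ => ‖FT (deriv (profFT u t)) ξ‖ ^ 2)]
  congr 1; funext x
  rw [xprof_eq h, norm_mul, norm_I, one_mul]

lemma L2_deriv_xprof {u : ℝ → ℝ → ℝ} {t : ℝ} (h : Sch (u t)) :
    ∫ x : ℝ, ‖deriv (fun x : ℝ => (x : ℂ) * prof u t x) x‖ ^ 2 =
      ∫ ξ : ℝ, ‖ξ * deriv (profFT u t) ξ‖ ^ 2 := by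
  rw [← plancherel (SchC.profFT h).deriv.xmul,
    ← integral_neg_eq_self (fun η : ℝ => ‖FT (fun ξ : ℝ => ξ * deriv (profFT u t) ξ) η‖ ^ 2)]
  congr 1; funext x
  rw [deriv_xprof h, norm_neg]

/-- The vector field `x u - 3 t u_xx`, which is `e^{-t∂ₓ³} x e^{t∂ₓ³} u`. -/
def Jf (u : ℝ → ℝ → ℝ) (t x : ℝ) : ℝ := x * u t x - 3 * t * dx (dx u) t x

lemma Sch.Jf {u : ℝ → ℝ → ℝ} {t : ℝ} (h : Sch (u t)) : Sch (Jf u t) :=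
  h.xmul.sub (h.dx.dx.cmul (3 * t))

lemma ofReal_deriv {f : ℝ → ℝ} (hf : Sch f) :
    (fun x => ((deriv f x : ℝ) : ℂ)) = deriv (fun x => (f x : ℂ)) := by
  funext x
  exact ((hf.hasDerivAt x).ofReal_comp.deriv).symm

/-- Multiplication of the profile by `x` corresponds to `x - 3t∂ₓ²` on the solution. -/
lemma FT_Jf {u : ℝ → ℝ → ℝ} {t : ℝ} (h : Sch (u t)) (ξ : ℝ) :
    FT (fun x => (Jf u t x : ℂ)) ξ = I * cexp (I * t * ξ ^ 3) * deriv (profFT u t) ξ := by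
  have hu := SchC.ofReal h
  have e1 : (fun x => (Jf u t x : ℂ)) = fun x : ℝ => (x : ℂ) * (u t x : ℂ)
      + (-3 * t : ℂ) * (dx (dx u) t x : ℂ) := by
    funext x; simp only [Jf]; push_cast; ring
  have e2 : FT (fun x => (dx (dx u) t x : ℂ)) ξ = I * ξ * (I * ξ * FT (fun x => (u t x : ℂ)) ξ) := by
    have a1 : (fun x => (dx (dx u) t x : ℂ)) = deriv (fun x => (dx u t x : ℂ)) :=
      ofReal_deriv h.dx
    have a2 : (fun x => (dx u t x : ℂ)) = deriv (fun x => (u t x : ℂ)) := ofReal_deriv h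
    rw [a1, FT_deriv (SchC.ofReal h.dx), a2, FT_deriv hu]
  have h1 := FT_hasDerivAt hu ξ
  have h2 : HasDerivAt (fun ξ : ℝ => cexp (I * t * ξ ^ 3))
      (cexp (I * t * ξ ^ 3) * (I * t * (3 * ξ ^ 2))) ξ := by
    have h3 := ((Complex.ofRealCLM.hasDerivAt (x := ξ)).fun_pow 3).const_mul (I * t)
    simpa using h3.cexp
  have h3 := h2.fun_mul ((SchC.profFT h).hasDerivAt ξ)
  have e3 : FT (fun x => (u t x : ℂ)) = fun ξ : ℝ => cexp (I * t * ξ ^ 3) * profFT u t ξ :=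
    funext fun ξ => FT_eq_phase u t ξ
  rw [e3] at h1
  have e4 := h1.unique h3
  rw [e1, FT_add hu.xmul ((SchC.ofReal h.dx.dx).cmul _), FT_cmul, e2, FT_eq_phase]
  linear_combination I * e4 + (FT (fun x : ℝ => (x:ℂ) * (u t x : ℂ)) ξ ) * I_mul_I

lemma L2_Jf {u : ℝ → ℝ → ℝ} {t : ℝ} (h : Sch (u t)) :
    ∫ x, Jf u t x ^ 2 = ∫ ξ, ‖deriv (profFT u t) ξ‖ ^ 2 := by
  have h1 := plancherel (SchC.ofReal h.Jf)
  simp only [FT_Jf h, norm_mul, norm_I, norm_phase, one_mul, Complex.norm_real, Real.norm_eq_abs,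
    sq_abs] at h1
  exact h1.symm

lemma L2_dJf {u : ℝ → ℝ → ℝ} {t : ℝ} (h : Sch (u t)) :
    ∫ x, dx (Jf u) t x ^ 2 = ∫ ξ : ℝ, ‖ξ * deriv (profFT u t) ξ‖ ^ 2 := by
  have h1 := plancherel (SchC.ofReal h.Jf.dx)
  have a1 : (fun x => (dx (Jf u) t x : ℂ)) = deriv (fun x => (Jf u t x : ℂ)) := ofReal_deriv h.Jf
  simp only [Complex.norm_real, Real.norm_eq_abs, sq_abs] at h1
  rw [← h1, a1]
  congr 1; funext ξ
  rw [FT_deriv (SchC.ofReal h.Jf), FT_Jf h]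
  simp only [norm_mul, norm_I, norm_phase, one_mul]

/-- The solution as an oscillatory integral of the profile. -/
lemma u_inv {u : ℝ → ℝ → ℝ} {t : ℝ} (h : Sch (u t)) (x : ℝ) :
    (u t x : ℂ) = (√(2 * π) : ℂ)⁻¹ *
      ∫ ξ : ℝ, cexp (((t * ξ ^ 3 + x * ξ : ℝ) : ℂ) * I) * profFT u t ξ := by
  rw [← inversion (SchC.ofReal h) x, FT]
  congr 2; funext ξ
  rw [FT_eq_phase, ← mul_assoc, ← Complex.exp_add]
  congr 2
  push_cast; ring

lemma ux_inv {u : ℝ → ℝ → ℝ} {t : ℝ} (h : Sch (u t)) (x : ℝ) :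
    (dx u t x : ℂ) = I * ((√(2 * π) : ℂ)⁻¹ *
      ∫ ξ : ℝ, cexp (((t * ξ ^ 3 + x * ξ : ℝ) : ℂ) * I) * (ξ * profFT u t ξ)) := by
  rw [← inversion (SchC.ofReal h.dx) x, FT, mul_left_comm]
  congr 1
  rw [← integral_const_mul I]
  congr 1; funext ξ
  have a1 : (fun x => (dx u t x : ℂ)) = deriv (fun x => (u t x : ℂ)) := ofReal_deriv h
  rw [a1, FT_deriv (SchC.ofReal h), FT_eq_phase]
  have : cexp (((t * ξ ^ 3 + x * ξ : ℝ) : ℂ) * I) = cexp (-(I * ξ * ((-x : ℝ) : ℂ))) *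
      cexp (I * t * ξ ^ 3) := by
    rw [← Complex.exp_add]; congr 1; push_cast; ring
  rw [this]; ring

lemma H1norm_nonneg (g : ℝ → ℂ) : 0 ≤ H1norm g := Real.sqrt_nonneg _
lemma L2norm_nonneg (g : ℝ → ℂ) : 0 ≤ L2norm g := Real.sqrt_nonneg _
lemma L2norm_sq (g : ℝ → ℂ) : L2norm g ^ 2 = ∫ x, ‖g x‖ ^ 2 :=
  Real.sq_sqrt (integral_nonneg fun x => by positivity)
lemma H1norm_sq (g : ℝ → ℂ) : H1norm g ^ 2 = (∫ x, ‖g x‖ ^ 2) + ∫ x, ‖deriv g x‖ ^ 2 := by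
  rw [H1norm, Real.sq_sqrt (by positivity), L2norm_sq, L2norm_sq]
lemma LinfNorm_nonneg (g : ℝ → ℂ) : 0 ≤ LinfNorm g := Real.iSup_nonneg fun _ => norm_nonneg _

lemma SchC.le_Linf {g : ℝ → ℂ} (hg : SchC g) (ξ : ℝ) : ‖g ξ‖ ≤ LinfNorm g := by
  obtain ⟨G, rfl⟩ := hg
  refine le_ciSup (f := fun x => ‖G x‖) ?_ ξ
  obtain ⟨C, hC⟩ := G.decay 0 0
  refine ⟨C, ?_⟩
  rintro _ ⟨x, rfl⟩
  simpa using hC.2 x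

/-- The information extracted from `‖u‖_X ≤ ε` at a time `t ≥ 1`. The `L²` norm of `u` is only
needed at the starting time `t = 1`, where no power of `t` is lost. -/
structure XB (u : ℝ → ℝ → ℝ) (ε t : ℝ) : Prop where
  linf : ∀ ξ, ‖profFT u t ξ‖ ≤ ε
  d1 : ∫ ξ, ‖deriv (profFT u t) ξ‖ ^ 2 ≤ ε ^ 2 * t ^ ((1:ℝ)/3)
  d2 : ∫ ξ : ℝ, ‖ξ * deriv (profFT u t) ξ‖ ^ 2 ≤ ε ^ 2 * t ^ ((1:ℝ)/3)
  one : t = 1 → ∫ x, u t x ^ 2 ≤ ε ^ 2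

lemma XB.of {u : ℝ → ℝ → ℝ} {δ α ε t : ℝ} (h : Sch (u t)) (ht : 1 ≤ t) (hX : Xexpr δ α u t ≤ ε) :
    XB u ε t := by
  have t0 : 0 < t := by linarith
  have p1 : 0 ≤ t ^ (-δ) * H1norm (fun x => (u t x : ℂ)) :=
    mul_nonneg (by positivity) (H1norm_nonneg _)
  have p2 : 0 ≤ t ^ (-(1:ℝ)/6) * H1norm (fun x => (x : ℂ) * prof u t x) :=
    mul_nonneg (by positivity) (H1norm_nonneg _)
  have p3 : 0 ≤ t ^ (α/3 - 1/6) *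
        L2norm (fun ξ => ((|ξ| ^ α : ℝ) : ℂ) * FT (fun x => (x : ℂ) * prof u t x) ξ) :=
    mul_nonneg (by positivity) (L2norm_nonneg _)
  have p4 := LinfNorm_nonneg (profFT u t)
  unfold Xexpr at hX
  have q2 : t ^ (-(1:ℝ)/6) * H1norm (fun x => (x : ℂ) * prof u t x) ≤ ε := by linarith
  have q3 : H1norm (fun x => (x : ℂ) * prof u t x) ^ 2 ≤ ε ^ 2 * t ^ ((1:ℝ)/3) := by
    have e : (t ^ (-(1:ℝ)/6)) ^ 2 * t ^ ((1:ℝ)/3) = 1 := by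
      rw [← Real.rpow_natCast, ← Real.rpow_mul t0.le, ← Real.rpow_add t0]; norm_num
    have := pow_le_pow_left₀ p2 q2 2
    rw [mul_pow] at this
    calc _ = ((t ^ (-(1:ℝ)/6)) ^ 2 * t ^ ((1:ℝ)/3)) *
        H1norm (fun x => (x : ℂ) * prof u t x) ^ 2 := by rw [e, one_mul]
      _ = ((t ^ (-(1:ℝ)/6)) ^ 2 * H1norm (fun x => (x : ℂ) * prof u t x) ^ 2) *
        t ^ ((1:ℝ)/3) := by ring
      _ ≤ _ := mul_le_mul_of_nonneg_right this (by positivity)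
  rw [H1norm_sq, L2_xprof h, L2_deriv_xprof h] at q3
  have n1 : 0 ≤ ∫ ξ, ‖deriv (profFT u t) ξ‖ ^ 2 := integral_nonneg fun x => by positivity
  have n2 : 0 ≤ ∫ ξ : ℝ, ‖ξ * deriv (profFT u t) ξ‖ ^ 2 := integral_nonneg fun x => by positivity
  refine ⟨fun ξ => ((SchC.profFT h).le_Linf ξ).trans (by linarith), by linarith, by linarith, ?_⟩
  rintro rfl
  have q1 : H1norm (fun x => (u 1 x : ℂ)) ≤ ε := by
    rw [Real.one_rpow, one_mul] at p1
    rw [Real.one_rpow, one_mul] at hX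
    linarith
  have := pow_le_pow_left₀ (H1norm_nonneg _) q1 2
  rw [H1norm_sq] at this
  simp only [Complex.norm_real, Real.norm_eq_abs, sq_abs] at this
  have n3 : 0 ≤ ∫ x, ‖deriv (fun x => (u 1 x : ℂ)) x‖ ^ 2 := integral_nonneg fun x => by positivity
  linarith

end MKdV

/-! ### Oscillatory integrals -/

namespace MKdV

lemma int_inv_sq {p q c : ℝ} (hpq : p ≤ q) (hc : ∀ η ∈ Set.Icc p q, η - c ≠ 0) :
    ∫ η in p..q, ((η - c) ^ 2)⁻¹ = (p - c)⁻¹ - (q - c)⁻¹ := by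
  have h : ∀ η ∈ Set.uIcc p q, HasDerivAt (fun η => -(η - c)⁻¹) (((η - c) ^ 2)⁻¹) η := by
    intro η hη
    rw [Set.uIcc_of_le hpq] at hη
    have := (((hasDerivAt_id η).sub_const c).fun_inv (hc η hη)).neg
    refine this.congr_deriv ?_
    simp [neg_div]
  rw [intervalIntegral.integral_eq_sub_of_hasDerivAt h]
  · ring
  · refine ContinuousOn.intervalIntegrable ?_
    rw [Set.uIcc_of_le hpq]
    refine ContinuousOn.inv₀ (by fun_prop) fun η hη => pow_ne_zero 2 (hc η hη)

/-- The oscillating factor `e^{i(η³ + yη)}`. -/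
def osc (y η : ℝ) : ℂ := cexp (((η ^ 3 + y * η : ℝ) : ℂ) * I)

lemma norm_osc (y η : ℝ) : ‖osc y η‖ = 1 := Complex.norm_exp_ofReal_mul_I _

lemma osc_hasDerivAt (y η : ℝ) :
    HasDerivAt (osc y) (osc y η * (((3 * η ^ 2 + y : ℝ) : ℂ) * I)) η := by
  have h : HasDerivAt (fun η : ℝ => η ^ 3 + y * η) (3 * η ^ 2 + y) η := by
    simpa using ((hasDerivAt_id η).fun_pow 3).fun_add ((hasDerivAt_id η).const_mul y)
  exact (h.ofReal_comp.mul_const I).cexp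

lemma osc_cont (y : ℝ) : Continuous (osc y) := by
  unfold osc; fun_prop

/-- Cauchy-Schwarz in the form used below. -/
lemma cs_interval {p q ε β : ℝ} {b h : ℝ → ℝ} (hpq : p ≤ q) (hε : 0 < ε) (hβ : 0 < β)
    (hb : ContinuousOn b (Set.Icc p q)) (hh : ContinuousOn h (Set.Icc p q))
    (h1 : ∫ η in p..q, b η ^ 2 ≤ β ^ 2) (h2 : ∫ η in p..q, h η ^ 2 ≤ ε ^ 2) :
    ∫ η in p..q, |b η * h η| ≤ ε * β := by
  rw [← Set.uIcc_of_le hpq] at hb hh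
  have i1 : IntervalIntegrable (fun η => b η ^ 2) volume p q := (hb.pow 2).intervalIntegrable
  have i2 : IntervalIntegrable (fun η => h η ^ 2) volume p q := (hh.pow 2).intervalIntegrable
  have key : ∀ η, |b η * h η| ≤ (ε / (2 * β)) * b η ^ 2 + (β / (2 * ε)) * h η ^ 2 := by
    intro η
    rw [abs_mul]
    have := sq_nonneg (ε * |b η| - β * |h η|)
    have e : (ε / (2 * β)) * b η ^ 2 + (β / (2 * ε)) * h η ^ 2 =
      (ε ^ 2 * |b η| ^ 2 + β ^ 2 * |h η| ^ 2) / (2 * (ε * β)) := by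
      rw [sq_abs, sq_abs]; field_simp
    rw [e, le_div_iff₀ (by positivity)]
    linarith
  calc ∫ η in p..q, |b η * h η| ≤ ∫ η in p..q, ((ε / (2 * β)) * b η ^ 2 + (β / (2 * ε)) * h η ^ 2) :=
        intervalIntegral.integral_mono_on hpq (hb.mul hh).abs.intervalIntegrable
          ((i1.const_mul _).add (i2.const_mul _)) fun η _ => key η
    _ = (ε / (2 * β)) * (∫ η in p..q, b η ^ 2) + (β / (2 * ε)) * ∫ η in p..q, h η ^ 2 := by
        rw [intervalIntegral.integral_add (i1.const_mul _) (i2.const_mul _),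
          intervalIntegral.integral_const_mul, intervalIntegral.integral_const_mul]
    _ ≤ (ε / (2 * β)) * β ^ 2 + (β / (2 * ε)) * ε ^ 2 := by gcongr
    _ = ε * β := by field_simp; ring

/-- One integration by parts against `e^{i(η³+yη)}`, with amplitude `a = b · (3η²+y)`. -/
lemma ibp {g g' : ℝ → ℂ} {a b b' : ℝ → ℝ} {y p q V ε β : ℝ} (hpq : p ≤ q)
    (hg : ∀ η, HasDerivAt g (g' η) η) (hgc : Continuous g') (hε : 0 < ε) (hgb : ∀ η, ‖g η‖ ≤ ε)
    (h2 : ∫ η in p..q, ‖g' η‖ ^ 2 ≤ ε ^ 2)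
    (hb : ∀ η ∈ Set.Icc p q, HasDerivAt b (b' η) η) (hbc : ContinuousOn b' (Set.Icc p q))
    (hab : ∀ η ∈ Set.Icc p q, a η = b η * (3 * η ^ 2 + y))
    (hV : ∫ η in p..q, |b' η| ≤ V) (hβ : 0 < β) (hb2 : ∫ η in p..q, b η ^ 2 ≤ β ^ 2) :
    ‖∫ η in p..q, osc y η * ((a η : ℂ) * g η)‖ ≤ ε * (|b p| + |b q| + V + β) := by
  have hgcont : Continuous g := continuous_iff_continuousAt.2 fun η => (hg η).continuousAt
  have hbcont : ContinuousOn b (Set.Icc p q) := fun η hη => (hb η hη).continuousAt.continuousWithinAt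
  have hbC : ContinuousOn (fun η => (b η : ℂ)) (Set.Icc p q) :=
    Complex.continuous_ofReal.comp_continuousOn hbcont
  have hbC' : ContinuousOn (fun η => (b' η : ℂ)) (Set.Icc p q) :=
    Complex.continuous_ofReal.comp_continuousOn hbc
  have hp : p ∈ Set.Icc p q := ⟨le_rfl, hpq⟩
  have hq : q ∈ Set.Icc p q := ⟨hpq, le_rfl⟩
  set R : ℝ → ℂ := fun η => osc y η * ((b' η : ℂ) * g η + (b η : ℂ) * g' η) with hR
  have hRc : ContinuousOn R (Set.Icc p q) :=
    (osc_cont y).continuousOn.mul ((hbC'.mul hgcont.continuousOn).add (hbC.mul hgc.continuousOn))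
  have hPc : ContinuousOn (fun η => osc y η * (((b η * (3 * η ^ 2 + y) : ℝ) : ℂ) * g η))
      (Set.Icc p q) :=
    (osc_cont y).continuousOn.mul ((Complex.continuous_ofReal.comp_continuousOn
      (hbcont.mul (by fun_prop))).mul hgcont.continuousOn)
  have e0 : ∫ η in p..q, osc y η * ((a η : ℂ) * g η) =
      ∫ η in p..q, osc y η * (((b η * (3 * η ^ 2 + y) : ℝ) : ℂ) * g η) := by
    refine intervalIntegral.integral_congr fun η hη => ?_
    rw [Set.uIcc_of_le hpq] at hη
    rw [hab η hη]
  have e1 : ∫ η in p..q, (I * (osc y η * (((b η * (3 * η ^ 2 + y) : ℝ) : ℂ) * g η)) + R η) =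
      osc y q * ((b q : ℂ) * g q) - osc y p * ((b p : ℂ) * g p) := by
    refine intervalIntegral.integral_eq_sub_of_hasDerivAt
      (f := fun η => osc y η * ((b η : ℂ) * g η)) ?_ ?_
    · intro η hη
      rw [Set.uIcc_of_le hpq] at hη
      have := (osc_hasDerivAt y η).fun_mul ((hb η hη).ofReal_comp.fun_mul (hg η))
      refine this.congr_deriv ?_
      rw [hR]; push_cast; ring
    · refine ContinuousOn.intervalIntegrable ?_
      rw [Set.uIcc_of_le hpq]
      exact (continuousOn_const.mul hPc).add hRc
  have iP : IntervalIntegrable (fun η => osc y η * (((b η * (3 * η ^ 2 + y) : ℝ) : ℂ) * g η))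
      volume p q := by
    refine ContinuousOn.intervalIntegrable ?_; rwa [Set.uIcc_of_le hpq]
  have iR : IntervalIntegrable R volume p q := by
    refine ContinuousOn.intervalIntegrable ?_; rwa [Set.uIcc_of_le hpq]
  rw [intervalIntegral.integral_add (iP.const_mul I) iR, intervalIntegral.integral_const_mul] at e1
  have ib' : IntervalIntegrable (fun η => |b' η|) volume p q := by
    refine ContinuousOn.intervalIntegrable ?_; rw [Set.uIcc_of_le hpq]; exact hbc.abs
  have ibg : IntervalIntegrable (fun η => |b η * ‖g' η‖|) volume p q := by
    refine ContinuousOn.intervalIntegrable ?_; rw [Set.uIcc_of_le hpq]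
    exact (hbcont.mul hgc.norm.continuousOn).abs
  have hRn : ‖∫ η in p..q, R η‖ ≤ ε * V + ε * β := by
    calc ‖∫ η in p..q, R η‖ ≤ ∫ η in p..q, (ε * |b' η| + |b η * ‖g' η‖|) := by
          refine intervalIntegral.norm_integral_le_of_norm_le hpq
            (Filter.Eventually.of_forall fun η _ => ?_) ((ib'.const_mul ε).add ibg)
          rw [hR]
          simp only [norm_mul, norm_osc, one_mul]
          refine (norm_add_le _ _).trans ?_
          rw [norm_mul, norm_mul, Complex.norm_real, Complex.norm_real, Real.norm_eq_abs,
            Real.norm_eq_abs, abs_mul, abs_norm]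
          have := mul_le_mul_of_nonneg_left (hgb η) (abs_nonneg (b' η))
          linarith
      _ = ε * (∫ η in p..q, |b' η|) + ∫ η in p..q, |b η * ‖g' η‖| := by
          rw [intervalIntegral.integral_add (ib'.const_mul ε) ibg,
            intervalIntegral.integral_const_mul]
      _ ≤ ε * V + ε * β := by
          have c := cs_interval hpq hε hβ hbcont hgc.norm.continuousOn hb2 h2
          have := mul_le_mul_of_nonneg_left hV hε.le
          linarith
  have nb : ∀ η, ‖osc y η * ((b η : ℂ) * g η)‖ ≤ ε * |b η| := by
    intro η
    rw [norm_mul, norm_osc, one_mul, norm_mul, Complex.norm_real, Real.norm_eq_abs, mul_comm]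
    exact mul_le_mul_of_nonneg_right (hgb η) (abs_nonneg _)
  rw [e0]
  set P := ∫ η in p..q, osc y η * (((b η * (3 * η ^ 2 + y) : ℝ) : ℂ) * g η)
  have e2 : I * P = osc y q * ((b q : ℂ) * g q) - osc y p * ((b p : ℂ) * g p) - ∫ η in p..q, R η := by
    rw [← e1]; ring
  have e3 : ‖P‖ = ‖I * P‖ := by rw [norm_mul, norm_I, one_mul]
  rw [e3, e2]
  calc _ ≤ ‖osc y q * ((b q : ℂ) * g q)‖ + ‖osc y p * ((b p : ℂ) * g p)‖ + ‖∫ η in p..q, R η‖ :=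
        (norm_sub_le _ _).trans (add_le_add_left (norm_sub_le _ _) _)
    _ ≤ ε * |b q| + ε * |b p| + (ε * V + ε * β) := add_le_add (add_le_add (nb q) (nb p)) hRn
    _ = _ := by ring

end MKdV

/-! ### Stationary phase -/

namespace MKdV

/-- A `C¹` amplitude that is bounded by `ε`, with derivative bounded by `ε` in `L²`. -/
structure Amp (g g' : ℝ → ℂ) (ε : ℝ) : Prop where
  der : ∀ η, HasDerivAt g (g' η) η
  cont : Continuous g'
  pos : 0 < ε
  bdd : ∀ η, ‖g η‖ ≤ ε
  l2 : ∀ p q, p ≤ q → ∫ η in p..q, ‖g' η‖ ^ 2 ≤ ε ^ 2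

lemma Amp.gcont {g g' : ℝ → ℂ} {ε : ℝ} (A : Amp g g' ε) : Continuous g :=
  continuous_iff_continuousAt.2 fun η => (A.der η).continuousAt

lemma Amp.intervalIntegrable {g g' : ℝ → ℂ} {ε : ℝ} (A : Amp g g' ε) {a : ℝ → ℝ}
    (ha : Continuous a) (y p q : ℝ) :
    IntervalIntegrable (fun η => osc y η * ((a η : ℂ) * g η)) volume p q := by
  have h1 := A.gcont
  have h2 := osc_cont y
  exact (by fun_prop : Continuous fun η => osc y η * ((a η : ℂ) * g η)).intervalIntegrable p q

lemma Amp.triv {g g' : ℝ → ℂ} {ε : ℝ} (A : Amp g g' ε) {a : ℝ → ℝ} {y p q M : ℝ} (hpq : p ≤ q)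
    (ha : ∀ η ∈ Set.Icc p q, |a η| ≤ M) :
    ‖∫ η in p..q, osc y η * ((a η : ℂ) * g η)‖ ≤ M * ε * (q - p) := by
  have := intervalIntegral.norm_integral_le_of_norm_le_const (a := p) (b := q) (C := M * ε)
    (f := fun η => osc y η * ((a η : ℂ) * g η)) ?_
  · rwa [abs_of_nonneg (by linarith)] at this
  · intro η hη
    rw [Set.uIoc_of_le hpq] at hη
    rw [norm_mul, norm_osc, one_mul, norm_mul, Complex.norm_real, Real.norm_eq_abs]
    have h1 := ha η ⟨hη.1.le, hη.2⟩
    exact mul_le_mul h1 (A.bdd η) (norm_nonneg _) ((abs_nonneg _).trans h1)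

/-- Bound in the region without a nondegenerate stationary point. -/
lemma Amp.half_pos {g g' : ℝ → ℂ} {ε : ℝ} (A : Amp g g' ε) {a b b' : ℝ → ℝ} {y N : ℝ}
    (hN : 2 ≤ N) (hac : Continuous a) (ha : ∀ η ∈ Set.Icc (0:ℝ) 2, |a η| ≤ 2)
    (hab : ∀ η, 2 ≤ η → a η = b η * (3 * η ^ 2 + y))
    (hb : ∀ η, 2 ≤ η → HasDerivAt b (b' η) η) (hbc : ContinuousOn b' (Set.Ici 2))
    (hb1 : ∀ η, 2 ≤ η → |b η| ≤ η⁻¹) (hb2 : ∀ η, 2 ≤ η → |b' η| ≤ (η ^ 2)⁻¹) :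
    ‖∫ η in (0:ℝ)..N, osc y η * ((a η : ℂ) * g η)‖ ≤ 10 * ε := by
  rw [← intervalIntegral.integral_add_adjacent_intervals (A.intervalIntegrable hac y 0 2)
    (A.intervalIntegrable hac y 2 N)]
  have h1 := A.triv (y := y) (by norm_num : (0:ℝ) ≤ 2) ha
  have hbcont : ContinuousOn b (Set.Icc 2 N) :=
    fun η hη => (hb η hη.1).continuousAt.continuousWithinAt
  have hsub : Set.Icc 2 N ⊆ Set.Ici 2 := fun η hη => hη.1
  have i0 : IntervalIntegrable (fun η : ℝ => (η ^ 2)⁻¹) volume 2 N := by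
    refine ContinuousOn.intervalIntegrable ?_
    rw [Set.uIcc_of_le hN]
    refine ContinuousOn.inv₀ (by fun_prop) fun η hη => pow_ne_zero 2 ?_
    have := hη.1; positivity
  have e0 : ∫ η in (2:ℝ)..N, (η ^ 2)⁻¹ ≤ 1 := by
    have := int_inv_sq (c := 0) hN (fun η hη => by have := hη.1; simp; positivity)
    simp only [sub_zero] at this
    rw [this]
    have : 0 ≤ N⁻¹ := by positivity
    norm_num; linarith
  have hV : ∫ η in (2:ℝ)..N, |b' η| ≤ 1 := by
    refine le_trans (intervalIntegral.integral_mono_on hN ?_ i0 fun η hη => hb2 η hη.1) e0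
    refine ContinuousOn.intervalIntegrable ?_
    rw [Set.uIcc_of_le hN]
    exact (hbc.mono hsub).abs
  have hb2' : ∫ η in (2:ℝ)..N, b η ^ 2 ≤ 1 ^ 2 := by
    rw [one_pow]
    refine le_trans (intervalIntegral.integral_mono_on hN ?_ i0 fun η hη => ?_) e0
    · refine ContinuousOn.intervalIntegrable ?_
      rw [Set.uIcc_of_le hN]
      exact hbcont.pow 2
    · rw [← sq_abs, ← inv_pow]
      exact pow_le_pow_left₀ (abs_nonneg _) (hb1 η hη.1) 2
  have h2 := ibp hN A.der A.cont A.pos A.bdd (A.l2 2 N hN) (fun η hη => hb η hη.1) (hbc.mono hsub)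
    (fun η hη => hab η hη.1) hV one_pos hb2'
  have h3 : |b 2| ≤ 1 := (hb1 2 le_rfl).trans (by norm_num)
  have h4 : |b N| ≤ 1 := (hb1 N hN).trans (inv_le_one_of_one_le₀ (by linarith))
  have h5 : ε * (|b 2| + |b N| + 1 + 1) ≤ ε * 4 := mul_le_mul_of_nonneg_left (by linarith) A.pos.le
  have := norm_add_le (∫ η in (0:ℝ)..2, osc y η * ((a η : ℂ) * g η))
    (∫ η in (2:ℝ)..N, osc y η * ((a η : ℂ) * g η))
  have := A.pos
  linarith

/-- Contribution of an interval at distance at least `1/(2σ)` from the stationary point `σ²`. -/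
lemma Amp.side {g g' : ℝ → ℂ} {ε : ℝ} (A : Amp g g' ε) {a b b' : ℝ → ℝ} {y p q σ κ : ℝ}
    (hσ : 1 ≤ σ) (hκ : 0 < κ) (hpq : p ≤ q) (hp0 : 0 ≤ p)
    (hs : q ≤ σ ^ 2 - (2 * σ)⁻¹ ∨ σ ^ 2 + (2 * σ)⁻¹ ≤ p)
    (hab : ∀ η, 0 ≤ η → η ≠ σ ^ 2 → a η = b η * (3 * η ^ 2 + y))
    (hb : ∀ η, 0 ≤ η → η ≠ σ ^ 2 → HasDerivAt b (b' η) η)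
    (hbc : ContinuousOn b' {η | 0 ≤ η ∧ η ≠ σ ^ 2})
    (hb1 : ∀ η, 0 ≤ η → η ≠ σ ^ 2 → |b η| ≤ κ / 3 * |η - σ ^ 2|⁻¹)
    (hb2 : ∀ η, 0 ≤ η → η ≠ σ ^ 2 → b' η ≤ 0) :
    ‖∫ η in p..q, osc y η * ((a η : ℂ) * g η)‖ ≤ 4 * (κ * σ) * ε := by
  have σ0 : 0 < σ := by linarith
  have h0 : 0 < (2 * σ)⁻¹ := by positivity
  have hd : ∀ η ∈ Set.Icc p q, (2 * σ)⁻¹ ≤ |η - σ ^ 2| := by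
    intro η hη
    rcases hs with hs | hs
    · rw [abs_of_nonpos (by linarith [hη.2])]; linarith [hη.2]
    · rw [abs_of_nonneg (by linarith [hη.1])]; linarith [hη.1]
  have hne : ∀ η ∈ Set.Icc p q, η ≠ σ ^ 2 := by
    rintro η hη rfl
    have := hd _ hη
    rw [sub_self, abs_zero] at this
    linarith
  have hpos : ∀ η ∈ Set.Icc p q, 0 ≤ η := fun η hη => hp0.trans hη.1
  have hsub : Set.Icc p q ⊆ {η | 0 ≤ η ∧ η ≠ σ ^ 2} := fun η hη => ⟨hpos η hη, hne η hη⟩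
  have hbcont : ContinuousOn b (Set.Icc p q) :=
    fun η hη => (hb η (hpos η hη) (hne η hη)).continuousAt.continuousWithinAt
  have hend : ∀ η ∈ Set.Icc p q, |b η| ≤ 2 / 3 * (κ * σ) := by
    intro η hη
    refine (hb1 η (hpos η hη) (hne η hη)).trans ?_
    have : |η - σ ^ 2|⁻¹ ≤ 2 * σ := by
      rw [← inv_inv (2 * σ)]; exact inv_anti₀ h0 (hd η hη)
    calc κ / 3 * |η - σ ^ 2|⁻¹ ≤ κ / 3 * (2 * σ) := mul_le_mul_of_nonneg_left this (by positivity)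
      _ = _ := by ring
  have hp : p ∈ Set.Icc p q := ⟨le_rfl, hpq⟩
  have hq : q ∈ Set.Icc p q := ⟨hpq, le_rfl⟩
  have ib' : IntervalIntegrable b' volume p q := by
    refine ContinuousOn.intervalIntegrable ?_
    rw [Set.uIcc_of_le hpq]; exact hbc.mono hsub
  have hV : ∫ η in p..q, |b' η| ≤ 4 / 3 * (κ * σ) := by
    have e1 : ∫ η in p..q, |b' η| = ∫ η in p..q, - b' η := by
      refine intervalIntegral.integral_congr fun η hη => ?_
      rw [Set.uIcc_of_le hpq] at hη
      exact abs_of_nonpos (hb2 η (hpos η hη) (hne η hη))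
    have e2 : ∫ η in p..q, b' η = b q - b p := by
      refine intervalIntegral.integral_eq_sub_of_hasDerivAt (fun η hη => ?_) ib'
      rw [Set.uIcc_of_le hpq] at hη
      exact hb η (hpos η hη) (hne η hη)
    rw [e1, intervalIntegral.integral_neg, e2]
    have := (abs_le.1 (hend p hp)).2
    have := (abs_le.1 (hend q hq)).1
    linarith
  have hnz : ∀ η ∈ Set.Icc p q, η - σ ^ 2 ≠ 0 := fun η hη => sub_ne_zero.2 (hne η hη)
  have hb2' : ∫ η in p..q, b η ^ 2 ≤ (κ * σ) ^ 2 := by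
    have i0 : IntervalIntegrable (fun η : ℝ => (κ / 3) ^ 2 * ((η - σ ^ 2) ^ 2)⁻¹) volume p q := by
      refine ContinuousOn.intervalIntegrable ?_
      rw [Set.uIcc_of_le hpq]
      exact continuousOn_const.mul
        (ContinuousOn.inv₀ (by fun_prop) fun η hη => pow_ne_zero 2 (hnz η hη))
    have e1 : ∫ η in p..q, b η ^ 2 ≤ ∫ η in p..q, (κ / 3) ^ 2 * ((η - σ ^ 2) ^ 2)⁻¹ := by
      refine intervalIntegral.integral_mono_on hpq ?_ i0 fun η hη => ?_
      · refine ContinuousOn.intervalIntegrable ?_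
        rw [Set.uIcc_of_le hpq]
        exact hbcont.pow 2
      · rw [← sq_abs (b η), ← sq_abs (η - σ ^ 2), ← inv_pow, ← mul_pow]
        exact pow_le_pow_left₀ (abs_nonneg _) (hb1 η (hpos η hη) (hne η hη)) 2
    rw [intervalIntegral.integral_const_mul, int_inv_sq hpq hnz] at e1
    have e2 : (p - σ ^ 2)⁻¹ - (q - σ ^ 2)⁻¹ ≤ 2 * σ := by
      rcases hs with hs | hs
      · have a1 : (p - σ ^ 2)⁻¹ ≤ 0 := inv_nonpos.2 (by linarith)
        have a2 : (σ ^ 2 - q)⁻¹ ≤ 2 * σ := by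
          rw [← inv_inv (2 * σ)]; exact inv_anti₀ h0 (by linarith)
        have a3 : (q - σ ^ 2)⁻¹ = -(σ ^ 2 - q)⁻¹ := by rw [← inv_neg]; congr 1; ring
        linarith
      · have a1 : 0 ≤ (q - σ ^ 2)⁻¹ := inv_nonneg.2 (by linarith)
        have a2 : (p - σ ^ 2)⁻¹ ≤ 2 * σ := by
          rw [← inv_inv (2 * σ)]; exact inv_anti₀ h0 (by linarith)
        linarith
    have e3 : (κ / 3) ^ 2 * ((p - σ ^ 2)⁻¹ - (q - σ ^ 2)⁻¹) ≤ (κ / 3) ^ 2 * (2 * σ) :=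
      mul_le_mul_of_nonneg_left e2 (by positivity)
    have e4 : κ ^ 2 * σ ≤ κ ^ 2 * σ ^ 2 := mul_le_mul_of_nonneg_left (by nlinarith) (by positivity)
    have e5 : 0 ≤ κ ^ 2 * σ := by positivity
    nlinarith
  have h2 := ibp hpq A.der A.cont A.pos A.bdd (A.l2 p q hpq)
    (fun η hη => hb η (hpos η hη) (hne η hη)) (hbc.mono hsub)
    (fun η hη => hab η (hpos η hη) (hne η hη)) hV (by positivity : 0 < κ * σ) hb2'
  refine h2.trans ?_
  have := hend p hp
  have := hend q hq
  have : 0 < κ * σ := by positivity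
  calc _ ≤ ε * (4 * (κ * σ)) := mul_le_mul_of_nonneg_left (by linarith) A.pos.le
    _ = _ := by ring

/-- Stationary phase bound with stationary point `σ² ≥ 1`. -/
lemma Amp.half_neg {g g' : ℝ → ℂ} {ε : ℝ} (A : Amp g g' ε) {a b b' : ℝ → ℝ} {y N σ κ : ℝ}
    (hσ : 1 ≤ σ) (hκ : 0 < κ) (hN : σ ^ 2 + 1 ≤ N) (hac : Continuous a)
    (ha : ∀ η ∈ Set.Icc (0:ℝ) (σ ^ 2 + 1), |a η| ≤ 2 * (κ * σ ^ 2))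
    (hab : ∀ η, 0 ≤ η → η ≠ σ ^ 2 → a η = b η * (3 * η ^ 2 + y))
    (hb : ∀ η, 0 ≤ η → η ≠ σ ^ 2 → HasDerivAt b (b' η) η)
    (hbc : ContinuousOn b' {η | 0 ≤ η ∧ η ≠ σ ^ 2})
    (hb1 : ∀ η, 0 ≤ η → η ≠ σ ^ 2 → |b η| ≤ κ / 3 * |η - σ ^ 2|⁻¹)
    (hb2 : ∀ η, 0 ≤ η → η ≠ σ ^ 2 → b' η ≤ 0) :
    ‖∫ η in (0:ℝ)..N, osc y η * ((a η : ℂ) * g η)‖ ≤ 10 * (κ * σ) * ε := by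
  have σ0 : 0 < σ := by linarith
  have h0 : 0 < (2 * σ)⁻¹ := by positivity
  have h1 : (2 * σ)⁻¹ ≤ 1 := inv_le_one_of_one_le₀ (by linarith)
  have h2 : 1 ≤ σ ^ 2 := one_le_pow₀ hσ
  set p := σ ^ 2 - (2 * σ)⁻¹ with hp
  set q := σ ^ 2 + (2 * σ)⁻¹ with hq
  have L := A.side hσ hκ (p := 0) (q := p) (by linarith) le_rfl (Or.inl le_rfl) hab hb hbc hb1 hb2
  have R := A.side hσ hκ (p := q) (q := N) (by linarith) (by linarith) (Or.inr le_rfl)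
    hab hb hbc hb1 hb2
  have M := A.triv (y := y) (a := a) (p := p) (q := q) (M := 2 * (κ * σ ^ 2)) (by linarith)
    (fun η hη => ha η ⟨by linarith [hη.1], by linarith [hη.2]⟩)
  have eM : 2 * (κ * σ ^ 2) * ε * (q - p) = 2 * (κ * σ) * ε := by
    rw [hp, hq]; field_simp; ring
  rw [eM] at M
  rw [← intervalIntegral.integral_add_adjacent_intervals (A.intervalIntegrable hac y 0 p)
    (A.intervalIntegrable hac y p N), ← intervalIntegral.integral_add_adjacent_intervals
    (A.intervalIntegrable hac y p q) (A.intervalIntegrable hac y q N)]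
  refine (norm_add_le _ _).trans ?_
  have := norm_add_le (∫ η in p..q, osc y η * ((a η : ℂ) * g η))
    (∫ η in q..N, osc y η * ((a η : ℂ) * g η))
  linarith

end MKdV

/-! ### The dispersive estimate -/

namespace MKdV

lemma inv_phase_deriv {y η : ℝ} (h : 3 * η ^ 2 + y ≠ 0) :
    HasDerivAt (fun η : ℝ => (3 * η ^ 2 + y)⁻¹) (-(6 * η) / (3 * η ^ 2 + y) ^ 2) η := by
  have h1 : HasDerivAt (fun η : ℝ => 3 * η ^ 2 + y) (6 * η) η := by
    have := (((hasDerivAt_id η).fun_pow 2).const_mul 3).add_const y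
    refine this.congr_deriv ?_
    simp; ring
  exact h1.fun_inv h

lemma id_phase_deriv {y η : ℝ} (h : 3 * η ^ 2 + y ≠ 0) :
    HasDerivAt (fun η : ℝ => η * (3 * η ^ 2 + y)⁻¹) ((y - 3 * η ^ 2) / (3 * η ^ 2 + y) ^ 2) η := by
  have := (hasDerivAt_id η).fun_mul (inv_phase_deriv h)
  refine this.congr_deriv ?_
  simp only [id]
  field_simp
  ring

/-- The dispersive estimate on the half line. The gain `m` of the first integral is exactly the
loss of the second one, so their product is bounded. -/
lemma half_line (y : ℝ) : ∃ m : ℝ, 1 ≤ m ∧ ∀ (g g' : ℝ → ℂ) (ε : ℝ), Amp g g' ε →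
    ∀ᶠ N in Filter.atTop,
      ‖∫ η in (0:ℝ)..N, osc y η * (((1 : ℝ) : ℂ) * g η)‖ ≤ 10 * m⁻¹ * ε ∧
      ‖∫ η in (0:ℝ)..N, osc y η * ((η : ℂ) * g η)‖ ≤ 10 * m * ε := by
  rcases le_or_gt (-3) y with hy | hy
  · refine ⟨1, le_rfl, fun g g' ε A => ?_⟩
    filter_upwards [Filter.eventually_ge_atTop 2] with N hN
    rw [inv_one, mul_one]
    have hD : ∀ η : ℝ, 2 ≤ η → 9 / 4 * η ^ 2 ≤ 3 * η ^ 2 + y := fun η hη => by nlinarith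
    have hD0 : ∀ η : ℝ, 2 ≤ η → 0 < 3 * η ^ 2 + y := fun η hη => by
      have := hD η hη; have : 0 < η ^ 2 := by positivity
      linarith
    constructor
    · refine A.half_pos (a := fun _ => 1) (b := fun η : ℝ => (3 * η ^ 2 + y)⁻¹)
        (b' := fun η => -(6 * η) / (3 * η ^ 2 + y) ^ 2) hN (by fun_prop) ?_ ?_ ?_ ?_ ?_ ?_
      · intro η _; norm_num
      · intro η hη; rw [inv_mul_cancel₀ (hD0 η hη).ne']
      · intro η hη; exact inv_phase_deriv (hD0 η hη).ne'
      · exact ContinuousOn.div (by fun_prop) (by fun_prop) fun η hη => pow_ne_zero 2 (hD0 η hη).ne'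
      · intro η hη
        rw [abs_inv, abs_of_pos (hD0 η hη)]
        have := hD η hη
        exact inv_anti₀ (by linarith) (by nlinarith)
      · intro η hη
        have h1 := hD η hη
        have h0 : 0 < η := by linarith
        rw [abs_div, abs_neg, abs_of_pos (by positivity : 0 < 6 * η),
          abs_of_pos (pow_pos (hD0 η hη) 2), ← one_div,
          div_le_div_iff₀ (pow_pos (hD0 η hη) 2) (by positivity)]
        have h2 := pow_le_pow_left₀ (by positivity) h1 2
        have h3 : 0 ≤ η ^ 3 * (η - 2) := mul_nonneg (by positivity) (by linarith)
        have h4 : 0 ≤ η ^ 3 := by positivity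
        nlinarith
    · refine A.half_pos (a := fun η => η) (b := fun η : ℝ => η * (3 * η ^ 2 + y)⁻¹)
        (b' := fun η => (y - 3 * η ^ 2) / (3 * η ^ 2 + y) ^ 2) hN (by fun_prop) ?_ ?_ ?_ ?_ ?_ ?_
      · intro η hη; rw [abs_of_nonneg hη.1]; exact hη.2
      · intro η hη; rw [mul_assoc, inv_mul_cancel₀ (hD0 η hη).ne', mul_one]
      · intro η hη; exact id_phase_deriv (hD0 η hη).ne'
      · exact ContinuousOn.div (by fun_prop) (by fun_prop) fun η hη => pow_ne_zero 2 (hD0 η hη).ne'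
      · intro η hη
        have h0 : 0 < η := by linarith
        rw [abs_of_pos (mul_pos h0 (inv_pos.2 (hD0 η hη))), ← div_eq_mul_inv, ← one_div,
          div_le_div_iff₀ (hD0 η hη) h0]
        have := hD η hη
        nlinarith
      · intro η hη
        have h1 := hD η hη
        have h0 : 0 < η := by linarith
        rw [abs_div, abs_of_pos (pow_pos (hD0 η hη) 2), ← one_div,
          div_le_div_iff₀ (pow_pos (hD0 η hη) 2) (by positivity)]
        have h2 : |y - 3 * η ^ 2| ≤ 5 / 3 * (3 * η ^ 2 + y) := by
          rw [abs_le]; constructor <;> nlinarith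
        have h3 : η ^ 2 ≤ 4 / 9 * (3 * η ^ 2 + y) := by linarith
        have h4 := mul_le_mul h2 h3 (by positivity) (by have := hD0 η hη; positivity)
        have h5 : 0 ≤ (3 * η ^ 2 + y) ^ 2 := by positivity
        nlinarith
  · have hy0 : 0 < -y / 3 := by linarith
    set σ := (-y / 3) ^ ((1:ℝ)/4) with hσd
    have hσ4 : σ ^ 4 = -y / 3 := by
      rw [hσd, ← Real.rpow_natCast, ← Real.rpow_mul hy0.le]; norm_num
    have hσ : 1 ≤ σ := Real.one_le_rpow (by linarith) (by norm_num)
    have σ0 : 0 < σ := by linarith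
    have hyσ : y = -3 * σ ^ 4 := by rw [hσ4]; ring
    refine ⟨σ, hσ, fun g g' ε A => ?_⟩
    filter_upwards [Filter.eventually_ge_atTop (σ ^ 2 + 1)] with N hN
    have hs : 1 ≤ σ ^ 2 := one_le_pow₀ hσ
    have hfac : ∀ η : ℝ, 3 * η ^ 2 + y = 3 * (η - σ ^ 2) * (η + σ ^ 2) := by
      intro η; rw [hyσ]; ring
    have hD0 : ∀ η : ℝ, 0 ≤ η → η ≠ σ ^ 2 → 3 * η ^ 2 + y ≠ 0 := by
      intro η h1 h2
      rw [hfac]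
      exact mul_ne_zero (mul_ne_zero (by norm_num) (sub_ne_zero.2 h2)) (by positivity)
    have habs : ∀ η : ℝ, 0 ≤ η → |(3 * η ^ 2 + y)⁻¹| = (η + σ ^ 2)⁻¹ / 3 * |η - σ ^ 2|⁻¹ := by
      intro η h1
      rw [hfac, abs_inv, abs_mul, abs_mul, abs_of_pos (by positivity : 0 < η + σ ^ 2),
        abs_of_pos (by norm_num : (0:ℝ) < 3), mul_inv, mul_inv]
      ring
    constructor
    · have e : 10 * σ⁻¹ * ε = 10 * ((σ ^ 2)⁻¹ * σ) * ε := by field_simp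
      rw [e]
      refine A.half_neg (a := fun _ => 1) (b := fun η : ℝ => (3 * η ^ 2 + y)⁻¹)
        (b' := fun η => -(6 * η) / (3 * η ^ 2 + y) ^ 2) hσ (by positivity) hN (by fun_prop)
        ?_ ?_ ?_ ?_ ?_ ?_
      · intro η _
        rw [inv_mul_cancel₀ (by positivity)]; norm_num
      · intro η h1 h2; rw [inv_mul_cancel₀ (hD0 η h1 h2)]
      · intro η h1 h2; exact inv_phase_deriv (hD0 η h1 h2)
      · exact ContinuousOn.div (by fun_prop) (by fun_prop)
          fun η hη => pow_ne_zero 2 (hD0 η hη.1 hη.2)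
      · intro η h1 h2
        rw [habs η h1]
        refine mul_le_mul_of_nonneg_right ?_ (by positivity)
        have := inv_anti₀ (by positivity : 0 < σ ^ 2) (by linarith : σ ^ 2 ≤ η + σ ^ 2)
        linarith
      · intro η h1 h2
        exact div_nonpos_of_nonpos_of_nonneg (by linarith) (by positivity)
    · have e : 10 * σ * ε = 10 * (1 * σ) * ε := by ring
      rw [e]
      refine A.half_neg (a := fun η => η) (b := fun η : ℝ => η * (3 * η ^ 2 + y)⁻¹)
        (b' := fun η => (y - 3 * η ^ 2) / (3 * η ^ 2 + y) ^ 2) hσ one_pos hN (by fun_prop)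
        ?_ ?_ ?_ ?_ ?_ ?_
      · intro η hη
        rw [abs_of_nonneg hη.1]; linarith [hη.2]
      · intro η h1 h2; rw [mul_assoc, inv_mul_cancel₀ (hD0 η h1 h2), mul_one]
      · intro η h1 h2; exact id_phase_deriv (hD0 η h1 h2)
      · exact ContinuousOn.div (by fun_prop) (by fun_prop)
          fun η hη => pow_ne_zero 2 (hD0 η hη.1 hη.2)
      · intro η h1 h2
        rw [abs_mul, habs η h1, abs_of_nonneg h1, ← mul_assoc]
        refine mul_le_mul_of_nonneg_right ?_ (by positivity)
        have : η * (η + σ ^ 2)⁻¹ ≤ 1 := by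
          rw [← div_eq_mul_inv, div_le_one (by positivity)]; linarith
        linarith
      · intro η h1 h2
        refine div_nonpos_of_nonpos_of_nonneg ?_ (by positivity)
        have : 0 ≤ η ^ 2 := by positivity
        linarith

/-- The dispersive estimate for the scale invariant oscillatory integral on the whole line. -/
lemma full_line {y : ℝ} {g g' : ℝ → ℂ} {ε : ℝ} (A : Amp g g' ε) (i0 : Integrable g)
    (i1 : Integrable (fun η : ℝ => (η : ℂ) * g η)) :
    ‖∫ η, osc y η * g η‖ ≤ 20 * ε ∧
    ‖∫ η, osc y η * g η‖ * ‖∫ η : ℝ, osc y η * ((η : ℂ) * g η)‖ ≤ 400 * ε ^ 2 := by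
  obtain ⟨m, hm, H⟩ := half_line y
  have B : Amp (fun η => starRingEnd ℂ (g (-η))) (fun η => - starRingEnd ℂ (g' (-η))) ε := by
    refine ⟨fun η => ?_, ?_, A.pos, fun η => ?_, fun p q hpq => ?_⟩
    · have h1 := ((A.der (-η)).scomp η (hasDerivAt_neg η))
      have h2 := h1.star
      refine h2.congr_deriv ?_
      simp
    · have := A.cont; fun_prop
    · rw [RCLike.norm_conj]; exact A.bdd _
    · have := A.l2 (-q) (-p) (by linarith)
      rw [← intervalIntegral.integral_comp_neg] at this
      simpa using this
  have mz : 0 < m := by linarith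
  have hosc : ∀ η, osc y (-η) = starRingEnd ℂ (osc y η) := by
    intro η
    rw [osc, osc, ← Complex.exp_conj]
    congr 1
    rw [map_mul, Complex.conj_ofReal, Complex.conj_I]
    push_cast; ring
  have key : ∀ (h : ℝ → ℂ) (K : ℝ), Integrable h →
      (∀ᶠ N in Filter.atTop, ‖∫ η in (0:ℝ)..N, osc y η * h η‖ ≤ K) →
      (∀ᶠ N in Filter.atTop, ‖∫ η in (0:ℝ)..N, osc y η * starRingEnd ℂ (h (-η))‖ ≤ K) →
      ‖∫ η, osc y η * h η‖ ≤ 2 * K := by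
    intro h K ih h1 h2
    have io : Integrable (fun η => osc y η * h η) := by
      refine ih.norm.mono' ?_ (Filter.Eventually.of_forall fun η => ?_)
      · exact (osc_cont y).aestronglyMeasurable.mul ih.aestronglyMeasurable
      · rw [norm_mul, norm_osc, one_mul]
    have hlim : Filter.Tendsto (fun N : ℝ => ∫ η in (-N)..N, osc y η * h η) Filter.atTop
        (nhds (∫ η, osc y η * h η)) :=
      intervalIntegral_tendsto_integral io Filter.tendsto_neg_atTop_atBot Filter.tendsto_id
    refine le_of_tendsto hlim.norm ?_
    filter_upwards [h1, h2] with N a1 a2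
    have e1 : ∫ η in (-N)..0, osc y η * h η =
        starRingEnd ℂ (∫ η in (0:ℝ)..N, osc y η * starRingEnd ℂ (h (-η))) := by
      have c := intervalIntegral.integral_comp_neg (a := 0) (b := N) (fun η => osc y η * h η)
      rw [neg_zero] at c
      rw [← c]
      have c2 : ∀ f : ℝ → ℂ, ∫ η in (0:ℝ)..N, starRingEnd ℂ (f η) =
          starRingEnd ℂ (∫ η in (0:ℝ)..N, f η) := by
        intro f
        simp only [intervalIntegral.intervalIntegral_eq_integral_uIoc]
        rw [integral_conj, Complex.real_smul, Complex.real_smul, map_mul, Complex.conj_ofReal]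
      rw [← c2]
      congr 1; funext η
      rw [hosc, map_mul]; simp
    rw [← intervalIntegral.integral_add_adjacent_intervals (b := 0) io.intervalIntegrable
      io.intervalIntegrable, e1]
    refine (norm_add_le _ _).trans ?_
    rw [RCLike.norm_conj]
    linarith
  have R0 := key g (10 * m⁻¹ * ε) i0 ((H _ _ _ A).mono fun N hN => by simpa using hN.1)
    ((H _ _ _ B).mono fun N hN => by simpa using hN.1)
  have R1 := key (fun η => (η : ℂ) * g η) (10 * m * ε) i1 ((H _ _ _ A).mono fun N hN => hN.2)
    ((H _ _ _ B).mono fun N hN => by simpa using hN.2)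
  have hm1 : m⁻¹ ≤ 1 := inv_le_one_of_one_le₀ hm
  have e0 := A.pos
  constructor
  · have : m⁻¹ * ε ≤ 1 * ε := mul_le_mul_of_nonneg_right hm1 e0.le
    linarith
  · refine (mul_le_mul R0 R1 (norm_nonneg _) (by positivity)).trans (le_of_eq ?_)
    field_simp; ring

end MKdV

/-! ### Pointwise decay of the solution -/

namespace MKdV

/-- Pointwise decay, from `full_line` by the substitution `ξ = t^{-1/3} η`, `x = t^{1/3} y`. The
second bound holds because the loss in `u_x` is compensated by the gain in `u`. -/
lemma XB.disp {u : ℝ → ℝ → ℝ} {ε t : ℝ} (h : Sch (u t)) (ht : 1 ≤ t) (hε : 0 < ε)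
    (hX : XB u ε t) (x : ℝ) :
    |u t x| ≤ 20 * ε * t ^ (-(1:ℝ)/3) ∧ |u t x * dx u t x| ≤ 400 * ε ^ 2 / t := by
  have t0 : 0 < t := by linarith
  set c := t ^ (-(1:ℝ)/3) with hc
  have c0 : 0 < c := by positivity
  have hc3 : t * c ^ 3 = 1 := by
    rw [hc, ← Real.rpow_natCast, ← Real.rpow_mul t0.le]
    norm_num
    rw [Real.rpow_neg_one, mul_inv_cancel₀ t0.ne']
  have hct : c * t ^ ((1:ℝ)/3) = 1 := by
    rw [hc, ← Real.rpow_add t0]; norm_num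
  set g := profFT u t with hg
  have hS : SchC g := SchC.profFT h
  have hS1 : SchC (fun η => g (c * η)) := hS.comp_mul c0.ne'
  have i2 : Integrable (fun η => ‖(c : ℂ) * deriv g (c * η)‖ ^ 2) :=
    ((hS.deriv.comp_mul c0.ne').cmul c).norm_sq_integrable
  have A : Amp (fun η => g (c * η)) (fun η => (c : ℂ) * deriv g (c * η)) ε := by
    refine ⟨fun η => ?_, ((hS.deriv.comp_mul c0.ne').cmul c).continuous, hε, fun η => hX.linf _,
      fun p q hpq => ?_⟩
    · have h2 : HasDerivAt (fun η : ℝ => c * η) c η := by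
        simpa using (hasDerivAt_id η).const_mul c
      have h3 := (hS.hasDerivAt (c * η)).scomp η h2
      refine h3.congr_deriv ?_
      rw [Complex.real_smul]
    · refine (intervalIntegral.integral_of_le hpq).le.trans ?_
      refine (setIntegral_le_integral i2 (Filter.Eventually.of_forall fun η => by positivity)).trans ?_
      have e := Measure.integral_comp_mul_left (fun ξ => ‖deriv g ξ‖ ^ 2) c
      simp only [norm_mul, mul_pow, Complex.norm_real, Real.norm_eq_abs, sq_abs]
      rw [integral_const_mul, e, smul_eq_mul, abs_of_pos (inv_pos.2 c0), ← mul_assoc]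
      have e2 : c ^ 2 * c⁻¹ = c := by field_simp
      rw [e2]
      calc c * ∫ ξ, ‖deriv g ξ‖ ^ 2 ≤ c * (ε ^ 2 * t ^ ((1:ℝ)/3)) :=
            mul_le_mul_of_nonneg_left hX.d1 c0.le
        _ = (c * t ^ ((1:ℝ)/3)) * ε ^ 2 := by ring
        _ = ε ^ 2 := by rw [hct, one_mul]
  obtain ⟨F1, F2⟩ := full_line (y := x * c) A hS1.integrable hS1.xmul.integrable
  have hph : ∀ η : ℝ, cexp (((t * (c * η) ^ 3 + x * (c * η) : ℝ) : ℂ) * I) = osc (x * c) η := by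
    intro η
    rw [osc]; congr 3
    linear_combination η ^ 3 * hc3
  have sc : ∀ F : ℝ → ℂ, ∫ ξ, F ξ = c * ∫ η, F (c * η) := by
    intro F
    rw [Measure.integral_comp_mul_left F c, abs_of_pos (inv_pos.2 c0), Complex.real_smul,
      ← mul_assoc]
    have : (c : ℂ) ≠ 0 := by exact_mod_cast c0.ne'
    push_cast
    rw [mul_inv_cancel₀ this, one_mul]
  have hs : ‖(√(2 * π) : ℂ)⁻¹‖ ≤ 1 := by
    rw [norm_inv, Complex.norm_real, Real.norm_of_nonneg (Real.sqrt_nonneg _)]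
    refine inv_le_one_of_one_le₀ (Real.one_le_sqrt.2 ?_)
    linarith [Real.pi_gt_three]
  set P := ∫ η, osc (x * c) η * g (c * η) with hP
  set Q := ∫ η : ℝ, osc (x * c) η * ((η : ℂ) * g (c * η)) with hQ
  have eu : (u t x : ℂ) = (√(2 * π) : ℂ)⁻¹ * (c * P) := by
    rw [u_inv h x, sc]
    simp only [hph]
    rfl
  have eux : (dx u t x : ℂ) = I * ((√(2 * π) : ℂ)⁻¹ * (c * (c * Q))) := by
    rw [ux_inv h x, sc]
    simp only [hph]
    congr 3
    rw [hQ, ← integral_const_mul]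
    congr 1
    funext η
    push_cast; ring
  have nu : |u t x| ≤ c * ‖P‖ := by
    rw [← Real.norm_eq_abs, ← Complex.norm_real, eu, norm_mul, norm_mul, Complex.norm_real,
      Real.norm_of_nonneg c0.le]
    exact mul_le_of_le_one_left (by positivity) hs
  have nux : |dx u t x| ≤ c ^ 2 * ‖Q‖ := by
    rw [← Real.norm_eq_abs, ← Complex.norm_real, eux, norm_mul, norm_mul, norm_mul, norm_mul,
      norm_I, Complex.norm_real, Real.norm_of_nonneg c0.le, one_mul]
    calc _ ≤ c * (c * ‖Q‖) := mul_le_of_le_one_left (by positivity) hs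
      _ = _ := by ring
  constructor
  · calc |u t x| ≤ c * ‖P‖ := nu
      _ ≤ c * (20 * ε) := mul_le_mul_of_nonneg_left F1 c0.le
      _ = _ := by ring
  · rw [abs_mul]
    calc |u t x| * |dx u t x| ≤ (c * ‖P‖) * (c ^ 2 * ‖Q‖) :=
          mul_le_mul nu nux (abs_nonneg _) (by positivity)
      _ = c ^ 3 * (‖P‖ * ‖Q‖) := by ring
      _ ≤ c ^ 3 * (400 * ε ^ 2) := mul_le_mul_of_nonneg_left F2 (by positivity)
      _ = (t * c ^ 3) * (400 * ε ^ 2) / t := by field_simp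
      _ = _ := by rw [hc3, one_mul]

end MKdV

/-! ### The scaling vector field and its energy estimate -/

namespace MKdV

/-- `W = x u - 3 t (u_xx + u³)`, an antiderivative of `(3t∂ₜ + x∂ₓ + 1) u`, the generator of
the scaling symmetry applied to `u`. -/
def Wf (u : ℝ → ℝ → ℝ) (t x : ℝ) : ℝ := x * u t x - 3 * t * dx (dx u) t x - 3 * t * u t x ^ 3

lemma Sol.smW {u : ℝ → ℝ → ℝ} (h : Sol u) : Sm (Wf u) :=
  ((Sm.snd.mul h.sm).sub (((Sm.const 3).mul Sm.fst).mul h.sm.dx.dx)).sub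
    (((Sm.const 3).mul Sm.fst).mul (h.sm.pow 3))

lemma Sol.schW {u : ℝ → ℝ → ℝ} (h : Sol u) {t : ℝ} (ht : 0 ≤ t) : Sch (Wf u t) :=
  ((h.sch t ht).xmul.sub ((h.s2 ht).cmul (3 * t))).sub (((h.sch t ht).pow 2).cmul (3 * t))

lemma Sol.W1 {u : ℝ → ℝ → ℝ} (h : Sol u) {t : ℝ} (ht : 0 < t) (x : ℝ) :
    HasDerivAt (Wf u t) (u t x + x * dx u t x - 3 * t * dx (dx (dx u)) t x
      - 9 * t * (u t x ^ 2 * dx u t x)) x := by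
  have := (((hasDerivAt_id' x).fun_mul (h.sm.hasDx ht x)).fun_sub
    ((h.sm.dx.dx.hasDx ht x).const_mul (3 * t))).fun_sub
    (((h.sm.hasDx ht x).fun_pow 3).const_mul (3 * t))
  refine this.congr_deriv ?_
  push_cast
  ring

/-- `W` solves `W_t + W_xxx + 3 u² W_x = 0`, whose `x`-derivative is the linearised equation
for `W_x`. -/
lemma Sol.eqnW {u : ℝ → ℝ → ℝ} (h : Sol u) {t : ℝ} (ht : 0 < t) (x : ℝ) :
    dt (Wf u) t x = -(dx (dx (dx (Wf u))) t x + 3 * u t x ^ 2 * dx (Wf u) t x) := by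
  have d0 := fun y => h.sm.hasDx ht y
  have d1 := fun y => h.sm.dx.hasDx ht y
  have d2 := fun y => h.sm.dx.dx.hasDx ht y
  have d3 := fun y => h.sm.dx.dx.dx.hasDx ht y
  have d4 := fun y => h.sm.dx.dx.dx.dx.hasDx ht y
  have e1 : dx (Wf u) t = fun y => u t y + y * dx u t y - 3 * t * dx (dx (dx u)) t y
      - 9 * t * (u t y ^ 2 * dx u t y) := funext fun y => dx_eq_of (h.W1 ht y)
  have e2 : dx (dx (Wf u)) t = fun y => 2 * dx u t y + y * dx (dx u) t y
      - 3 * t * dx (dx (dx (dx u))) t y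
      - 9 * t * (2 * (u t y * dx u t y ^ 2) + u t y ^ 2 * dx (dx u) t y) := by
    funext y
    refine dx_eq_of ?_
    rw [e1]
    have := (((d0 y).fun_add ((hasDerivAt_id' y).fun_mul (d1 y))).fun_sub
      ((d3 y).const_mul (3 * t))).fun_sub ((((d0 y).fun_pow 2).fun_mul (d1 y)).const_mul (9 * t))
    refine this.congr_deriv ?_
    push_cast
    ring
  have e3 : dx (dx (dx (Wf u))) t x = 3 * dx (dx u) t x + x * dx (dx (dx u)) t x
      - 3 * t * dx (dx (dx (dx (dx u)))) t x
      - 9 * t * (2 * dx u t x ^ 3 + 6 * (u t x * dx u t x * dx (dx u) t x)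
        + u t x ^ 2 * dx (dx (dx u)) t x) := by
    refine dx_eq_of ?_
    rw [e2]
    have := ((((d1 x).const_mul 2).fun_add ((hasDerivAt_id' x).fun_mul (d2 x))).fun_sub
      ((d4 x).const_mul (3 * t))).fun_sub
      (((((d0 x).fun_mul ((d1 x).fun_pow 2)).const_mul 2).fun_add
        (((d0 x).fun_pow 2).fun_mul (d2 x))).const_mul (9 * t))
    refine this.congr_deriv ?_
    push_cast
    ring
  have et : dt (Wf u) t x = x * dt u t x - (3 * dx (dx u) t x + 3 * t * dt (dx (dx u)) t x)
      - (3 * u t x ^ 3 + 9 * t * (u t x ^ 2 * dt u t x)) := by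
    refine dt_eq_of ?_
    have := ((h.sm.hasDt ht x).const_mul x).fun_sub
      (((hasDerivAt_id' t).const_mul 3).fun_mul (h.sm.dx.dx.hasDt ht x)) |>.fun_sub
      (((hasDerivAt_id' t).const_mul 3).fun_mul ((h.sm.hasDt ht x).fun_pow 3))
    refine this.congr_deriv ?_
    push_cast
    ring
  rw [et, e3, e1, h.eqn t ht, h.eqn2 ht]
  ring

lemma sq_sub_le (a b : ℝ) : (a - b) ^ 2 ≤ 2 * a ^ 2 + 2 * b ^ 2 := by nlinarith [sq_nonneg (a + b)]

/-- Qualitative bound for `W` and `W_x` in `L²`, locally uniform in time. -/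
lemma Sol.W_L2 {u : ℝ → ℝ → ℝ} (h : Sol u) {ε t T G : ℝ} (ht : 1 ≤ t) (hT : t ≤ T)
    (hX : XB u ε t) (hG1 : 1 ≤ G) (hG : ∫ x, E2 u t x ≤ G) :
    ∫ x, (Wf u t x ^ 2 + dx (Wf u) t x ^ 2) ≤ 4 * ε ^ 2 * T + 180 * T ^ 2 * G ^ 3 := by
  have t0 : 0 < t := by linarith
  have hs := h.sch t t0.le
  have hJ : Sch (Jf u t) := hs.Jf
  have hJ1 : Sch (dx (Jf u) t) := hJ.dx
  have e1 : ∀ x, dx (Wf u) t x = dx (Jf u) t x - 9 * t * (u t x ^ 2 * dx u t x) := by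
    intro x
    refine dx_eq_of ?_
    have := (hJ.hasDerivAt x).fun_sub (((h.sm.hasDx t0 x).fun_pow 3).const_mul (3 * t))
    refine this.congr_deriv ?_
    show dx (Jf u) t x - _ = _
    push_cast
    ring
  have hpt : ∀ x, Wf u t x ^ 2 + dx (Wf u) t x ^ 2 ≤
      2 * Jf u t x ^ 2 + 2 * dx (Jf u) t x ^ 2 + 180 * T ^ 2 * G ^ 2 * E2 u t x := by
    intro x
    obtain ⟨b0, b1⟩ := h.sup_sq t0.le hG x
    have a1 : Wf u t x ^ 2 ≤ 2 * Jf u t x ^ 2 + 2 * (3 * t * u t x ^ 3) ^ 2 := sq_sub_le _ _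
    have a2 : dx (Wf u) t x ^ 2 ≤ 2 * dx (Jf u) t x ^ 2 + 2 * (9 * t * (u t x ^ 2 * dx u t x)) ^ 2 := by
      rw [e1]; exact sq_sub_le _ _
    have a3 : t ^ 2 * (u t x ^ 2) ^ 2 ≤ T ^ 2 * G ^ 2 := by gcongr
    have a4 : u t x ^ 2 + dx u t x ^ 2 ≤ E2 u t x := by unfold E2; nlinarith [sq_nonneg (dx (dx u) t x)]
    have a5 : t ^ 2 * (u t x ^ 2) ^ 2 * (u t x ^ 2 + dx u t x ^ 2) ≤ T ^ 2 * G ^ 2 * E2 u t x :=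
      mul_le_mul a3 a4 (by positivity) (by positivity)
    have a6 : 0 ≤ t ^ 2 * (u t x ^ 2) ^ 2 * u t x ^ 2 := by positivity
    have a7 : 0 ≤ t ^ 2 * (u t x ^ 2) ^ 2 * dx u t x ^ 2 := by positivity
    have a8 : (3 * t * u t x ^ 3) ^ 2 = 9 * (t ^ 2 * (u t x ^ 2) ^ 2 * u t x ^ 2) := by ring
    have a9 : (9 * t * (u t x ^ 2 * dx u t x)) ^ 2 = 81 * (t ^ 2 * (u t x ^ 2) ^ 2 * dx u t x ^ 2) := by
      ring
    rw [a8] at a1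
    rw [a9] at a2
    rw [mul_add] at a5
    linarith
  have i1 : Integrable (fun x => 2 * Jf u t x ^ 2) := (hJ.sq.cmul 2).integrable
  have i2 : Integrable (fun x => 2 * dx (Jf u) t x ^ 2) := (hJ1.sq.cmul 2).integrable
  have i3 : Integrable (fun x => 180 * T ^ 2 * G ^ 2 * E2 u t x) :=
    ((h.sE2 t0.le).cmul (180 * T ^ 2 * G ^ 2)).integrable
  have m := integral_mono ((h.schW t0.le).sq.add (h.schW t0.le).dx.sq).integrable
    ((i1.add i2).add i3) hpt
  refine m.trans ?_
  simp only [Pi.add_apply]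
  rw [integral_add (f := fun x => 2 * Jf u t x ^ 2 + 2 * dx (Jf u) t x ^ 2) (i1.add i2) i3]
  rw [integral_add i1 i2, integral_const_mul, integral_const_mul, integral_const_mul,
    L2_Jf hs, L2_dJf hs]
  have p1 : t ^ ((1:ℝ)/3) ≤ T := by
    calc t ^ ((1:ℝ)/3) ≤ t ^ (1:ℝ) := Real.rpow_le_rpow_of_exponent_le ht (by norm_num)
      _ = t := Real.rpow_one t
      _ ≤ T := hT
  have p2 : ε ^ 2 * t ^ ((1:ℝ)/3) ≤ ε ^ 2 * T := mul_le_mul_of_nonneg_left p1 (by positivity)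
  have p3 : 180 * T ^ 2 * G ^ 2 * ∫ x, E2 u t x ≤ 180 * T ^ 2 * G ^ 2 * G :=
    mul_le_mul_of_nonneg_left hG (by positivity)
  have q1 := hX.d1
  have q2 := hX.d2
  have : 180 * T ^ 2 * G ^ 2 * G = 180 * T ^ 2 * G ^ 3 := by ring
  linarith

/-- Slow growth of `W` in `L²`. The weight `t^{-k}`, `k = 2400 ε²`, absorbs the term `6 u u_x W²`,
which is bounded by `(2400 ε² / t) W²`. -/
lemma Sol.energy {u : ℝ → ℝ → ℝ} (h : Sol u) {ε : ℝ} (hε : 0 < ε) (hε1 : ε ≤ 1 / 120)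
    (hX : ∀ t, 1 ≤ t → XB u ε t) {T : ℝ} (hT : 1 ≤ T) :
    ∫ x, Wf u T x ^ 2 ≤ 3 * ε ^ 2 * T ^ (2400 * ε ^ 2) := by
  obtain ⟨G, hG1, hG⟩ := h.bddE2
  set k := 2400 * ε ^ 2 with hk
  have smt : Sm (fun t _ => t ^ (-k)) := Sm.time
    (fun t ht => (Real.contDiffAt_rpow_const_of_ne (ne_of_gt ht)).contDiffWithinAt)
  have T0 : 0 < T := by linarith
  have hW := h.smW
  have key : ∫ x, T ^ (-k) * Wf u T x ^ 2 ≤ ∫ x, (1:ℝ) ^ (-k) * Wf u 1 x ^ 2 := by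
    refine flux_le' (ρ := fun t x => t ^ (-k) * Wf u t x ^ 2)
      (F := fun t x => t ^ (-k) * (3 * dx (Wf u) t x ^ 2 - 3 * (u t x ^ 2 * Wf u t x ^ 2)))
      (H := fun t x => t ^ (-k) * (-2 * (Wf u t x * dx (Wf u) t x)))
      (Q := fun t x => Wf u t x ^ 2 + dx (Wf u) t x ^ 2) (C := 4 + 3 * G)
      (G := 4 * ε ^ 2 * T + 180 * T ^ 2 * G ^ 3) zero_le_one hT (smt.mul (hW.pow 2)) ?_ ?_ ?_ ?_
      (by positivity) ?_ (fun t x => by positivity) ?_ ?_ ?_ ?_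
    · exact (smt.mul (hW.pow 2)).contOn_Icc zero_lt_one
    · exact smt.mul (((Sm.const 3).mul (hW.dx.pow 2)).sub
        ((Sm.const 3).mul ((h.sm.pow 2).mul (hW.pow 2))))
    · exact smt.mul ((Sm.const (-2)).mul (hW.mul hW.dx))
    · intro t htm x
      have t1 : 1 ≤ t := htm.1.le
      have ht : 0 < t := by linarith
      have d0 := fun y => hW.hasDx ht y
      have d1 := fun y => hW.dx.hasDx ht y
      have d2 := fun y => hW.dx.dx.hasDx ht y
      have v0 := fun y => h.sm.hasDx ht y
      have et : dt (fun t x => t ^ (-k) * Wf u t x ^ 2) t x =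
          (-k * t ^ (-k - 1)) * Wf u t x ^ 2 + t ^ (-k) * (2 * Wf u t x * dt (Wf u) t x) := by
        refine dt_eq_of (F := fun t x => t ^ (-k) * Wf u t x ^ 2) ?_
        refine ((Real.hasDerivAt_rpow_const (Or.inl ht.ne')).fun_mul
          ((hW.hasDt ht x).fun_pow 2)).congr_deriv ?_
        push_cast
        ring
      have ef : dx (fun t x => t ^ (-k) * (3 * dx (Wf u) t x ^ 2 - 3 * (u t x ^ 2 * Wf u t x ^ 2))) t x
          = t ^ (-k) * (6 * (dx (Wf u) t x * dx (dx (Wf u)) t x) -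
            6 * (u t x * dx u t x * Wf u t x ^ 2 + u t x ^ 2 * (Wf u t x * dx (Wf u) t x))) := by
        refine dx_eq_of (F := fun t x => t ^ (-k) * (3 * dx (Wf u) t x ^ 2 -
          3 * (u t x ^ 2 * Wf u t x ^ 2))) ?_
        refine (((((d1 x).fun_pow 2).const_mul 3).fun_sub
          ((((v0 x).fun_pow 2).fun_mul ((d0 x).fun_pow 2)).const_mul 3)).const_mul
            (t ^ (-k))).congr_deriv ?_
        push_cast
        ring
      have eh : dx (dx (fun t x => t ^ (-k) * (-2 * (Wf u t x * dx (Wf u) t x)))) t x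
          = t ^ (-k) * (-2 * (3 * (dx (Wf u) t x * dx (dx (Wf u)) t x) +
            Wf u t x * dx (dx (dx (Wf u))) t x)) := by
        refine dxx_eq_of (F := fun t x => t ^ (-k) * (-2 * (Wf u t x * dx (Wf u) t x)))
          (F₁ := fun y => t ^ (-k) * (-2 * (dx (Wf u) t y * dx (Wf u) t y
            + Wf u t y * dx (dx (Wf u)) t y)))
          (fun y => (((d0 y).fun_mul (d1 y)).const_mul (-2)).const_mul (t ^ (-k))) ?_
        refine (((((d1 x).fun_mul (d1 x)).fun_add ((d0 x).fun_mul (d2 x))).const_mul (-2)).const_mul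
          (t ^ (-k))).congr_deriv ?_
        ring
      rw [et, ef, eh, h.eqnW ht]
      have hd := ((hX t t1).disp (h.sch t ht.le) t1 hε x).2
      have hd' : 6 * (u t x * dx u t x) ≤ k / t := by
        have := (le_abs_self _).trans hd
        have e : k / t = 6 * (400 * ε ^ 2 / t) := by rw [hk]; ring
        rw [e]; linarith
      have er : t ^ (-k - 1) = t ^ (-k) / t := by
        rw [Real.rpow_sub ht, Real.rpow_one]
      have hp : 0 ≤ t ^ (-k) * Wf u t x ^ 2 := by positivity
      have := mul_le_mul_of_nonneg_left hd' hp
      have e2 : t ^ (-k) * Wf u t x ^ 2 * (k / t) = k * (t ^ (-k) / t) * Wf u t x ^ 2 := by ring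
      rw [er]
      rw [e2] at this
      linarith
    · intro t htm x
      have t1 : 1 ≤ t := htm.1.le
      have ht : 0 < t := by linarith
      have hp0 : 0 ≤ t ^ (-k) := by positivity
      have hp1 : t ^ (-k) ≤ 1 := Real.rpow_le_one_of_one_le_of_nonpos t1 (by
        rw [hk]; nlinarith [sq_nonneg ε])
      obtain ⟨b0, -⟩ := h.sup_sq ht.le (hG t ht) x
      have b1 : u t x ^ 2 * Wf u t x ^ 2 ≤ G * Wf u t x ^ 2 :=
        mul_le_mul_of_nonneg_right b0 (by positivity)
      have b2 : 0 ≤ u t x ^ 2 * Wf u t x ^ 2 := by positivity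
      have c1 : |3 * dx (Wf u) t x ^ 2 - 3 * (u t x ^ 2 * Wf u t x ^ 2)| ≤
          3 * dx (Wf u) t x ^ 2 + 3 * (G * Wf u t x ^ 2) := by
        rw [abs_le]; constructor <;> nlinarith [sq_nonneg (dx (Wf u) t x), sq_nonneg (Wf u t x)]
      have c2 : |-2 * (Wf u t x * dx (Wf u) t x)| ≤ Wf u t x ^ 2 + dx (Wf u) t x ^ 2 := by
        rw [abs_le]; constructor <;>
          nlinarith [sq_nonneg (dx (Wf u) t x + Wf u t x), sq_nonneg (Wf u t x - dx (Wf u) t x)]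
      rw [abs_mul, abs_mul, abs_of_nonneg hp0]
      have c3 := mul_le_of_le_one_left (abs_nonneg (3 * dx (Wf u) t x ^ 2 -
        3 * (u t x ^ 2 * Wf u t x ^ 2))) hp1
      have c4 := mul_le_of_le_one_left (abs_nonneg (-2 * (Wf u t x * dx (Wf u) t x))) hp1
      have c5 : 0 ≤ G * dx (Wf u) t x ^ 2 := by positivity
      have c6 := sq_nonneg (Wf u t x)
      linarith
    · intro t htm
      have ht : 0 ≤ t := by linarith [htm.1]
      exact ((h.schW ht).sq.add (h.schW ht).dx.sq).integrable
    · intro t htm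
      exact h.W_L2 htm.1.le htm.2.le (hX t htm.1.le) hG1 (hG t (by linarith [htm.1]))
    · exact ((h.schW zero_le_one).sq.cmul _).integrable
    · exact ((h.schW T0.le).sq.cmul _).integrable
  rw [integral_const_mul, integral_const_mul, Real.one_rpow, one_mul] at key
  have init : ∫ x, Wf u 1 x ^ 2 ≤ 3 * ε ^ 2 := by
    have h1 := hX 1 le_rfl
    have hs := h.sch 1 zero_le_one
    have hpt : ∀ x, Wf u 1 x ^ 2 ≤ 2 * Jf u 1 x ^ 2 + 1 * u 1 x ^ 2 := by
      intro x
      have a1 : Wf u 1 x ^ 2 ≤ 2 * Jf u 1 x ^ 2 + 2 * (3 * 1 * u 1 x ^ 3) ^ 2 := sq_sub_le _ _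
      have a2 := (h1.disp hs le_rfl hε x).1
      rw [Real.one_rpow, mul_one] at a2
      have a3 : |u 1 x| ≤ 1 / 6 := by linarith
      have a4 : u 1 x ^ 2 ≤ (1 / 6) ^ 2 := sq_le_sq' (by linarith [abs_le.1 a3]) (abs_le.1 a3).2
      have a5 : (u 1 x ^ 2) ^ 2 ≤ ((1 / 6) ^ 2) ^ 2 := by gcongr
      have a6 : (u 1 x ^ 2) ^ 2 * u 1 x ^ 2 ≤ ((1 / 6) ^ 2) ^ 2 * u 1 x ^ 2 :=
        mul_le_mul_of_nonneg_right a5 (by positivity)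
      have a7 : (3 * 1 * u 1 x ^ 3) ^ 2 = 9 * ((u 1 x ^ 2) ^ 2 * u 1 x ^ 2) := by ring
      rw [a7] at a1
      nlinarith [sq_nonneg (u 1 x)]
    have i1 : Integrable (fun x => 2 * Jf u 1 x ^ 2) := (hs.Jf.sq.cmul 2).integrable
    have i2 : Integrable (fun x => 1 * u 1 x ^ 2) := (hs.sq.cmul 1).integrable
    have m := integral_mono (h.schW zero_le_one).sq.integrable (i1.add i2) hpt
    refine m.trans ?_
    simp only [Pi.add_apply]
    rw [integral_add i1 i2, integral_const_mul, integral_const_mul, L2_Jf hs]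
    have q1 := h1.d1
    rw [Real.one_rpow, mul_one] at q1
    have q2 := h1.one rfl
    linarith
  have hTk : T ^ k * T ^ (-k) = 1 := by rw [← Real.rpow_add T0]; simp
  calc ∫ x, Wf u T x ^ 2 = T ^ k * (T ^ (-k) * ∫ x, Wf u T x ^ 2) := by
        rw [← mul_assoc, hTk, one_mul]
    _ ≤ T ^ k * (3 * ε ^ 2) := mul_le_mul_of_nonneg_left (key.trans init) (by positivity)
    _ = _ := by ring

end MKdV

/-! ### Self-similar variables -/

namespace MKdV

/-- The solution in self-similar variables, `v(t, y) = t^{1/3} u(t, t^{1/3} y)`. -/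
def vf (u : ℝ → ℝ → ℝ) (t y : ℝ) : ℝ := t ^ ((1:ℝ)/3) * u t (t ^ ((1:ℝ)/3) * y)

/-- The defect `Z = y v / 3 - v_yy - v³` of `v` in the Painlevé equation, expressed through `W`. -/
def Zf (u : ℝ → ℝ → ℝ) (t y : ℝ) : ℝ := Wf u t (t ^ ((1:ℝ)/3) * y) / 3

/-- What the convergence argument uses of the rescaled solution `v` and its defect `Z`. -/
structure Resc (v Z : ℝ → ℝ → ℝ) (ε β : ℝ) : Prop where
  smv : Sm v
  smZ : Sm Z
  vxx : ∀ t, 0 < t → ∀ y, dx (dx v) t y = y / 3 * v t y - v t y ^ 3 - Z t y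
  evol : ∀ t, 0 < t → ∀ y, dt v t y = dx Z t y / t
  bd : ∀ t, 1 ≤ t → ∀ y, |v t y| ≤ 20 * ε
  l2 : ∀ t, 1 ≤ t → ∀ p q, p ≤ q → ∫ y in p..q, Z t y ^ 2 ≤ (ε * t ^ (-β)) ^ 2

lemma Sm.root : Sm (fun t _ => t ^ ((1:ℝ)/3)) := Sm.time
  (fun _ ht => (Real.contDiffAt_rpow_const_of_ne (ne_of_gt ht)).contDiffWithinAt)

lemma Sm.scale {F : ℝ → ℝ → ℝ} (h : Sm F) : Sm (fun t y => F t (t ^ ((1:ℝ)/3) * y)) := by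
  have h1 : ContDiffOn ℝ (⊤ : ℕ∞) (fun p : ℝ × ℝ => (p.1, p.1 ^ ((1:ℝ)/3) * p.2))
      (Set.Ioi 0 ×ˢ Set.univ) := contDiffOn_fst.prodMk (Sm.root.mul Sm.snd)
  exact ContDiffOn.comp (g := Function.uncurry F) h h1 (fun p hp => ⟨hp.1, trivial⟩)

lemma hasDx_scale {F : ℝ → ℝ → ℝ} (h : Sm F) {t : ℝ} (ht : 0 < t) (y : ℝ) :
    HasDerivAt (fun y => F t (t ^ ((1:ℝ)/3) * y))
      (t ^ ((1:ℝ)/3) * dx F t (t ^ ((1:ℝ)/3) * y)) y := by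
  have h1 : HasDerivAt (fun y : ℝ => t ^ ((1:ℝ)/3) * y) (t ^ ((1:ℝ)/3)) y := by
    simpa using (hasDerivAt_id y).const_mul (t ^ ((1:ℝ)/3))
  exact ((h.hasDx ht _).comp y h1).congr_deriv (mul_comm _ _)

lemma hasDt_scale {F : ℝ → ℝ → ℝ} (h : Sm F) {t : ℝ} (ht : 0 < t) (y : ℝ) :
    HasDerivAt (fun s => F s (s ^ ((1:ℝ)/3) * y))
      (dt F t (t ^ ((1:ℝ)/3) * y) +
        (1 / 3 * (t ^ ((1:ℝ)/3) / t) * y) * dx F t (t ^ ((1:ℝ)/3) * y)) t := by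
  have h0 : HasDerivAt (fun s : ℝ => s ^ ((1:ℝ)/3)) (1 / 3 * (t ^ ((1:ℝ)/3) / t)) t := by
    refine (Real.hasDerivAt_rpow_const (Or.inl ht.ne')).congr_deriv ?_
    rw [Real.rpow_sub ht, Real.rpow_one]
  have h1 : HasDerivAt (fun s : ℝ => ((s, s ^ ((1:ℝ)/3) * y) : ℝ × ℝ))
      (1, 1 / 3 * (t ^ ((1:ℝ)/3) / t) * y) t :=
    (hasDerivAt_id t).prodMk (h0.mul_const y)
  have := (h.hasFDerivAt ht (t ^ ((1:ℝ)/3) * y)).comp_hasDerivAt t h1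
  refine this.congr_deriv ?_
  rw [h.dt_eq ht, h.dx_eq ht]
  set L := fderiv ℝ (Function.uncurry F) (t, t ^ ((1:ℝ)/3) * y)
  have e : ((1 : ℝ), 1 / 3 * (t ^ ((1:ℝ)/3) / t) * y) =
      (1, 0) + (1 / 3 * (t ^ ((1:ℝ)/3) / t) * y) • ((0 : ℝ), (1 : ℝ)) := by
    ext <;> simp
  rw [e, map_add, map_smul, smul_eq_mul]

lemma root_cube {t : ℝ} (ht : 0 < t) : (t ^ ((1:ℝ)/3)) ^ 3 = t := by
  rw [← Real.rpow_natCast, ← Real.rpow_mul ht.le]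
  norm_num

/-- The rescaled solution satisfies the assumptions of the convergence argument. The rate is `1/6`
from the change of variables in `L²`, less the growth exponent of `W`. -/
lemma Sol.resc {u : ℝ → ℝ → ℝ} (h : Sol u) {ε : ℝ} (hε : 0 < ε) (hε1 : ε ≤ 1 / 120)
    (hX : ∀ t, 1 ≤ t → XB u ε t) : Resc (vf u) (Zf u) ε (1 / 6 - 1200 * ε ^ 2) where
  smv := Sm.root.mul h.sm.scale
  smZ := by
    have : Zf u = fun t y => (1 / 3) * Wf u t (t ^ ((1:ℝ)/3) * y) := by
      funext t y; unfold Zf; ring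
    rw [this]
    exact (Sm.const (1 / 3)).mul h.smW.scale
  vxx t ht y := by
    have e := dxx_eq_of (F := vf u) (t := t) (x := y)
      (fun z => (hasDx_scale h.sm ht z).const_mul (t ^ ((1:ℝ)/3)))
      (((hasDx_scale h.sm.dx ht y).const_mul (t ^ ((1:ℝ)/3))).const_mul (t ^ ((1:ℝ)/3)))
    rw [e]
    unfold vf Zf Wf
    have r := root_cube ht
    set l := t ^ ((1:ℝ)/3)
    linear_combination (dx (dx u) t (l * y) + u t (l * y) ^ 3) * r
  evol t ht y := by
    have r := root_cube ht
    have e1 : dx (Zf u) t y = t ^ ((1:ℝ)/3) * dx (Wf u) t (t ^ ((1:ℝ)/3) * y) / 3 :=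
      dx_eq_of ((hasDx_scale h.smW ht y).div_const 3)
    have h0 : HasDerivAt (fun s : ℝ => s ^ ((1:ℝ)/3)) (1 / 3 * (t ^ ((1:ℝ)/3) / t)) t := by
      refine (Real.hasDerivAt_rpow_const (Or.inl ht.ne')).congr_deriv ?_
      rw [Real.rpow_sub ht, Real.rpow_one]
    have e2 := dt_eq_of (F := vf u) (h0.fun_mul (hasDt_scale h.sm ht y))
    rw [e2, e1, dx_eq_of (h.W1 ht _), h.eqn t ht]
    set l := t ^ ((1:ℝ)/3)
    field_simp
    ring
  bd t ht y := by
    have t0 : 0 < t := by linarith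
    have := ((hX t ht).disp (h.sch t t0.le) ht hε (t ^ ((1:ℝ)/3) * y)).1
    unfold vf
    rw [abs_mul, abs_of_pos (by positivity)]
    have e : t ^ ((1:ℝ)/3) * t ^ (-(1:ℝ)/3) = 1 := by rw [← Real.rpow_add t0]; norm_num
    calc _ ≤ t ^ ((1:ℝ)/3) * (20 * ε * t ^ (-(1:ℝ)/3)) :=
          mul_le_mul_of_nonneg_left this (by positivity)
      _ = (t ^ ((1:ℝ)/3) * t ^ (-(1:ℝ)/3)) * (20 * ε) := by ring
      _ = _ := by rw [e, one_mul]
  l2 t ht p q hpq := by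
    have t0 : 0 < t := by linarith
    have l0 : 0 < t ^ ((1:ℝ)/3) := by positivity
    have hW := h.schW t0.le
    have hi : Integrable (fun y => Zf u t y ^ 2) := by
      have := (hW.sq.integrable.comp_mul_left' l0.ne').div_const 9
      refine this.congr (Filter.Eventually.of_forall fun y => ?_)
      simp only [Zf]; ring
    have e1 : ∫ y, Zf u t y ^ 2 = (t ^ ((1:ℝ)/3))⁻¹ * (∫ x, Wf u t x ^ 2) / 9 := by
      have := Measure.integral_comp_mul_left (fun x => Wf u t x ^ 2) (t ^ ((1:ℝ)/3))
      rw [abs_of_pos (inv_pos.2 l0), smul_eq_mul] at this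
      rw [← this, ← integral_div]
      congr 1; funext y; simp only [Zf]; ring
    refine (intervalIntegral.integral_of_le hpq).le.trans ?_
    refine (setIntegral_le_integral hi (Filter.Eventually.of_forall fun y => by positivity)).trans ?_
    rw [e1]
    have en := h.energy hε hε1 hX ht
    have e2 : (t ^ ((1:ℝ)/3))⁻¹ * t ^ (2400 * ε ^ 2) = (t ^ (-(1 / 6 - 1200 * ε ^ 2))) ^ 2 := by
      rw [pow_two (t ^ (-(1 / 6 - 1200 * ε ^ 2))), ← Real.rpow_neg t0.le, ← Real.rpow_add t0,
        ← Real.rpow_add t0]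
      congr 1; ring
    have e3 := mul_le_mul_of_nonneg_left en (inv_pos.2 l0).le
    have e4 : (t ^ ((1:ℝ)/3))⁻¹ * (3 * ε ^ 2 * t ^ (2400 * ε ^ 2)) =
        3 * (ε * t ^ (-(1 / 6 - 1200 * ε ^ 2))) ^ 2 := by
      rw [mul_pow, ← e2]; ring
    rw [e4] at e3
    have := sq_nonneg (ε * t ^ (-(1 / 6 - 1200 * ε ^ 2)))
    linarith

/-- The total integral of the rescaled solution is conserved. -/
lemma Sol.v_mass {u : ℝ → ℝ → ℝ} (h : Sol u) {t : ℝ} (ht : 0 < t) :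
    Filter.Tendsto (fun R : ℝ => ∫ y in (-R)..R, vf u t y) Filter.atTop (nhds (∫ x, u 0 x)) := by
  have l0 : 0 < t ^ ((1:ℝ)/3) := by positivity
  have hi : Integrable (vf u t) :=
    ((h.sch t ht.le).integrable.comp_mul_left' l0.ne').const_mul (t ^ ((1:ℝ)/3))
  have e : ∫ y, vf u t y = ∫ x, u 0 x := by
    have := Measure.integral_comp_mul_left (fun x => u t x) (t ^ ((1:ℝ)/3))
    unfold vf
    rw [integral_const_mul, this, abs_of_pos (inv_pos.2 l0), smul_eq_mul, ← mul_assoc,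
      mul_inv_cancel₀ l0.ne', one_mul, h.mass ht.le]
  rw [← e]
  exact tendsto_interval hi

end MKdV

/-! ### Interpolation, and the time integral of the defect -/

namespace MKdV

lemma exists_le_avg {D : ℝ → ℝ} (hD : Continuous D) {p h A : ℝ} (hh : 0 < h)
    (hA : ∫ y in p..(p + h), |D y| ≤ A) : ∃ z ∈ Set.Icc p (p + h), |D z| ≤ A / h := by
  obtain ⟨z, hz, hm⟩ := isCompact_Icc.exists_isMinOn
    (Set.nonempty_Icc.2 (show p ≤ p + h by linarith)) hD.abs.continuousOn
  refine ⟨z, hz, ?_⟩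
  rw [le_div_iff₀ hh]
  have := intervalIntegral.integral_mono_on (μ := volume) (a := p) (b := p + h)
    (f := fun _ => |D z|) (g := fun y => |D y|) (by linarith)
    intervalIntegrable_const (hD.abs.intervalIntegrable _ _) (fun y hy => hm hy)
  rw [intervalIntegral.integral_const, smul_eq_mul] at this
  have e : p + h - p = h := by ring
  rw [e] at this
  linarith

lemma mvt_bound {f f' : ℝ → ℝ} (hf : ∀ y, HasDerivAt f (f' y) y) {a b h M : ℝ} (hh : 0 < h)
    (hab : h ≤ b - a) (ha : |f a| ≤ M) (hb : |f b| ≤ M) : ∃ ξ ∈ Set.Icc a b, |f' ξ| ≤ 2 * M / h := by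
  have M0 : 0 ≤ M := (abs_nonneg _).trans ha
  obtain ⟨ξ, hξ, e⟩ := exists_hasDerivAt_eq_slope f f' (show a < b by linarith)
    (fun y _ => (hf y).continuousAt.continuousWithinAt) (fun y _ => hf y)
  refine ⟨ξ, ⟨hξ.1.le, hξ.2.le⟩, ?_⟩
  rw [e, abs_div, abs_of_pos (show 0 < b - a by linarith)]
  have h1 : |f b - f a| ≤ 2 * M := by
    have := abs_sub (f b) (f a); linarith
  exact div_le_div₀ (by linarith) h1 hh hab

lemma lip_bound {f f' : ℝ → ℝ} (hf : ∀ y, HasDerivAt f (f' y) y) {p q L : ℝ}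
    (hL : ∀ y ∈ Set.Icc p q, |f' y| ≤ L) {y z : ℝ} (hy : y ∈ Set.Icc p q) (hz : z ∈ Set.Icc p q) :
    |f y - f z| ≤ L * (q - p) := by
  have L0 : 0 ≤ L := (abs_nonneg _).trans (hL y hy)
  have := (convex_Icc p q).norm_image_sub_le_of_norm_hasDerivWithin_le
    (fun x _ => (hf x).hasDerivWithinAt) hL hz hy
  refine this.trans (mul_le_mul_of_nonneg_left ?_ L0)
  rw [Real.norm_eq_abs, abs_le]
  constructor <;> linarith [hy.1, hy.2, hz.1, hz.2]

/-- Interpolation on an interval of length `7h`: if `D'''` is controlled by `D'` with a small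
coefficient plus an `L¹` remainder, then `D'` is controlled by the `L¹` norms of `D` and of the
remainder. Four points where `D` is below its mean produce, by the mean value theorem, two points
where `D'` is small and one where `D''` is small. -/
lemma interp {D w w₁ w₂ z : ℝ → ℝ} (hD : ∀ y, HasDerivAt D (w y) y)
    (hw : ∀ y, HasDerivAt w (w₁ y) y) (hw₁ : ∀ y, HasDerivAt w₁ (w₂ y) y) (hw₂ : Continuous w₂)
    (hz : Continuous z) {p h k A B : ℝ} (hh : 0 < h) (hk : 0 ≤ k) (hkh : 49 * h ^ 2 * k ≤ 1 / 2)
    (hb : ∀ y ∈ Set.Icc p (p + 7 * h), |w₂ y| ≤ k * |w y| + |z y|)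
    (hA : ∫ y in p..(p + 7 * h), |D y| ≤ A) (hB : ∫ y in p..(p + 7 * h), |z y| ≤ B) {y : ℝ}
    (hy : y ∈ Set.Icc p (p + 7 * h)) : |w y| ≤ 60 * A / h ^ 2 + 14 * h * B := by
  have cD : Continuous D := continuous_iff_continuousAt.2 fun y => (hD y).continuousAt
  have cw : Continuous w := continuous_iff_continuousAt.2 fun y => (hw y).continuousAt
  have sub : ∀ a b, p ≤ a → a ≤ b → b ≤ p + 7 * h → ∫ y in a..b, |D y| ≤ A := by
    intro a b h1 h2 h3
    refine (intervalIntegral.integral_mono_interval h1 h2 h3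
      (Filter.Eventually.of_forall fun y => abs_nonneg _) (cD.abs.intervalIntegrable _ _)).trans hA
  obtain ⟨z1, hz1, b1⟩ := exists_le_avg cD (p := p) hh (sub _ _ (by linarith) (by linarith) (by linarith))
  obtain ⟨z2, hz2, b2⟩ := exists_le_avg cD (p := p + 2 * h) hh
    (sub _ _ (by linarith) (by linarith) (by linarith))
  obtain ⟨z3, hz3, b3⟩ := exists_le_avg cD (p := p + 4 * h) hh
    (sub _ _ (by linarith) (by linarith) (by linarith))
  obtain ⟨z4, hz4, b4⟩ := exists_le_avg cD (p := p + 6 * h) hh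
    (sub _ _ (by linarith) (by linarith) (by linarith))
  obtain ⟨ξ1, hξ1, c1⟩ := mvt_bound hD hh (by linarith [hz1.2, hz2.1]) b1 b2
  obtain ⟨ξ2, hξ2, c2⟩ := mvt_bound hD hh (by linarith [hz3.2, hz4.1]) b3 b4
  obtain ⟨ξ, hξ, c⟩ := mvt_bound hw hh
    (by linarith [hξ1.2, hξ2.1, hz2.2, hz3.1]) c1 c2
  have m1 : ξ1 ∈ Set.Icc p (p + 7 * h) :=
    ⟨by linarith [hξ1.1, hz1.1], by linarith [hξ1.2, hz2.2]⟩
  have m : ξ ∈ Set.Icc p (p + 7 * h) :=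
    ⟨by linarith [hξ.1, m1.1], by linarith [hξ.2, hξ2.2, hz4.2]⟩
  obtain ⟨y0, hy0, hmax⟩ := isCompact_Icc.exists_isMaxOn
    (Set.nonempty_Icc.2 (show p ≤ p + 7 * h by linarith)) cw.abs.continuousOn
  set S := |w y0| with hS
  have hmax' : ∀ x ∈ Set.Icc p (p + 7 * h), |w x| ≤ S := fun x hx => hmax hx
  have S0 : 0 ≤ S := abs_nonneg _
  have int2 : ∫ x in p..(p + 7 * h), |w₂ x| ≤ 7 * h * (k * S) + B := by
    calc ∫ x in p..(p + 7 * h), |w₂ x| ≤ ∫ x in p..(p + 7 * h), (k * S + |z x|) := by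
          refine intervalIntegral.integral_mono_on (by linarith) (hw₂.abs.intervalIntegrable _ _)
            ((continuous_const.add hz.abs).intervalIntegrable _ _) fun x hx => ?_
          have := mul_le_mul_of_nonneg_left (hmax' x hx) hk
          linarith [hb x hx]
      _ = 7 * h * (k * S) + ∫ x in p..(p + 7 * h), |z x| := by
          rw [intervalIntegral.integral_add intervalIntegrable_const (hz.abs.intervalIntegrable _ _),
            intervalIntegral.integral_const, smul_eq_mul]
          ring
      _ ≤ _ := by linarith
  have w1b : ∀ x ∈ Set.Icc p (p + 7 * h), |w₁ x| ≤
      2 * (2 * (A / h) / h) / h + (7 * h * (k * S) + B) := by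
    intro x hx
    have e : ∫ r in ξ..x, w₂ r = w₁ x - w₁ ξ :=
      intervalIntegral.integral_eq_sub_of_hasDerivAt (fun r _ => hw₁ r)
        (hw₂.intervalIntegrable _ _)
    have e2 : |∫ r in ξ..x, w₂ r| ≤ ∫ r in p..(p + 7 * h), |w₂ r| := by
      have gen : ∀ a ∈ Set.Icc p (p + 7 * h), ∀ b ∈ Set.Icc p (p + 7 * h), a ≤ b →
          |∫ r in a..b, w₂ r| ≤ ∫ r in p..(p + 7 * h), |w₂ r| := fun a ha b hb' hab =>
        (intervalIntegral.abs_integral_le_integral_abs hab).trans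
          (intervalIntegral.integral_mono_interval ha.1 hab hb'.2
            (Filter.Eventually.of_forall fun y => abs_nonneg _) (hw₂.abs.intervalIntegrable _ _))
      rcases le_total ξ x with hle | hle
      · exact gen _ m _ hx hle
      · rw [intervalIntegral.integral_symm, abs_neg]; exact gen _ hx _ m hle
    have : |w₁ x| ≤ |w₁ ξ| + |w₁ x - w₁ ξ| := by
      have := abs_add_le (w₁ ξ) (w₁ x - w₁ ξ)
      rwa [add_sub_cancel] at this
    rw [← e] at this
    linarith
  have fin := lip_bound hw w1b hy0 m1
  have tri : S ≤ |w ξ1| + |w y0 - w ξ1| := by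
    have := abs_add_le (w ξ1) (w y0 - w ξ1)
    rwa [add_sub_cancel] at this
  have e1 : (2 * (2 * (A / h) / h) / h + (7 * h * (k * S) + B)) * (p + 7 * h - p) =
      28 * (A / h ^ 2) + 49 * h ^ 2 * k * S + 7 * h * B := by
    field_simp; ring
  have e2 : 2 * (A / h) / h = 2 * (A / h ^ 2) := by field_simp
  rw [e1] at fin
  rw [e2] at c1
  have e3 : 49 * h ^ 2 * k * S ≤ 1 / 2 * S := mul_le_mul_of_nonneg_right hkh S0
  have e4 : 60 * A / h ^ 2 = 60 * (A / h ^ 2) := by ring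
  rw [e4]
  have := hmax' y hy
  linarith

/-- The time integral of the defect against `ds / s`; its `y`-derivative is `v(t₂) - v(t₁)`. -/
def Dd (Z : ℝ → ℝ → ℝ) (t₁ t₂ y : ℝ) : ℝ := ∫ s in t₁..t₂, Z s y * s⁻¹

lemma Sm.inv : Sm (fun t _ => t⁻¹) := Sm.time
  (fun _ ht => (contDiffAt_inv ℝ (ne_of_gt ht)).contDiffWithinAt)

lemma Resc.hasD {v Z : ℝ → ℝ → ℝ} {ε β : ℝ} (h : Resc v Z ε β) {t₁ t₂ : ℝ} (h1 : 0 < t₁)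
    (h12 : t₁ ≤ t₂) (y : ℝ) : HasDerivAt (Dd Z t₁ t₂) (v t₂ y - v t₁ y) y := by
  have hd := hasDerivAt_param' (h.smZ.mul Sm.inv) h1 h12 y
  refine hd.congr_deriv ?_
  have e : Set.EqOn (fun s => dx (fun t x => Z t x * t⁻¹) s y) (fun s => dt v s y)
      (Set.uIcc t₁ t₂) := by
    intro s hs
    rw [Set.uIcc_of_le h12] at hs
    have s0 : 0 < s := h1.trans_le hs.1
    show dx (fun t x => Z t x * t⁻¹) s y = dt v s y
    rw [h.evol s s0 y, div_eq_mul_inv]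
    exact dx_eq_of (F := fun t x => Z t x * t⁻¹) ((h.smZ.hasDx s0 y).mul_const s⁻¹)
  rw [intervalIntegral.integral_congr e]
  exact intervalIntegral.integral_eq_sub_of_hasDerivAt (f := fun s => v s y) (fun s hs => by
      rw [Set.uIcc_of_le h12] at hs
      exact h.smv.hasDt (h1.trans_le hs.1) y)
    (h.smv.dt.contIcc h1 h12 y).intervalIntegrable

lemma Resc.l1 {v Z : ℝ → ℝ → ℝ} {ε β : ℝ} (h : Resc v Z ε β) (hε : 0 < ε) {t : ℝ} (ht : 1 ≤ t)
    {p l : ℝ} (hl : 0 < l) : ∫ y in p..(p + l), |Z t y| ≤ √l * (ε * t ^ (-β)) := by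
  have t0 : 0 < t := by linarith
  have := cs_interval (p := p) (q := p + l) (ε := ε * t ^ (-β)) (β := √l) (b := fun _ => 1)
    (h := Z t) (by linarith) (by positivity) (by positivity) continuousOn_const
    (h.smZ.cont t0).continuousOn
    (by simp [Real.sq_sqrt hl.le]) (h.l2 t ht _ _ (by linarith))
  simp only [one_mul] at this
  linarith

lemma Resc.D_l1 {v Z : ℝ → ℝ → ℝ} {ε β : ℝ} (h : Resc v Z ε β) (hε : 0 < ε) (hβ : 0 < β)
    {t₁ t₂ : ℝ} (h1 : 1 ≤ t₁) (h12 : t₁ ≤ t₂) {p l : ℝ} (hl : 0 < l) :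
    ∫ y in p..(p + l), |Dd Z t₁ t₂ y| ≤ √l * ε * t₁ ^ (-β) / β := by
  have t0 : 0 < t₁ := by linarith
  have hS := h.smZ.mul Sm.inv
  have cD : Continuous (Dd Z t₁ t₂) := continuous_iff_continuousAt.2
    fun y => (h.hasD t0 h12 y).continuousAt
  have cont : ContinuousOn (fun q : ℝ × ℝ => |Z q.2 q.1 * q.2⁻¹|)
      (Set.uIcc p (p + l) ×ˢ Set.uIcc t₁ t₂) := by
    have h2 : ContinuousOn (fun q : ℝ × ℝ => Function.uncurry (fun t x => Z t x * t⁻¹) (q.2, q.1))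
        (Set.uIcc p (p + l) ×ˢ Set.uIcc t₁ t₂) :=
      hS.continuousOn.comp (continuous_swap.continuousOn) (fun q hq => by
        have := hq.2
        rw [Set.uIcc_of_le h12] at this
        exact ⟨t0.trans_le this.1, trivial⟩)
    exact h2.abs
  have hint : Integrable (Function.uncurry fun y s => |Z s y * s⁻¹|)
      ((volume.restrict (Set.uIoc p (p + l))).prod (volume.restrict (Set.uIoc t₁ t₂))) := by
    rw [Measure.prod_restrict]
    refine IntegrableOn.mono_set ?_ (Set.prod_mono Set.uIoc_subset_uIcc Set.uIoc_subset_uIcc)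
    exact cont.integrableOn_compact (isCompact_uIcc.prod isCompact_uIcc)
  calc ∫ y in p..(p + l), |Dd Z t₁ t₂ y|
      ≤ ∫ y in p..(p + l), ∫ s in t₁..t₂, |Z s y * s⁻¹| := by
        refine intervalIntegral.integral_mono_on (by linarith) (cD.abs.intervalIntegrable _ _) ?_
          (fun y _ => intervalIntegral.abs_integral_le_integral_abs h12)
        have := hint.integral_prod_left
        simp only [Function.uncurry] at this
        rw [intervalIntegrable_iff]
        refine this.congr (Filter.Eventually.of_forall fun y => ?_)
        simp only
        rw [intervalIntegral.integral_of_le h12, Set.uIoc_of_le h12]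
    _ = ∫ s in t₁..t₂, ∫ y in p..(p + l), |Z s y * s⁻¹| :=
        intervalIntegral_intervalIntegral_swap (by
          rw [Measure.prod_restrict] at hint
          exact hint)
    _ ≤ ∫ s in t₁..t₂, √l * ε * s ^ (-β - 1) := by
        refine intervalIntegral.integral_mono_on h12 ?_ ?_ fun s hs => ?_
        · have := hint.swap.integral_prod_left
          rw [intervalIntegrable_iff]
          refine this.congr (Filter.Eventually.of_forall fun y => ?_)
          simp only [Function.uncurry, Function.comp, Prod.swap]
          rw [intervalIntegral.integral_of_le (by linarith), Set.uIoc_of_le (by linarith)]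
        · refine ContinuousOn.intervalIntegrable ?_
          rw [Set.uIcc_of_le h12]
          exact continuousOn_const.mul (fun s hs =>
            (Real.continuousAt_rpow_const _ _ (Or.inl (by linarith [hs.1]))).continuousWithinAt)
        · have s0 : 0 < s := by linarith [hs.1]
          have := h.l1 hε (h1.trans hs.1) (p := p) hl
          simp only [abs_mul, abs_of_pos (inv_pos.2 s0)]
          rw [intervalIntegral.integral_mul_const, Real.rpow_sub s0, Real.rpow_one, div_eq_mul_inv]
          calc _ ≤ √l * (ε * s ^ (-β)) * s⁻¹ := mul_le_mul_of_nonneg_right this (inv_pos.2 s0).le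
            _ = _ := by ring
    _ = √l * ε * ((t₁ ^ (-β) - t₂ ^ (-β)) / β) := by
        rw [intervalIntegral.integral_const_mul, integral_rpow]
        · congr 1
          have : -β - 1 + 1 = -β := by ring
          rw [this]; field_simp; ring
        · right
          refine ⟨by linarith, ?_⟩
          rw [Set.uIcc_of_le h12]
          exact fun h0 => by linarith [h0.1]
    _ ≤ √l * ε * (t₁ ^ (-β) / β) := by
        have : 0 < t₂ ^ (-β) := Real.rpow_pos_of_pos (by linarith) _
        refine mul_le_mul_of_nonneg_left (div_le_div_of_nonneg_right (by linarith) hβ.le)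
          (by positivity)
    _ = _ := by ring

end MKdV

/-! ### Convergence to the limit profile -/

namespace MKdV

/-- Quantitative convergence of the rescaled solution on `|y| ≤ Y`. The interval length
`ℓ = Y^{-1/2} / 2` is chosen so that the Airy term `y v / 3` can be absorbed. -/
lemma Resc.cauchy {v Z : ℝ → ℝ → ℝ} {ε β : ℝ} (h : Resc v Z ε β) (hε : 0 < ε) (hε1 : ε ≤ 1 / 120)
    (hβ : 1 / 12 ≤ β) {t₁ t₂ Y y : ℝ} (h1 : 1 ≤ t₁) (h12 : t₁ ≤ t₂) (hY : 1 ≤ Y) (hy : |y| ≤ Y) :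
    |v t₂ y - v t₁ y| ≤ 150000 * ε * t₁ ^ (-β) * Y ^ ((3:ℝ)/4) := by
  have t0 : 0 < t₁ := by linarith
  have t20 : 0 < t₂ := by linarith
  have Y0 : 0 < Y := by linarith
  set r := Y ^ ((1:ℝ)/4) with hr
  have r1 : 1 ≤ r := Real.one_le_rpow hY (by norm_num)
  have r0 : 0 < r := by linarith
  have r4 : r ^ 4 = Y := by
    rw [hr, ← Real.rpow_natCast, ← Real.rpow_mul Y0.le]; norm_num
  have r3 : Y ^ ((3:ℝ)/4) = r ^ 3 := by
    rw [hr, ← Real.rpow_natCast, ← Real.rpow_mul Y0.le]; norm_num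
  set l := 1 / (2 * r ^ 2) with hl
  have l0 : 0 < l := by positivity
  have lr : l * r ^ 2 = 1 / 2 := by rw [hl]; field_simp
  have l1 : l ≤ 1 / 2 := by
    have : 1 ≤ r ^ 2 := one_le_pow₀ r1
    nlinarith
  have hsl : √l ≤ 1 / r := by
    rw [Real.sqrt_le_left (by positivity), hl, div_pow]
    refine div_le_div₀ (by positivity) (by norm_num) (by positivity) ?_
    nlinarith [sq_nonneg r]
  set e := ε * t₁ ^ (-β) with he
  have e0 : 0 < e := by positivity
  have eqh : y + 7 * (l / 7) = y + l := by ring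
  have hA : ∫ x in y..(y + 7 * (l / 7)), |Dd Z t₁ t₂ x| ≤ 12 * √l * e := by
    rw [eqh]
    refine (h.D_l1 hε (by linarith) h1 h12 l0).trans ?_
    rw [mul_assoc, ← he, div_le_iff₀ (by linarith)]
    have : 0 ≤ √l * e := by positivity
    nlinarith
  have hB : ∫ x in y..(y + 7 * (l / 7)), |Z t₂ x - Z t₁ x| ≤ 2 * √l * e := by
    rw [eqh]
    have b1 := h.l1 hε h1 (p := y) l0
    have b2 := h.l1 hε (h1.trans h12) (p := y) l0
    have b3 : t₂ ^ (-β) ≤ t₁ ^ (-β) := Real.rpow_le_rpow_of_nonpos t0 h12 (by linarith)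
    have b4 : √l * (ε * t₂ ^ (-β)) ≤ √l * e := by
      refine mul_le_mul_of_nonneg_left ?_ (by positivity)
      exact mul_le_mul_of_nonneg_left b3 hε.le
    have c1 := h.smZ.cont t0
    have c2 := h.smZ.cont t20
    calc _ ≤ ∫ x in y..(y + l), (|Z t₂ x| + |Z t₁ x|) := by
          refine intervalIntegral.integral_mono_on (by linarith)
            ((c2.sub c1).abs.intervalIntegrable _ _)
            ((c2.abs.add c1.abs).intervalIntegrable _ _) fun x _ => abs_sub _ _
      _ = (∫ x in y..(y + l), |Z t₂ x|) + ∫ x in y..(y + l), |Z t₁ x| :=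
          intervalIntegral.integral_add (c2.abs.intervalIntegrable _ _)
            (c1.abs.intervalIntegrable _ _)
      _ ≤ _ := by linarith
  have main := interp (D := Dd Z t₁ t₂) (w := fun x => v t₂ x - v t₁ x)
    (w₁ := fun x => dx v t₂ x - dx v t₁ x) (w₂ := fun x => dx (dx v) t₂ x - dx (dx v) t₁ x)
    (z := fun x => Z t₂ x - Z t₁ x) (p := y) (h := l / 7) (k := Y) (A := 12 * √l * e)
    (B := 2 * √l * e) (y := y) (fun x => h.hasD t0 h12 x)
    (fun x => (h.smv.hasDx t20 x).fun_sub (h.smv.hasDx t0 x))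
    (fun x => (h.smv.dx.hasDx t20 x).fun_sub (h.smv.dx.hasDx t0 x))
    ((h.smv.dx.dx.cont t20).sub (h.smv.dx.dx.cont t0))
    ((h.smZ.cont t20).sub (h.smZ.cont t0)) (by positivity) Y0.le ?_ ?_ hA hB
    ⟨le_rfl, by linarith⟩
  · refine main.trans ?_
    rw [r3]
    have e1 : 60 * (12 * √l * e) / (l / 7) ^ 2 + 14 * (l / 7) * (2 * √l * e) =
        √l * e * (35280 / l ^ 2 + 4 * l) := by field_simp; ring
    have e2 : 35280 / l ^ 2 = 141120 * r ^ 4 := by rw [hl]; field_simp; norm_num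
    rw [e1, e2]
    have r41 : 1 ≤ r ^ 4 := one_le_pow₀ r1
    calc √l * e * (141120 * r ^ 4 + 4 * l) ≤ 1 / r * e * (150000 * r ^ 4) := by
          refine mul_le_mul (mul_le_mul_of_nonneg_right hsl e0.le) ?_ (by positivity)
            (by positivity)
          linarith
      _ = 150000 * ε * t₁ ^ (-β) * r ^ 3 := by rw [he]; field_simp
  · have : 49 * (l / 7) ^ 2 * Y = (l * r ^ 2) ^ 2 := by rw [← r4]; ring
    rw [this, lr]; norm_num
  · intro x hx
    rw [eqh] at hx
    rw [h.vxx t₂ t20, h.vxx t₁ t0]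
    have b1 := abs_le.1 (h.bd t₁ h1 x)
    have b2 := abs_le.1 (h.bd t₂ (h1.trans h12) x)
    have hyb := abs_le.1 hy
    have q0 : x / 3 - (v t₂ x ^ 2 + v t₂ x * v t₁ x + v t₁ x ^ 2) ≤ Y := by
      nlinarith [sq_nonneg (v t₂ x + v t₁ x), sq_nonneg (v t₂ x), sq_nonneg (v t₁ x), hx.2]
    have q1 : v t₂ x ^ 2 ≤ 1 / 36 := by nlinarith
    have q2 : v t₁ x ^ 2 ≤ 1 / 36 := by nlinarith
    have q3 : -Y ≤ x / 3 - (v t₂ x ^ 2 + v t₂ x * v t₁ x + v t₁ x ^ 2) := by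
      nlinarith [sq_nonneg (v t₂ x - v t₁ x), hx.1]
    have eq : x / 3 * v t₂ x - v t₂ x ^ 3 - Z t₂ x - (x / 3 * v t₁ x - v t₁ x ^ 3 - Z t₁ x) =
        (x / 3 - (v t₂ x ^ 2 + v t₂ x * v t₁ x + v t₁ x ^ 2)) * (v t₂ x - v t₁ x)
          - (Z t₂ x - Z t₁ x) := by ring
    rw [eq]
    refine (abs_sub _ _).trans ?_
    rw [abs_mul]
    have := mul_le_mul_of_nonneg_right (abs_le.2 ⟨q3, q0⟩) (abs_nonneg (v t₂ x - v t₁ x))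
    linarith

/-- Uniform bound for `D`: somewhere in an interval of length `t₁^{-β}` it is below its mean, and it
is Lipschitz because `D' = v(t₂) - v(t₁)` is bounded. -/
lemma Resc.D_sup {v Z : ℝ → ℝ → ℝ} {ε β : ℝ} (h : Resc v Z ε β) (hε : 0 < ε)
    (hβ : 1 / 12 ≤ β) {t₁ t₂ : ℝ} (h1 : 1 ≤ t₁) (h12 : t₁ ≤ t₂) (y : ℝ) :
    |Dd Z t₁ t₂ y| ≤ 52 * ε * t₁ ^ (-(β / 2)) := by
  have t0 : 0 < t₁ := by linarith
  set s := t₁ ^ (-(β / 2)) with hs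
  have s0 : 0 < s := by positivity
  have s1 : s ≤ 1 := Real.rpow_le_one_of_one_le_of_nonpos h1 (by linarith)
  have ss : t₁ ^ (-β) = s ^ 2 := by
    rw [hs, pow_two, ← Real.rpow_add t0]; congr 1; ring
  have hA := h.D_l1 hε (by linarith) h1 h12 (p := y) (l := s ^ 2) (by positivity)
  rw [Real.sqrt_sq s0.le, ss] at hA
  have hD := fun x => h.hasD t0 h12 x
  obtain ⟨z, hz, b⟩ := exists_le_avg (continuous_iff_continuousAt.2 fun x => (hD x).continuousAt)
    (by positivity) hA
  have e : s * ε * s ^ 2 / β / s ^ 2 = s * ε / β := by field_simp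
  rw [e] at b
  have b' : s * ε / β ≤ 12 * (s * ε) := by
    rw [div_le_iff₀ (by linarith)]
    have : 0 ≤ s * ε := by positivity
    nlinarith
  have lip := lip_bound hD (p := y) (q := y + s ^ 2) (L := 40 * ε) (fun x _ => by
    have := abs_sub (v t₂ x) (v t₁ x)
    linarith [h.bd t₁ h1 x, h.bd t₂ (h1.trans h12) x]) (y := y) (z := z)
    ⟨le_rfl, by nlinarith⟩ hz
  have tri : |Dd Z t₁ t₂ y| ≤ |Dd Z t₁ t₂ z| + |Dd Z t₁ t₂ y - Dd Z t₁ t₂ z| := by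
    have := abs_add_le (Dd Z t₁ t₂ z) (Dd Z t₁ t₂ y - Dd Z t₁ t₂ z)
    rwa [add_sub_cancel] at this
  have e2 : 40 * ε * (y + s ^ 2 - y) ≤ 40 * ε * s := by
    refine mul_le_mul_of_nonneg_left ?_ (by positivity)
    nlinarith
  linarith

lemma tendsto_rpow_small {β c K : ℝ} (hβ : 0 < β) (hc : 0 < c) :
    ∀ᶠ t : ℝ in Filter.atTop, K * t ^ (-β) < c := by
  have : Filter.Tendsto (fun t : ℝ => K * t ^ (-β)) Filter.atTop (nhds (K * 0)) :=
    (tendsto_rpow_neg_atTop hβ).const_mul K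
  rw [mul_zero] at this
  exact this.eventually_lt_const hc

/-- Existence of the self-similar profile. -/
lemma Resc.lim {v Z : ℝ → ℝ → ℝ} {ε β : ℝ} (h : Resc v Z ε β) (hε : 0 < ε) (hε1 : ε ≤ 1 / 120)
    (hβ : 1 / 12 ≤ β) : ∃ φ : ℝ → ℝ,
      (∀ y, Filter.Tendsto (fun t => v t y) Filter.atTop (nhds (φ y))) ∧
      ∀ t, 1 ≤ t → ∀ Y, 1 ≤ Y → ∀ y, |y| ≤ Y →
        |v t y - φ y| ≤ 150000 * ε * t ^ (-β) * Y ^ ((3:ℝ)/4) := by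
  have ex : ∀ y, ∃ a, Filter.Tendsto (fun t => v t y) Filter.atTop (nhds a) := by
    intro y
    refine cauchySeq_tendsto_of_complete (Metric.cauchySeq_iff'.2 fun c hc => ?_)
    set Y := max 1 |y|
    obtain ⟨N, hN, hN1⟩ := ((tendsto_rpow_small (K := 150000 * ε * Y ^ ((3:ℝ)/4))
      (show 0 < β by linarith) hc).and (Filter.eventually_ge_atTop 1)).exists
    refine ⟨N, fun n hn => ?_⟩
    rw [Real.dist_eq]
    have := h.cauchy hε hε1 hβ hN1 hn (le_max_left 1 |y|) (le_max_right 1 |y|)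
    linarith
  choose φ hφ using ex
  refine ⟨φ, hφ, fun t ht Y hY y hy => ?_⟩
  have := ((hφ y).sub_const (v t y)).abs
  rw [abs_sub_comm]
  refine le_of_tendsto this ?_
  filter_upwards [Filter.eventually_ge_atTop t] with t₂ h2
  exact h.cauchy hε hε1 hβ ht h2 hY hy

end MKdV

/-! ### The Painlevé equation and the integral of the limit profile -/

namespace MKdV

/-- The double antiderivative vanishing to second order at `0`. -/
def II (f : ℝ → ℝ) (y : ℝ) : ℝ := ∫ z in (0:ℝ)..y, ∫ x in (0:ℝ)..z, f x

lemma hasDerivAt_int {f : ℝ → ℝ} (hf : Continuous f) (y : ℝ) :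
    HasDerivAt (fun y => ∫ x in (0:ℝ)..y, f x) (f y) y :=
  intervalIntegral.integral_hasDerivAt_right (hf.intervalIntegrable _ _)
    (hf.stronglyMeasurableAtFilter _ _) hf.continuousAt

lemma continuous_int {f : ℝ → ℝ} (hf : Continuous f) : Continuous (fun y => ∫ x in (0:ℝ)..y, f x) :=
  continuous_iff_continuousAt.2 fun y => (hasDerivAt_int hf y).continuousAt

lemma II_sub {f g : ℝ → ℝ} (hf : Continuous f) (hg : Continuous g) (y : ℝ) :
    II (fun x => f x - g x) y = II f y - II g y := by
  unfold II
  rw [← intervalIntegral.integral_sub ((continuous_int hf).intervalIntegrable _ _)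
    ((continuous_int hg).intervalIntegrable _ _)]
  congr 1; funext z
  exact intervalIntegral.integral_sub (hf.intervalIntegrable _ _) (hg.intervalIntegrable _ _)

lemma II_le {f : ℝ → ℝ} (hf : Continuous f) {y Y J : ℝ} (hy : |y| ≤ Y)
    (hJ : ∫ x in (-Y)..(-Y + 2 * Y), |f x| ≤ J) : |II f y| ≤ J * Y := by
  have e : -Y + 2 * Y = Y := by ring
  rw [e] at hJ
  have Y0 : 0 ≤ Y := (abs_nonneg y).trans hy
  have J0 : 0 ≤ J := le_trans
    (intervalIntegral.integral_nonneg (by linarith) fun x _ => abs_nonneg _) hJ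
  have gen : ∀ a b, -Y ≤ a → a ≤ b → b ≤ Y → |∫ x in a..b, f x| ≤ J := fun a b h1 h2 h3 =>
    (intervalIntegral.abs_integral_le_integral_abs h2).trans
      ((intervalIntegral.integral_mono_interval h1 h2 h3
        (Filter.Eventually.of_forall fun _ => abs_nonneg _) (hf.abs.intervalIntegrable _ _)).trans hJ)
  have inner : ∀ z ∈ Set.uIoc 0 y, ‖∫ x in (0:ℝ)..z, f x‖ ≤ J := by
    intro z hz
    have hyb := abs_le.1 hy
    rw [Real.norm_eq_abs]
    rcases le_total 0 y with h0 | h0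
    · rw [Set.uIoc_of_le h0] at hz
      exact gen _ _ (by linarith) hz.1.le (by linarith [hz.2])
    · rw [Set.uIoc_of_ge h0] at hz
      rw [intervalIntegral.integral_symm, abs_neg]
      exact gen _ _ (by linarith [hz.1]) hz.2 (by linarith)
  have := intervalIntegral.norm_integral_le_of_norm_le_const inner
  rw [Real.norm_eq_abs, sub_zero] at this
  exact this.trans (mul_le_mul_of_nonneg_left hy J0)

/-- Second order Taylor formula at the origin with integral remainder. -/
lemma taylor {f f₁ f₂ : ℝ → ℝ} (h : ∀ y, HasDerivAt f (f₁ y) y) (h₁ : ∀ y, HasDerivAt f₁ (f₂ y) y)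
    (h₂ : Continuous f₂) (y : ℝ) : f y - II f₂ y = f 0 + y * f₁ 0 := by
  have c1 : Continuous f₁ := continuous_iff_continuousAt.2 fun y => (h₁ y).continuousAt
  have e : II f₂ y = ∫ z in (0:ℝ)..y, (f₁ z - f₁ 0) := by
    unfold II
    congr 1; funext z
    exact intervalIntegral.integral_eq_sub_of_hasDerivAt (fun x _ => h₁ x)
      (h₂.intervalIntegrable _ _)
  rw [e, intervalIntegral.integral_sub (c1.intervalIntegrable _ _) intervalIntegrable_const,
    intervalIntegral.integral_eq_sub_of_hasDerivAt (fun x _ => h x) (c1.intervalIntegrable _ _),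
    intervalIntegral.integral_const, smul_eq_mul]
  ring

/-- The nonlinearity of the Painlevé equation `φ'' = PG φ`. -/
def PG (φ : ℝ → ℝ) (x : ℝ) : ℝ := x / 3 * φ x - φ x ^ 3

lemma continuous_PG {φ : ℝ → ℝ} (h : Continuous φ) : Continuous (PG φ) :=
  ((continuous_id.div_const 3).mul h).sub (h.pow 3)

lemma contDiff_PG {φ : ℝ → ℝ} {n : WithTop ℕ∞} (h : ContDiff ℝ n φ) : ContDiff ℝ n (PG φ) :=
  ((contDiff_id.div_const 3).mul h).sub (h.pow 3)

/-- Everything the convergence argument establishes about the limit profile. -/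
structure IsLim (v : ℝ → ℝ → ℝ) (ε β : ℝ) (φ : ℝ → ℝ) : Prop where
  tend : ∀ y, Filter.Tendsto (fun t => v t y) Filter.atTop (nhds (φ y))
  est : ∀ t, 1 ≤ t → ∀ Y, 1 ≤ Y → ∀ y, |y| ≤ Y →
    |v t y - φ y| ≤ 150000 * ε * t ^ (-β) * Y ^ ((3:ℝ)/4)

section
variable {v Z : ℝ → ℝ → ℝ} {ε β : ℝ} {φ : ℝ → ℝ}

lemma IsLim.bound (hL : IsLim v ε β φ) (h : Resc v Z ε β) (y : ℝ) : |φ y| ≤ 20 * ε := by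
  refine le_of_tendsto (hL.tend y).abs ?_
  filter_upwards [Filter.eventually_ge_atTop 1] with t ht using h.bd t ht y

lemma IsLim.continuous (hL : IsLim v ε β φ) (h : Resc v Z ε β) (hβ : 0 < β) : Continuous φ := by
  have hu : TendstoLocallyUniformly v φ Filter.atTop := by
    rw [Metric.tendstoLocallyUniformly_iff]
    intro c hc y
    refine ⟨Set.Icc (y - 1) (y + 1), Icc_mem_nhds (by linarith) (by linarith), ?_⟩
    filter_upwards [tendsto_rpow_small (K := 150000 * ε * (|y| + 1) ^ ((3:ℝ)/4)) hβ hc,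
      Filter.eventually_ge_atTop 1] with t h1 h2 x hx
    have hx' : |x| ≤ |y| + 1 := by
      rw [abs_le]
      constructor <;> linarith [hx.1, hx.2, le_abs_self y, neg_abs_le y]
    have := hL.est t h2 (|y| + 1) (by linarith [abs_nonneg y]) x hx'
    rw [dist_comm, Real.dist_eq]
    linarith
  refine hu.continuous (Filter.Eventually.frequently ?_)
  filter_upwards [Filter.eventually_gt_atTop 0] with t ht using h.smv.cont ht

/-- The part of `φ` not explained by the double antiderivative of `φ''` is a limit of affine
functions. -/
lemma IsLim.tend_II (hL : IsLim v ε β φ) (h : Resc v Z ε β) (hε : 0 < ε) (hε1 : ε ≤ 1 / 120)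
    (hβ : 0 < β) (y : ℝ) :
    Filter.Tendsto (fun t => v t 0 + y * dx v t 0) Filter.atTop (nhds (φ y - II (PG φ) y)) := by
  have cφ := hL.continuous h hβ
  set Y := max 1 |y|
  have Y1 : 1 ≤ Y := le_max_left _ _
  have hy : |y| ≤ Y := le_max_right _ _
  have key : Filter.Tendsto (fun t => II (dx (dx v) t) y) Filter.atTop (nhds (II (PG φ) y)) := by
    rw [Metric.tendsto_nhds]
    intro c hc
    filter_upwards [tendsto_rpow_small
      (K := (2 * Y * (Y * (150000 * ε * Y ^ ((3:ℝ)/4))) + √(2 * Y) * ε) * Y) hβ hc,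
      Filter.eventually_ge_atTop 1] with t h1 h2
    have t0 : 0 < t := by linarith
    have c2 := h.smv.dx.dx.cont t0
    have cP := continuous_PG cφ
    have cZ := h.smZ.cont t0
    rw [Real.dist_eq, ← II_sub c2 cP]
    set e := 150000 * ε * t ^ (-β) * Y ^ ((3:ℝ)/4) with he
    have hJ : ∫ x in (-Y)..(-Y + 2 * Y), |dx (dx v) t x - PG φ x| ≤
        2 * Y * (Y * e) + √(2 * Y) * (ε * t ^ (-β)) := by
      calc _ ≤ ∫ x in (-Y)..(-Y + 2 * Y), (Y * e + |Z t x|) := by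
            refine intervalIntegral.integral_mono_on (by linarith)
              ((c2.sub cP).abs.intervalIntegrable _ _)
              ((continuous_const.add cZ.abs).intervalIntegrable _ _) fun x hx => ?_
            have hxl : -Y ≤ x := hx.1
            have hxr : x ≤ Y := by linarith [hx.2]
            have b0 := hL.est t h2 Y Y1 x (abs_le.2 ⟨hxl, hxr⟩)
            have b1 := abs_le.1 (h.bd t h2 x)
            have b2 := abs_le.1 (hL.bound h x)
            have q1 : v t x ^ 2 ≤ 1 / 36 := by nlinarith
            have q2 : φ x ^ 2 ≤ 1 / 36 := by nlinarith
            have q0 : x / 3 - (v t x ^ 2 + v t x * φ x + φ x ^ 2) ≤ Y := by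
              nlinarith [sq_nonneg (v t x + φ x), sq_nonneg (v t x), sq_nonneg (φ x)]
            have q3 : -Y ≤ x / 3 - (v t x ^ 2 + v t x * φ x + φ x ^ 2) := by
              nlinarith [sq_nonneg (v t x - φ x)]
            have eq : dx (dx v) t x - PG φ x =
                (x / 3 - (v t x ^ 2 + v t x * φ x + φ x ^ 2)) * (v t x - φ x) - Z t x := by
              rw [h.vxx t t0, PG]; ring
            rw [eq]
            refine (abs_sub _ _).trans ?_
            have := abs_mul_le_of (abs_le.2 ⟨q3, q0⟩) b0
            linarith
        _ = 2 * Y * (Y * e) + ∫ x in (-Y)..(-Y + 2 * Y), |Z t x| := by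
            rw [intervalIntegral.integral_add intervalIntegrable_const
              (cZ.abs.intervalIntegrable _ _), intervalIntegral.integral_const, smul_eq_mul]
            ring
        _ ≤ _ := by
            have := h.l1 hε h2 (p := -Y) (l := 2 * Y) (by linarith)
            linarith
    refine (II_le (c2.sub cP) hy hJ).trans_lt (lt_of_eq_of_lt ?_ h1)
    rw [he]; ring
  refine ((hL.tend y).sub key).congr' ?_
  filter_upwards [Filter.eventually_gt_atTop 0] with t ht
  exact taylor (fun y => h.smv.hasDx ht y) (fun y => h.smv.dx.hasDx ht y) (h.smv.dx.dx.cont ht) y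

/-- The limit profile is affine plus a double antiderivative, hence solves Painlevé II. -/
lemma IsLim.painleve (hL : IsLim v ε β φ) (h : Resc v Z ε β) (hε : 0 < ε) (hε1 : ε ≤ 1 / 120)
    (hβ : 0 < β) : ∃ φ₁ : ℝ → ℝ, (∀ y, HasDerivAt φ (φ₁ y) y) ∧ ∀ y, HasDerivAt φ₁ (PG φ y) y := by
  have cP := continuous_PG (hL.continuous h hβ)
  have T := hL.tend_II h hε hε1 hβ
  set a := φ 0 - II (PG φ) 0
  set b := φ 1 - II (PG φ) 1
  have aff : ∀ y, φ y = (a + y * (b - a)) + II (PG φ) y := by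
    intro y
    have h1 := T y
    have h2 := (T 0).add (((T 1).sub (T 0)).const_mul y)
    have := tendsto_nhds_unique h1 (h2.congr fun t => by ring)
    linarith
  have hφ : φ = fun y => (a + y * (b - a)) + II (PG φ) y := funext aff
  refine ⟨fun y => (b - a) + ∫ x in (0:ℝ)..y, PG φ x, fun y => ?_, fun y => ?_⟩
  · have d : HasDerivAt (fun y => (a + y * (b - a)) + II (PG φ) y)
        (1 * (b - a) + ∫ x in (0:ℝ)..y, PG φ x) y :=
      (((hasDerivAt_id' y).mul_const (b - a)).const_add a).fun_add
        (hasDerivAt_int (continuous_int cP) y)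
    rw [← hφ, one_mul] at d
    exact d
  · exact (hasDerivAt_int cP y).const_add (b - a)

/-- Smoothness of a solution of the Painlevé equation, by bootstrapping. -/
lemma contDiff_of_painleve {φ φ₁ : ℝ → ℝ} (h : ∀ y, HasDerivAt φ (φ₁ y) y)
    (h₁ : ∀ y, HasDerivAt φ₁ (PG φ y) y) : ContDiff ℝ (⊤ : ℕ∞) φ := by
  have e : deriv φ = φ₁ := funext fun y => (h y).deriv
  have e₁ : deriv φ₁ = PG φ := funext fun y => (h₁ y).deriv
  have key : ∀ n : ℕ, ContDiff ℝ n φ ∧ ContDiff ℝ n φ₁ := by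
    intro n
    induction n with
    | zero =>
      exact ⟨contDiff_zero.2 (continuous_iff_continuousAt.2 fun y => (h y).continuousAt),
        contDiff_zero.2 (continuous_iff_continuousAt.2 fun y => (h₁ y).continuousAt)⟩
    | succ n ih =>
      constructor
      · push_cast
        rw [contDiff_succ_iff_deriv]
        exact ⟨fun y => (h y).differentiableAt, by simp, by rw [e]; exact ih.2⟩
      · push_cast
        rw [contDiff_succ_iff_deriv]
        exact ⟨fun y => (h₁ y).differentiableAt, by simp, by rw [e₁]; exact contDiff_PG ih.1⟩
  exact contDiff_infty.2 fun n => (key n).1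

/-- Conservation of the integral passes to the limit profile, in the principal value sense:
`∫_{-R}^{R} (v(t₂) - v(t₁))` is small uniformly in `R` and `t₂`. -/
lemma IsLim.pv (hL : IsLim v ε β φ) (h : Resc v Z ε β) (hε : 0 < ε) (hβ : 1 / 12 ≤ β) {m : ℝ}
    (hm : ∀ t, 0 < t →
      Filter.Tendsto (fun R : ℝ => ∫ y in (-R)..R, v t y) Filter.atTop (nhds m)) :
    Filter.Tendsto (fun R : ℝ => ∫ y in (-R)..R, φ y) Filter.atTop (nhds m) := by
  have step : ∀ t, 1 ≤ t → ∀ R,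
      |(∫ y in (-R)..R, φ y) - ∫ y in (-R)..R, v t y| ≤ 104 * ε * t ^ (-(β / 2)) := by
    intro t ht R
    have t0 : 0 < t := by linarith
    have conv : Filter.Tendsto (fun s => ∫ y in (-R)..R, v s y) Filter.atTop
        (nhds (∫ y in (-R)..R, φ y)) := by
      refine intervalIntegral.tendsto_integral_filter_of_dominated_convergence
        (fun _ => 20 * ε) ?_ ?_ intervalIntegrable_const ?_
      · filter_upwards [Filter.eventually_gt_atTop 0] with s hs
        exact (h.smv.cont hs).aestronglyMeasurable
      · filter_upwards [Filter.eventually_ge_atTop 1] with s hs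
        exact Filter.Eventually.of_forall fun y _ => h.bd s hs y
      · exact Filter.Eventually.of_forall fun y _ => hL.tend y
    refine le_of_tendsto (conv.sub_const (∫ y in (-R)..R, v t y)).abs ?_
    filter_upwards [Filter.eventually_ge_atTop t] with s hs
    have s0 : 0 < s := by linarith
    have cs := h.smv.cont s0
    have ct := h.smv.cont t0
    rw [← intervalIntegral.integral_sub (cs.intervalIntegrable _ _) (ct.intervalIntegrable _ _),
      intervalIntegral.integral_eq_sub_of_hasDerivAt (fun y _ => h.hasD t0 hs y)
        ((cs.sub ct).intervalIntegrable _ _)]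
    refine (abs_sub _ _).trans ?_
    linarith [h.D_sup hε hβ ht hs R, h.D_sup hε hβ ht hs (-R)]
  rw [Metric.tendsto_nhds]
  intro c hc
  obtain ⟨t, h1, h2⟩ := ((tendsto_rpow_small (K := 104 * ε) (show 0 < β / 2 by linarith)
    (half_pos hc)).and (Filter.eventually_ge_atTop 1)).exists
  filter_upwards [Metric.tendsto_nhds.1 (hm t (by linarith)) (c / 2) (half_pos hc)] with R hR
  rw [Real.dist_eq] at hR ⊢
  have e : (∫ y in (-R)..R, φ y) - m =
      ((∫ y in (-R)..R, φ y) - ∫ y in (-R)..R, v t y) + ((∫ y in (-R)..R, v t y) - m) := by ring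
  rw [e]
  refine (abs_add_le _ _).trans_lt ?_
  linarith [step t h2 R]

end

end MKdV

open MKdV in
/-- Proposition 2.6 (self-similar Painlevé II region `|x| ≤ t^{1/3+2γ}`). -/
theorem mkdv_selfsimilar_region :
    ∃ C C' : ℝ, 0 < C ∧ 0 < C' ∧ ∃ δ α : ℝ, 0 < δ ∧ 0 < α ∧ α < 1/2 ∧
      ∃ ε' : ℝ, 0 < ε' ∧
        ∀ ε₁ : ℝ, 0 < ε₁ → ε₁ ≤ ε' →
          ∀ u : ℝ → ℝ → ℝ, IsMKdVOn u (Set.Ici 0) →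
            XLE δ α u ε₁ →
            ∀ γ : ℝ, γ = (1/3) * (1/6 - C' * ε₁ ^ 2) →
              0 < γ ∧
              ∃ φ : ℝ → ℝ,
                ContDiff ℝ (⊤ : ℕ∞) φ ∧ (∃ M : ℝ, ∀ ξ : ℝ, |φ ξ| ≤ M) ∧
                (∀ ξ : ℝ, deriv (deriv φ) ξ - (1/3) * ξ * φ ξ + (φ ξ) ^ 3 = 0) ∧
                Filter.Tendsto (fun R : ℝ => ∫ x in (-R)..R, φ x) Filter.atTop
                  (nhds (∫ x : ℝ, u 0 x)) ∧
                ∀ t : ℝ, 2 ≤ t → ∀ x : ℝ, |x| ≤ t ^ ((1:ℝ)/3 + 2*γ) →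
                  |u t x - t ^ (-(1:ℝ)/3) * φ (x / t ^ ((1:ℝ)/3))| ≤
                    C * ε₁ * t ^ (-(1:ℝ)/3 - 3*γ/2) := by
  -- `C' = 1200` is the growth exponent of `W` over `ε²`, and `ε₁ ≤ 1/120` gives `β = 3γ ≥ 1/12`.
  -- Of the `X`-norm only parts independent of `δ` and `α` are used, so these are arbitrary.
  refine ⟨150000, 1200, by norm_num, by norm_num, 1, 1 / 4, by norm_num, by norm_num, by norm_num,
    1 / 120, by norm_num, ?_⟩
  intro ε hε hε1 u hu hX γ hγ
  have hβ : 1 / 12 ≤ 1 / 6 - 1200 * ε ^ 2 := by nlinarith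
  have hγ3 : 1 / 6 - 1200 * ε ^ 2 = 3 * γ := by rw [hγ]; ring
  have γ0 : 0 < γ := by linarith
  have h : Sol u := Sol.of hu
  have hR := h.resc hε hε1 fun t ht => XB.of (h.sch t (by linarith)) ht (hX t ht)
  obtain ⟨φ, f1, f2⟩ := hR.lim hε hε1 hβ
  have hL : IsLim (vf u) ε (1 / 6 - 1200 * ε ^ 2) φ := ⟨f1, f2⟩
  obtain ⟨φ₁, d0, d1⟩ := hL.painleve hR hε hε1 (by linarith)
  refine ⟨γ0, φ, contDiff_of_painleve d0 d1, ⟨20 * ε, hL.bound hR⟩, fun ξ => ?_,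
    hL.pv hR hε hβ fun t ht => h.v_mass ht, fun t ht x hx => ?_⟩
  · have e : deriv φ = φ₁ := funext fun y => (d0 y).deriv
    rw [e, (d1 ξ).deriv, PG]; ring
  · have t0 : 0 < t := by linarith
    have t1 : 1 ≤ t := by linarith
    have l0 : 0 < t ^ ((1:ℝ)/3) := by positivity
    have hy : |x / t ^ ((1:ℝ)/3)| ≤ t ^ (2 * γ) := by
      rw [abs_div, abs_of_pos l0, div_le_iff₀ l0, ← Real.rpow_add t0, add_comm]
      exact hx
    -- the estimate on `|y| ≤ Y` with `Y = t^{2γ}`; the exponents add up to `-3γ + (3/4) 2γ = -3γ/2`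
    have est := f2 t t1 (t ^ (2 * γ)) (Real.one_le_rpow t1 (by linarith)) _ hy
    have ev : vf u t (x / t ^ ((1:ℝ)/3)) = t ^ ((1:ℝ)/3) * u t x := by
      unfold vf; rw [mul_div_cancel₀ _ l0.ne']
    have ei : t ^ (-(1:ℝ)/3) * t ^ ((1:ℝ)/3) = 1 := by rw [← Real.rpow_add t0]; norm_num
    have e1 : u t x - t ^ (-(1:ℝ)/3) * φ (x / t ^ ((1:ℝ)/3)) =
        t ^ (-(1:ℝ)/3) * (vf u t (x / t ^ ((1:ℝ)/3)) - φ (x / t ^ ((1:ℝ)/3))) := by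
      rw [ev]; linear_combination (-(u t x)) * ei
    rw [e1, abs_mul, abs_of_pos (by positivity)]
    refine (mul_le_mul_of_nonneg_left est (by positivity)).trans (le_of_eq ?_)
    rw [hγ3, ← Real.rpow_mul t0.le]
    have e2 : t ^ (-(1:ℝ)/3 - 3*γ/2) =
        t ^ (-(1:ℝ)/3) * (t ^ (-(3 * γ)) * t ^ (2 * γ * ((3:ℝ)/4))) := by
      rw [← Real.rpow_add t0, ← Real.rpow_add t0]; congr 1; ring
    rw [e2]; ring
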